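/- arXiv:2605.19488 — 4 statements merged into one kernel-verified Lean document; each statement's English description precedes it below -/
import Mathlib

section
/- For n ≥ 1 prisoners and r ≥ 1 rooms, there exists some number of states q for which the prisoners have a symmetric winning strategy if and only if gcd(n, r) = 1. Furthermore, there is a function f : ℕ → ℕ such that for every pair n, r with gcd(n, r) = 1 and every q ≥ f(min(n, r)), the prisoners have a symmetric winning strategy for r rooms with q states. -/
namespace PrisonersGame

/-- A deterministic strategy for a prisoner: given the list of states observed
on previous visits and the state observed on the current visit, return the
state to leave the room in and whether to declare. -/
def Strategy : Type := List ℕ → ℕ → ℕ × Bool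

/-- A strategy is valid for `q` states if, whenever all states observed so far
are among `0, …, q-1`, the state it leaves the room in is among `0, …, q-1`. -/
def Strategy.ValidFor (q : ℕ) (σ : Strategy) : Prop :=
  ∀ (h : List ℕ) (s : ℕ), (∀ x ∈ h, x < q) → s < q → (σ h s).1 < q

/-- A schedule: at each time step, one prisoner is led into one room. -/
def Schedule (n r : ℕ) : Type := ℕ → Fin n × Fin r

/-- A schedule is fair if every prisoner is led into every room infinitely often. -/
def Schedule.Fair {n r : ℕ} (sched : Schedule n r) : Prop :=
  ∀ (p : Fin n) (room : Fin r), {t : ℕ | sched t = (p, room)}.Infinite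

/-- The state of play just before step `t`: the current states of the rooms, and
the list of states observed so far by each prisoner. All rooms start in state `0`. -/
def run {n r : ℕ} (strat : Fin n → Strategy) (sched : Schedule n r) :
    ℕ → (Fin r → ℕ) × (Fin n → List ℕ)
  | 0 => (fun _ => 0, fun _ => [])
  | t + 1 =>
      let prev := run strat sched t
      let p := (sched t).1
      let room := (sched t).2
      let obs := prev.1 room
      (Function.update prev.1 room (strat p (prev.2 p) obs).1,
        Function.update prev.2 p (prev.2 p ++ [obs]))

/-- The prisoner visiting at step `t` declares during that visit. -/
def declaresAt {n r : ℕ} (strat : Fin n → Strategy) (sched : Schedule n r)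
    (t : ℕ) : Prop :=
  (strat (sched t).1 ((run strat sched t).2 (sched t).1)
      ((run strat sched t).1 (sched t).2)).2 = true

/-- Every prisoner has visited every room by step `t` (inclusive). -/
def allVisitedBy {n r : ℕ} (sched : Schedule n r) (t : ℕ) : Prop :=
  ∀ (p : Fin n) (room : Fin r), ∃ s ≤ t, sched s = (p, room)

/-- A strategy profile is winning if, for every fair schedule, some prisoner
eventually declares, and no prisoner ever declares at a time before every
prisoner has visited every room. -/
def Winning {n r : ℕ} (strat : Fin n → Strategy) : Prop :=
  ∀ sched : Schedule n r, sched.Fair →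
    (∃ t, declaresAt strat sched t) ∧
    ∀ t, declaresAt strat sched t → allVisitedBy sched t

/-- `n` prisoners have a winning strategy for `r` rooms with `q` states. -/
def HasWinningStrategy (n r q : ℕ) : Prop :=
  ∃ strat : Fin n → Strategy, (∀ p, (strat p).ValidFor q) ∧ Winning (n := n) (r := r) strat

/-- `n` prisoners have a symmetric winning strategy (all prisoners use the
same strategy) for `r` rooms with `q` states. -/
def HasSymmetricWinningStrategy (n r q : ℕ) : Prop :=
  ∃ σ : Strategy, σ.ValidFor q ∧ Winning (n := n) (r := r) (fun _ => σ)

end PrisonersGame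

namespace PrisonersGame

/-! ### Impossibility when the gcd is nontrivial -/

section Impossible

variable {N K d : ℕ} [NeZero d]

def smallSched (b : ℕ → Fin N × Fin K × Fin d) : Schedule N K :=
  fun m => ((b m).1, (b m).2.1)

def bigSched (b : ℕ → Fin N × Fin K × Fin d) : Schedule (N * d) (K * d) :=
  fun t => (finProdFinEquiv ((b (t / d)).1, Fin.ofNat d t),
    finProdFinEquiv ((b (t / d)).2.1, Fin.ofNat d t + (b (t / d)).2.2))

theorem bigSched_at (b : ℕ → Fin N × Fin K × Fin d) (m : ℕ) (i : Fin d) :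
    bigSched b (m * d + i.val) = (finProdFinEquiv ((b m).1, i),
      finProdFinEquiv ((b m).2.1, i + (b m).2.2)) := by
  have hd : 0 < d := Nat.pos_of_ne_zero (NeZero.ne d)
  have h1 : (m * d + i.val) / d = m := by
    rw [mul_comm, Nat.mul_add_div hd, Nat.div_eq_of_lt i.2, add_zero]
  have h2 : Fin.ofNat d (m * d + i.val) = i := by
    apply Fin.ext
    simp [Fin.ofNat, Nat.mod_eq_of_lt i.2]
  simp only [bigSched, h1, h2]

theorem run_big (σ : Strategy) (b : ℕ → Fin N × Fin K × Fin d) (m i : ℕ) (hi : i ≤ d) :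
    (∀ (P : Fin N) (x : Fin d),
      (run (fun _ => σ) (bigSched b) (m * d + i)).2 (finProdFinEquiv (P, x)) =
        if x.val < i then (run (fun _ => σ) (smallSched b) (m + 1)).2 P
        else (run (fun _ => σ) (smallSched b) m).2 P) ∧
    (∀ (Q : Fin K) (y : Fin d),
      (run (fun _ => σ) (bigSched b) (m * d + i)).1 (finProdFinEquiv (Q, y)) =
        if (y - (b m).2.2).val < i then (run (fun _ => σ) (smallSched b) (m + 1)).1 Q
        else (run (fun _ => σ) (smallSched b) m).1 Q) := by
  induction m generalizing i with
  | zero =>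
    induction i with
    | zero => simp [run]
    | succ i ih => exact step 0 i hi (ih (by omega))
  | succ m ihm =>
    induction i with
    | zero =>
      have h := ihm d le_rfl
      have e : (m + 1) * d + 0 = m * d + d := by ring
      rw [e]
      simpa using h
    | succ i ih => exact step (m + 1) i hi (ih (by omega))
where
  step (m i : ℕ) (hi : i + 1 ≤ d)
    (h : (∀ (P : Fin N) (x : Fin d),
      (run (fun _ => σ) (bigSched b) (m * d + i)).2 (finProdFinEquiv (P, x)) =
        if x.val < i then (run (fun _ => σ) (smallSched b) (m + 1)).2 P
        else (run (fun _ => σ) (smallSched b) m).2 P) ∧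
    (∀ (Q : Fin K) (y : Fin d),
      (run (fun _ => σ) (bigSched b) (m * d + i)).1 (finProdFinEquiv (Q, y)) =
        if (y - (b m).2.2).val < i then (run (fun _ => σ) (smallSched b) (m + 1)).1 Q
        else (run (fun _ => σ) (smallSched b) m).1 Q)) :
    (∀ (P : Fin N) (x : Fin d),
      (run (fun _ => σ) (bigSched b) (m * d + (i + 1))).2 (finProdFinEquiv (P, x)) =
        if x.val < i + 1 then (run (fun _ => σ) (smallSched b) (m + 1)).2 P
        else (run (fun _ => σ) (smallSched b) m).2 P) ∧
    (∀ (Q : Fin K) (y : Fin d),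
      (run (fun _ => σ) (bigSched b) (m * d + (i + 1))).1 (finProdFinEquiv (Q, y)) =
        if (y - (b m).2.2).val < i + 1 then (run (fun _ => σ) (smallSched b) (m + 1)).1 Q
        else (run (fun _ => σ) (smallSched b) m).1 Q) := by
    obtain ⟨h2, h1⟩ := h
    have hb := bigSched_at b m ⟨i, hi⟩
    simp only at hb
    set j := (b m).1 with hj
    set k := (b m).2.1 with hk
    set s := (b m).2.2 with hs
    have o1 : (run (fun _ => σ) (bigSched b) (m * d + i)).1 (finProdFinEquiv (k, ⟨i, hi⟩ + s)) =
        (run (fun _ => σ) (smallSched b) m).1 k := by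
      rw [h1, add_sub_cancel_right]; simp
    have o2 : (run (fun _ => σ) (bigSched b) (m * d + i)).2 (finProdFinEquiv (j, ⟨i, hi⟩)) =
        (run (fun _ => σ) (smallSched b) m).2 j := by
      rw [h2]; simp
    have eb : run (fun _ => σ) (bigSched b) (m * d + (i + 1)) =
      (Function.update (run (fun _ => σ) (bigSched b) (m * d + i)).1
        (finProdFinEquiv (k, ⟨i, hi⟩ + s))
        (σ ((run (fun _ => σ) (smallSched b) m).2 j)
          ((run (fun _ => σ) (smallSched b) m).1 k)).1,
       Function.update (run (fun _ => σ) (bigSched b) (m * d + i)).2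
        (finProdFinEquiv (j, ⟨i, hi⟩))
        ((run (fun _ => σ) (smallSched b) m).2 j ++
          [(run (fun _ => σ) (smallSched b) m).1 k])) := by
      rw [← add_assoc, run]
      simp only [hb, o1, o2]
    have es : run (fun _ => σ) (smallSched b) (m + 1) =
      (Function.update (run (fun _ => σ) (smallSched b) m).1 k
        (σ ((run (fun _ => σ) (smallSched b) m).2 j)
          ((run (fun _ => σ) (smallSched b) m).1 k)).1,
       Function.update (run (fun _ => σ) (smallSched b) m).2 j
        ((run (fun _ => σ) (smallSched b) m).2 j ++
          [(run (fun _ => σ) (smallSched b) m).1 k])) := by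
      rw [run]; rfl
    rw [es] at h1 h2
    rw [eb, es]
    constructor
    · intro P x
      simp only [Function.update_apply, EmbeddingLike.apply_eq_iff_eq, Prod.mk.injEq] at h2 ⊢
      rw [h2]
      by_cases hP : P = j
      · by_cases hx : x = ⟨i, hi⟩
        · subst hx; simp [hP]
        · have : x.val ≠ i := fun hh => hx (Fin.ext hh)
          have e : x.val < i + 1 ↔ x.val < i := by omega
          simp [hx, e]
      · simp [hP]
    · intro Q y
      simp only [Function.update_apply, EmbeddingLike.apply_eq_iff_eq, Prod.mk.injEq] at h1 ⊢
      rw [h1]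
      by_cases hP : Q = k
      · by_cases hx : y - s = ⟨i, hi⟩
        · have : y = ⟨i, hi⟩ + s := by rw [← hx]; simp
          subst this; simp [hP]
        · have : (y - s).val ≠ i := fun hh => hx (Fin.ext hh)
          have hy : y ≠ ⟨i, hi⟩ + s := by rintro rfl; simp at hx
          have e : (y - s).val < i + 1 ↔ (y - s).val < i := by omega
          simp [hy, e]
      · simp [hP]

theorem declares_big (σ : Strategy) (b : ℕ → Fin N × Fin K × Fin d) (t : ℕ) :
    declaresAt (fun _ => σ) (bigSched b) t ↔
      declaresAt (fun _ => σ) (smallSched b) (t / d) := by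
  have hd : 0 < d := Nat.pos_of_ne_zero (NeZero.ne d)
  have hlt : t % d < d := Nat.mod_lt _ hd
  have ht : t = (t / d) * d + t % d := by
    rw [mul_comm]; exact (Nat.div_add_mod t d).symm
  obtain ⟨h2, h1⟩ := run_big σ b (t / d) (t % d) hlt.le
  have hb := bigSched_at b (t / d) ⟨t % d, hlt⟩
  simp only [← ht] at hb h1 h2
  unfold declaresAt
  rw [hb]
  simp only [h1, h2, add_sub_cancel_right, lt_irrefl, if_false]
  rfl

theorem big_fair (b : ℕ → Fin N × Fin K × Fin d) (hb : ∀ v M, ∃ m ≥ M, b m = v) :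
    (bigSched b).Fair := by
  have hd : 0 < d := Nat.pos_of_ne_zero (NeZero.ne d)
  intro p ρ
  obtain ⟨⟨P, x⟩, rfl⟩ := finProdFinEquiv.surjective p
  obtain ⟨⟨Q, y⟩, rfl⟩ := finProdFinEquiv.surjective ρ
  rw [Set.infinite_iff_exists_gt]
  intro M
  obtain ⟨m, hm, e⟩ := hb (P, Q, y - x) (M + 1)
  refine ⟨m * d + x.val, ?_, ?_⟩
  · show bigSched b _ = _
    rw [bigSched_at, e]; simp
  · have : m ≤ m * d := Nat.le_mul_of_pos_right _ hd
    omega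

theorem impossible (hN : 0 < N) (hK : 0 < K) (hd : 2 ≤ d) (σ : Strategy)
    (hw : Winning (n := N * d) (r := K * d) (fun _ => σ)) : False := by
  have : Nonempty (Fin N × Fin K × Fin d) := ⟨⟨⟨0, hN⟩, ⟨0, hK⟩, 0⟩⟩
  obtain ⟨g, hg⟩ := exists_surjective_nat (Fin N × Fin K × Fin d)
  let b : ℕ → Fin N × Fin K × Fin d := fun m => g m.unpair.1
  have hb : ∀ v M, ∃ m ≥ M, b m = v := by
    intro v M
    obtain ⟨a, ha⟩ := hg v
    exact ⟨Nat.pair a M, Nat.right_le_pair a M, by simp [b, ha]⟩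
  obtain ⟨t, ht⟩ := (hw _ (big_fair b hb)).1
  let b' : ℕ → Fin N × Fin K × Fin d :=
    fun m => if m ≤ t / d then ((b m).1, (b m).2.1, 0) else b m
  have hb' : ∀ v M, ∃ m ≥ M, b' m = v := by
    intro v M
    obtain ⟨m, hm, e⟩ := hb v (M + t / d + 1)
    have h0 : 0 ≤ t / d := Nat.zero_le _
    have : ¬ m ≤ t / d := by omega
    refine ⟨m, by omega, ?_⟩
    simp [b', this, e]
  have hs : smallSched b' = smallSched b := by
    funext m
    simp only [smallSched, b']
    split <;> rfl
  have hdecl : declaresAt (fun _ => σ) (bigSched b') t := by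
    rw [declares_big, hs, ← declares_big]; exact ht
  obtain ⟨s, hst, hse⟩ := (hw _ (big_fair b' hb')).2 t hdecl
    (finProdFinEquiv (⟨0, hN⟩, ⟨0, by omega⟩)) (finProdFinEquiv (⟨0, hK⟩, ⟨1, by omega⟩))
  have hle : s / d ≤ t / d := Nat.div_le_div_right hst
  simp only [bigSched, b', hle, if_true, Prod.mk.injEq, EmbeddingLike.apply_eq_iff_eq,
    add_zero] at hse
  have := hse.1.2.symm.trans hse.2.2
  simp at this

end Impossible

theorem gcd_of_winning {n r q : ℕ} (hn : 1 ≤ n) (hr : 1 ≤ r)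
    (h : HasSymmetricWinningStrategy n r q) : Nat.gcd n r = 1 := by
  obtain ⟨σ, -, hw⟩ := h
  by_contra hg
  have hpos : 0 < Nat.gcd n r := Nat.gcd_pos_of_pos_left _ hn
  obtain ⟨N, hN⟩ := Nat.gcd_dvd_left n r
  obtain ⟨K, hK⟩ := Nat.gcd_dvd_right n r
  generalize Nat.gcd n r = d at *
  have : NeZero d := ⟨by omega⟩
  rw [mul_comm] at hN hK
  subst hN hK
  exact impossible (Nat.pos_of_mul_pos_right hn) (Nat.pos_of_mul_pos_right hr)
    (by omega) σ hw

/-! ### Automaton strategies -/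

section Auto

variable {S : Type} (δ : S → ℕ → S × ℕ × Bool) (s0 : S)

def autoState (h : List ℕ) : S := h.foldl (fun st x => (δ st x).1) s0

def autoStrat : Strategy := fun h s => (δ (autoState δ s0 h) s).2

def visited {n r : ℕ} (sched : Schedule n r) (t : ℕ) : Set (Fin n × Fin r) :=
  {x | ∃ s < t, sched s = x}

theorem visited_succ {n r : ℕ} (sched : Schedule n r) (t : ℕ) :
    visited sched (t + 1) = insert (sched t) (visited sched t) := by
  ext x
  simp only [visited, Set.mem_ofPred_eq, Set.mem_insert_iff]
  constructor
  · rintro ⟨s, hs, rfl⟩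
    rcases Nat.lt_succ_iff_lt_or_eq.mp hs with h | rfl
    · exact Or.inr ⟨s, h, rfl⟩
    · exact Or.inl rfl
  · rintro (rfl | ⟨s, hs, rfl⟩)
    · exact ⟨t, by omega, rfl⟩
    · exact ⟨s, by omega, rfl⟩

theorem auto_winning {n r : ℕ}
    (Inv : Set (Fin n × Fin r) → (Fin r → ℕ) → (Fin n → S) → ℕ → Prop)
    (hmono : ∀ V V' R st m, V ⊆ V' → Inv V R st m → Inv V' R st m)
    (m0 : ℕ) (hstart : Inv ∅ (fun _ => 0) (fun _ => s0) m0)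
    (hstep : ∀ V R st m, Inv V R st m → ∀ p ρ,
      ((δ (st p) (R ρ)).2.2 = true → ∀ x, x ∈ insert (p, ρ) V) ∧
      ((δ (st p) (R ρ)).2.2 = false →
        ((δ (st p) (R ρ)).1 = st p ∧ (δ (st p) (R ρ)).2.1 = R ρ) ∨
        ∃ m' < m, Inv (insert (p, ρ) V) (Function.update R ρ (δ (st p) (R ρ)).2.1)
          (Function.update st p (δ (st p) (R ρ)).1) m'))
    (hlive : ∀ V R st m, Inv V R st m → ∃ p ρ, (δ (st p) (R ρ)).2.2 = true ∨
      ¬ ((δ (st p) (R ρ)).1 = st p ∧ (δ (st p) (R ρ)).2.1 = R ρ)) :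
    Winning (n := n) (r := r) (fun _ => autoStrat δ s0) := by
  intro sched hfair
  let R : ℕ → Fin r → ℕ := fun t => (run (fun _ => autoStrat δ s0) sched t).1
  let st : ℕ → Fin n → S := fun t p =>
    autoState δ s0 ((run (fun _ => autoStrat δ s0) sched t).2 p)
  have hR : ∀ t, R (t + 1) = Function.update (R t) (sched t).2
      (δ (st t (sched t).1) (R t (sched t).2)).2.1 := fun t => rfl
  have hst : ∀ t, st (t + 1) = Function.update (st t) (sched t).1
      (δ (st t (sched t).1) (R t (sched t).2)).1 := by
    intro t
    funext p
    simp only [st, run, Function.update_apply]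
    split_ifs with h
    · simp [autoState, R]
    · rfl
  have hdec : ∀ t, declaresAt (fun _ => autoStrat δ s0) sched t ↔
      (δ (st t (sched t).1) (R t (sched t).2)).2.2 = true := fun t => Iff.rfl
  have hnext : ∀ t m, Inv (visited sched t) (R t) (st t) m →
      ¬ declaresAt (fun _ => autoStrat δ s0) sched t →
      (R (t + 1) = R t ∧ st (t + 1) = st t ∧
        Inv (visited sched (t + 1)) (R (t + 1)) (st (t + 1)) m) ∨
      ∃ m' < m, Inv (visited sched (t + 1)) (R (t + 1)) (st (t + 1)) m' := by
    intro t m hI hnd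
    rw [hdec, Bool.not_eq_true] at hnd
    rcases (hstep _ _ _ _ hI (sched t).1 (sched t).2).2 hnd with ⟨h1, h2⟩ | ⟨m', hm', h⟩
    · left
      have e1 : R (t + 1) = R t := by rw [hR, h2, Function.update_eq_self]
      have e2 : st (t + 1) = st t := by rw [hst, h1, Function.update_eq_self]
      refine ⟨e1, e2, ?_⟩
      rw [e1, e2]
      exact hmono _ _ _ _ _ (by rw [visited_succ]; exact Set.subset_insert _ _) hI
    · right
      refine ⟨m', hm', ?_⟩
      rw [visited_succ, hR, hst]
      exact h
  have hv0 : visited sched 0 = ∅ := by ext x; simp [visited]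
  have h0 : Inv (visited sched 0) (R 0) (st 0) m0 := by rw [hv0]; exact hstart
  constructor
  · by_contra hnone
    push Not at hnone
    have key : ∀ m t, Inv (visited sched t) (R t) (st t) m → False := by
      intro m
      induction m using Nat.strong_induction_on with
      | _ m ih =>
      intro t hI
      have hconst : ∀ k, R (t + k) = R t ∧ st (t + k) = st t ∧
          Inv (visited sched (t + k)) (R (t + k)) (st (t + k)) m := by
        intro k
        induction k with
        | zero => exact ⟨rfl, rfl, hI⟩
        | succ k ihk =>
          rcases hnext _ _ ihk.2.2 (hnone _) with ⟨a, b, c⟩ | ⟨m', hm', c⟩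
          · exact ⟨a.trans ihk.1, b.trans ihk.2.1, c⟩
          · exact (ih m' hm' _ c).elim
      obtain ⟨p, ρ, hpr⟩ := hlive _ _ _ _ hI
      obtain ⟨t', ht', hlt⟩ := (hfair p ρ).exists_gt t
      obtain ⟨k, rfl⟩ := Nat.exists_eq_add_of_lt hlt
      have ht' : sched (t + k + 1) = (p, ρ) := ht'
      obtain ⟨a, b, c⟩ := hconst (k + 1)
      obtain ⟨a2, b2, c2⟩ := hconst (k + 2)
      have hnd := hnone (t + k + 1)
      rw [← add_assoc] at a b c
      rw [hdec, ht', a, b] at hnd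
      have a3 := hR (t + k + 1)
      have b3 := hst (t + k + 1)
      rw [ht', a, b, show t + k + 1 + 1 = t + (k + 2) by ring, a2] at a3
      rw [ht', a, b, show t + k + 1 + 1 = t + (k + 2) by ring, b2] at b3
      rcases hpr with h | h
      · exact hnd h
      · apply h
        constructor
        · have := congrFun b3 p; simpa using this.symm
        · have := congrFun a3 ρ; simpa using this.symm
    exact key _ _ h0
  · have key : ∀ t, (∃ m, Inv (visited sched t) (R t) (st t) m) ∨ ∀ x, x ∈ visited sched t := by
      intro t
      induction t with
      | zero => exact Or.inl ⟨m0, h0⟩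
      | succ t ih =>
        rcases ih with ⟨m, hI⟩ | h
        · by_cases hd : declaresAt (fun _ => autoStrat δ s0) sched t
          · right
            rw [visited_succ]
            exact (hstep _ _ _ _ hI _ _).1 ((hdec t).1 hd)
          · left
            rcases hnext _ _ hI hd with ⟨_, _, c⟩ | ⟨m', _, c⟩
            · exact ⟨m, c⟩
            · exact ⟨m', c⟩
        · right
          intro x
          rw [visited_succ]
          exact Set.mem_insert_of_mem _ (h x)
    intro t ht
    have hall : ∀ x, x ∈ visited sched (t + 1) := by
      rcases key t with ⟨m, hI⟩ | h
      · rw [visited_succ]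
        exact (hstep _ _ _ _ hI _ _).1 ((hdec t).1 ht)
      · intro x
        rw [visited_succ]
        exact Set.mem_insert_of_mem _ (h x)
    intro p ρ
    obtain ⟨s, hs, e⟩ := hall (p, ρ)
    exact ⟨s, by omega, e⟩

end Auto

end PrisonersGame
namespace PrisonersGame

/-! ### The protocol

Room states: `0` fresh, `1` empty, `2` holds a charge `-1`, `3` holds a unit of mass,
`4` marked, `5` baton for the next prisoner, `6` baton returned to the leader. -/

/-- The memory of a prisoner. -/
inductive PS : Type
  | work (c a : ℤ)
  | active (k : ℕ)
  | done
  | wait (j : ℕ)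
  | clean (j k : ℕ)

def delta (n r : ℕ) (v : ℤ) : PS → ℕ → PS × ℕ × Bool
  | .work c a, s =>
    if s = 0 then (.work (c - v) a, 1, false)
    else if s = 1 then
      if c < 0 then (.work (c + 1) a, 2, false)
      else if c = 0 ∧ 0 < a then (.work c (a - 1), 3, false)
      else if c = 1 ∧ a = n then
        if n = 1 then (.work c a, s, true) else (.wait (n - 1), 5, false)
      else (.work c a, s, false)
    else if s = 2 ∧ 0 < c then (.work (c - 1) a, 1, false)
    else if s = 3 ∧ 0 < c then (.work c (a + 1), 1, false)
    else if s = 5 ∧ c = 0 ∧ a = 0 then (.active 1, 4, false)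
    else (.work c a, s, false)
  | .active k, s =>
    if s = 1 then (.active (k + 1), 4, false)
    else if s = 4 ∧ k = r then (.done, 6, false)
    else (.active k, s, false)
  | .done, s => (.done, s, false)
  | .wait j, s => if s = 6 then (.clean j 1, 1, false) else (.wait j, s, false)
  | .clean j k, s =>
    if s = 4 then (.clean j (k + 1), 1, false)
    else if s = 1 ∧ k = r then
      if j = 1 then (.clean j k, s, true) else (.wait (j - 1), 5, false)
    else (.clean j k, s, false)

theorem delta_lt (n r : ℕ) (v : ℤ) (x : PS) (s q : ℕ) (hq : 7 ≤ q) (hs : s < q) :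
    (delta n r v x s).2.1 < q := by
  cases x <;> simp only [delta] <;> (try split_ifs) <;> (try dsimp only) <;> omega

theorem sum_upd {ι α : Type} [Fintype ι] [DecidableEq ι] (f : ι → α) (i : ι) (x : α)
    (g : α → ℤ) :
    ∑ j, g (Function.update f i x j) = ∑ j, g (f j) - g (f i) + g x := by
  rw [← Finset.add_sum_erase _ _ (Finset.mem_univ i),
    ← Finset.add_sum_erase Finset.univ (fun j => g (f j)) (Finset.mem_univ i)]
  have : ∑ j ∈ Finset.univ.erase i, g (Function.update f i x j) =
      ∑ j ∈ Finset.univ.erase i, g (f j) := by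
    apply Finset.sum_congr rfl
    intro j hj
    rw [Function.update_of_ne (Finset.ne_of_mem_erase hj)]
  rw [this, Function.update_self]
  ring

/-- charge of a room -/
def wR (v : ℤ) (s : ℕ) : ℤ := if s = 0 then -v else if s = 2 then -1 else 0

/-- mass of a room -/
def aR (s : ℕ) : ℤ := if s = 3 then 1 else 0

/-- potential of a room -/
def pR (n : ℕ) (v : ℤ) (s : ℕ) : ℤ := if s = 0 then 2 * n + v + 1 else if s = 3 then 1 else 0

/-- potential of a prisoner -/
def pP (n : ℕ) (z : ℤ × ℤ) : ℤ :=
  if 0 < z.1 then (2 * n + 1) * z.1 else -z.1 + 2 * z.2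

section Protocol

variable {n r : ℕ}

/-- The election phase. -/
def Inv1 (v : ℤ) (V : Set (Fin n × Fin r)) (R : Fin r → ℕ) (st : Fin n → PS) (m : ℕ) : Prop :=
  ∃ z : Fin n → ℤ × ℤ, (∀ p, st p = .work (z p).1 (z p).2) ∧ (∀ p, 0 ≤ (z p).2) ∧
    (∀ p, 0 < (z p).1 → 1 ≤ (z p).2) ∧ (∀ ρ, R ρ ≤ 3) ∧
    (∀ ρ, R ρ ≠ 0 → ∃ p, (p, ρ) ∈ V) ∧
    ∑ p, (z p).1 + ∑ ρ, wR v (R ρ) = 1 ∧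
    ∑ p, (z p).2 + ∑ ρ, aR (R ρ) = n ∧
    (n * (2 * r + 3) + 1 : ℤ) + (∑ p, pP n (z p) + ∑ ρ, pR n v (R ρ)) ≤ m

/-- The baton waits for a prisoner. -/
def InvG (V : Set (Fin n × Fin r)) (R : Fin r → ℕ) (st : Fin n → PS) (m : ℕ) : Prop :=
  ∃ (l : Fin n) (U : Finset (Fin n)) (j : ℕ) (g : Fin r), l ∉ U ∧ U.card = j ∧ 1 ≤ j ∧
    st l = .wait j ∧ (∀ q ∈ U, st q = .work 0 0) ∧
    (∀ q, q ∉ U → q ≠ l → st q = .done ∧ ∀ ρ, (q, ρ) ∈ V) ∧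
    R g = 5 ∧ (∀ ρ, ρ ≠ g → R ρ = 1) ∧ j * (2 * r + 3) ≤ m

/-- An active prisoner `q` is marking rooms. -/
def InvA (V : Set (Fin n × Fin r)) (R : Fin r → ℕ) (st : Fin n → PS) (m : ℕ) : Prop :=
  ∃ (l q : Fin n) (U : Finset (Fin n)) (j : ℕ) (B : Finset (Fin r)), l ∉ U ∧ q ∉ U ∧ q ≠ l ∧
    U.card + 1 = j ∧
    st l = .wait j ∧ st q = .active B.card ∧ (∀ q ∈ U, st q = .work 0 0) ∧
    (∀ q', q' ∉ U → q' ≠ l → q' ≠ q → st q' = .done ∧ ∀ ρ, (q', ρ) ∈ V) ∧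
    (∀ ρ ∈ B, R ρ = 4 ∧ (q, ρ) ∈ V) ∧ (∀ ρ, ρ ∉ B → R ρ = 1) ∧
    j * (2 * r + 3) ≤ m + B.card

/-- The baton waits for the leader. -/
def InvD (V : Set (Fin n × Fin r)) (R : Fin r → ℕ) (st : Fin n → PS) (m : ℕ) : Prop :=
  ∃ (l : Fin n) (U : Finset (Fin n)) (j : ℕ) (g : Fin r), l ∉ U ∧ U.card + 1 = j ∧
    st l = .wait j ∧ (∀ q ∈ U, st q = .work 0 0) ∧
    (∀ q, q ∉ U → q ≠ l → st q = .done ∧ ∀ ρ, (q, ρ) ∈ V) ∧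
    R g = 6 ∧ (∀ ρ, ρ ≠ g → R ρ = 4) ∧ j * (2 * r + 3) ≤ m + (r + 1)

/-- The leader is unmarking rooms. -/
def InvC (V : Set (Fin n × Fin r)) (R : Fin r → ℕ) (st : Fin n → PS) (m : ℕ) : Prop :=
  ∃ (l : Fin n) (U : Finset (Fin n)) (j : ℕ) (B : Finset (Fin r)), l ∉ U ∧
    U.card + 1 = j ∧ st l = .clean j B.card ∧ (∀ q ∈ U, st q = .work 0 0) ∧
    (∀ q, q ∉ U → q ≠ l → st q = .done ∧ ∀ ρ, (q, ρ) ∈ V) ∧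
    (∀ ρ ∈ B, R ρ = 1 ∧ (l, ρ) ∈ V) ∧ (∀ ρ, ρ ∉ B → R ρ = 4) ∧
    j * (2 * r + 3) ≤ m + (r + 1) + B.card

def InvAll (v : ℤ) (V : Set (Fin n × Fin r)) (R : Fin r → ℕ) (st : Fin n → PS) (m : ℕ) : Prop :=
  Inv1 v V R st m ∨ InvG V R st m ∨ InvA V R st m ∨ InvD V R st m ∨ InvC V R st m

theorem InvAll_mono (v : ℤ) (V V' : Set (Fin n × Fin r)) (R : Fin r → ℕ) (st : Fin n → PS)
    (m : ℕ) (hV : V ⊆ V') (h : InvAll v V R st m) : InvAll v V' R st m := by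
  rcases h with h | h | h | h | h
  · left
    obtain ⟨z, h1, h2, h3, h4, h5, h6⟩ := h
    exact ⟨z, h1, h2, h3, h4, fun ρ hρ => (h5 ρ hρ).imp fun p hp => hV hp, h6⟩
  · right; left
    obtain ⟨l, U, j, g, h1, h2, h3, h4, h5, h6, h7⟩ := h
    exact ⟨l, U, j, g, h1, h2, h3, h4, h5,
      fun q a b => ⟨(h6 q a b).1, fun ρ => hV ((h6 q a b).2 ρ)⟩, h7⟩
  · right; right; left
    obtain ⟨l, q, U, j, B, h1, h2, h3, h4, h5, h6, h7, h8, h9, h10⟩ := h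
    exact ⟨l, q, U, j, B, h1, h2, h3, h4, h5, h6, h7,
      fun q a b c => ⟨(h8 q a b c).1, fun ρ => hV ((h8 q a b c).2 ρ)⟩,
      fun ρ hρ => ⟨(h9 ρ hρ).1, hV (h9 ρ hρ).2⟩, h10⟩
  · right; right; right; left
    obtain ⟨l, U, j, g, h1, h2, h4, h5, h6, h7⟩ := h
    exact ⟨l, U, j, g, h1, h2, h4, h5,
      fun q a b => ⟨(h6 q a b).1, fun ρ => hV ((h6 q a b).2 ρ)⟩, h7⟩
  · right; right; right; right
    obtain ⟨l, U, j, B, h1, h2, h4, h5, h6, h7, h8⟩ := h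
    exact ⟨l, U, j, B, h1, h2, h4, h5,
      fun q a b => ⟨(h6 q a b).1, fun ρ => hV ((h6 q a b).2 ρ)⟩,
      fun ρ hρ => ⟨(h7 ρ hρ).1, hV (h7 ρ hρ).2⟩, h8⟩

theorem pP_nonneg (z : ℤ × ℤ) (h : 0 ≤ z.2) : 0 ≤ pP n z := by
  unfold pP; split_ifs
  · positivity
  · omega

theorem pR_nonneg (v : ℤ) (hv : 1 ≤ v) (s : ℕ) : 0 ≤ pR n v s := by
  unfold pR; split_ifs <;> omega

theorem aR_nonneg (s : ℕ) : 0 ≤ aR s := by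
  unfold aR; split_ifs <;> omega

theorem wR_nonpos (v : ℤ) (hv : 1 ≤ v) (s : ℕ) : wR v s ≤ 0 := by
  unfold wR; split_ifs <;> omega

/-- Updating one prisoner and one room in the election phase. -/
theorem Inv1_update (v : ℤ) (hv : 1 ≤ v) (V : Set (Fin n × Fin r)) (R : Fin r → ℕ)
    (st : Fin n → PS) (m : ℕ) (z : Fin n → ℤ × ℤ)
    (h1 : ∀ p, st p = .work (z p).1 (z p).2) (h2 : ∀ p, 0 ≤ (z p).2)
    (h3 : ∀ p, 0 < (z p).1 → 1 ≤ (z p).2) (h4 : ∀ ρ, R ρ ≤ 3)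
    (h5 : ∀ ρ, R ρ ≠ 0 → ∃ p, (p, ρ) ∈ V)
    (h6 : ∑ p, (z p).1 + ∑ ρ, wR v (R ρ) = 1)
    (h7 : ∑ p, (z p).2 + ∑ ρ, aR (R ρ) = n)
    (h8 : (n * (2 * r + 3) + 1 : ℤ) + (∑ p, pP n (z p) + ∑ ρ, pR n v (R ρ)) ≤ m)
    (p : Fin n) (ρ : Fin r) (c' a' : ℤ) (s' : ℕ)
    (k1 : 0 ≤ a') (k2 : 0 < c' → 1 ≤ a') (k3 : s' ≤ 3)
    (k4 : c' + wR v s' = (z p).1 + wR v (R ρ)) (k5 : a' + aR s' = (z p).2 + aR (R ρ))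
    (k6 : pP n (c', a') + pR n v s' + 1 ≤ pP n (z p) + pR n v (R ρ)) :
    ∃ m' < m, InvAll v (insert (p, ρ) V) (Function.update R ρ s')
      (Function.update st p (.work c' a')) m' := by
  have hA : 0 ≤ ∑ p, pP n (z p) := Finset.sum_nonneg fun p _ => pP_nonneg _ (h2 p)
  have hB : 0 ≤ ∑ ρ, pR n v (R ρ) := Finset.sum_nonneg fun p _ => pR_nonneg v hv _
  have hC : (0 : ℤ) ≤ n * (2 * r + 3) := by positivity
  have hm : 1 ≤ m := by
    have : (1 : ℤ) ≤ m := by linarith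
    exact_mod_cast this
  refine ⟨m - 1, by omega, Or.inl ⟨Function.update z p (c', a'), ?_, ?_, ?_, ?_, ?_, ?_, ?_, ?_⟩⟩
  · intro q
    by_cases hq : q = p
    · subst hq; simp
    · simp [hq, h1]
  · intro q
    by_cases hq : q = p
    · subst hq; simpa
    · simp [hq, h2]
  · intro q
    by_cases hq : q = p
    · subst hq; simpa
    · simpa [hq] using h3 q
  · intro q
    by_cases hq : q = ρ
    · subst hq; simpa
    · simp [hq, h4]
  · intro q
    by_cases hq : q = ρ
    · subst hq; intro _; exact ⟨p, Set.mem_insert _ _⟩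
    · simp only [Function.update_of_ne hq]
      intro h
      obtain ⟨p', hp'⟩ := h5 q h
      exact ⟨p', Set.mem_insert_of_mem _ hp'⟩
  · rw [sum_upd z p (c', a') (fun x => x.1), sum_upd R ρ s' (wR v)]
    simp only []
    linarith
  · rw [sum_upd z p (c', a') (fun x => x.2), sum_upd R ρ s' aR]
    simp only []
    linarith
  · rw [sum_upd z p (c', a') (pP n), sum_upd R ρ s' (pR n v)]
    push_cast [hm]
    linarith

/-- When a prisoner has charge one and all the mass, the election is over. -/
theorem elected (v : ℤ) (hv : 1 ≤ v) (R : Fin r → ℕ) (z : Fin n → ℤ × ℤ)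
    (h2 : ∀ p, 0 ≤ (z p).2)
    (h3 : ∀ p, 0 < (z p).1 → 1 ≤ (z p).2) (h4 : ∀ ρ, R ρ ≤ 3)
    (h6 : ∑ p, (z p).1 + ∑ ρ, wR v (R ρ) = 1)
    (h7 : ∑ p, (z p).2 + ∑ ρ, aR (R ρ) = n)
    (p : Fin n) (hc : (z p).1 = 1) (ha : (z p).2 = n) :
    (∀ q, q ≠ p → z q = (0, 0)) ∧ ∀ ρ, R ρ = 1 := by
  rw [← Finset.add_sum_erase _ _ (Finset.mem_univ p)] at h6 h7
  have A1 : 0 ≤ ∑ q ∈ Finset.univ.erase p, (z q).2 := Finset.sum_nonneg fun q _ => h2 q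
  have A2 : 0 ≤ ∑ ρ, aR (R ρ) := Finset.sum_nonneg fun q _ => aR_nonneg _
  have B1 : ∑ q ∈ Finset.univ.erase p, (z q).2 = 0 := by linarith
  have B2 : ∑ ρ, aR (R ρ) = 0 := by linarith
  rw [Finset.sum_eq_zero_iff_of_nonneg (fun q _ => h2 q)] at B1
  rw [Finset.sum_eq_zero_iff_of_nonneg (fun q _ => aR_nonneg _)] at B2
  have C : ∀ q ∈ Finset.univ.erase p, (z q).1 ≤ 0 := by
    intro q hq
    by_contra hcon
    have := h3 q (by omega)
    have := B1 q hq
    omega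
  have A3 : ∑ q ∈ Finset.univ.erase p, (z q).1 ≤ 0 := Finset.sum_nonpos C
  have A4 : ∑ ρ, wR v (R ρ) ≤ 0 := Finset.sum_nonpos fun q _ => wR_nonpos v hv _
  have B3 : ∑ q ∈ Finset.univ.erase p, (z q).1 = 0 := by linarith
  have B4 : ∑ ρ, wR v (R ρ) = 0 := by linarith
  rw [Finset.sum_eq_zero_iff_of_nonpos C] at B3
  rw [Finset.sum_eq_zero_iff_of_nonpos (fun q _ => wR_nonpos v hv _)] at B4
  constructor
  · intro q hq
    have hq' : q ∈ Finset.univ.erase p := Finset.mem_erase.2 ⟨hq, Finset.mem_univ _⟩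
    exact Prod.ext (B3 q hq') (B1 q hq')
  · intro ρ
    have e1 := B2 ρ (Finset.mem_univ _)
    have e2 := B4 ρ (Finset.mem_univ _)
    have e3 := h4 ρ
    unfold aR at e1
    unfold wR at e2
    split_ifs at e1 e2 <;> omega

/-- The conclusion of a step. -/
def Good (v : ℤ) (V : Set (Fin n × Fin r)) (R : Fin r → ℕ) (st : Fin n → PS) (m : ℕ)
    (p : Fin n) (ρ : Fin r) (d : PS × ℕ × Bool) : Prop :=
  (d.2.2 = true → ∀ x, x ∈ insert (p, ρ) V) ∧
  (d.2.2 = false → (d.1 = st p ∧ d.2.1 = R ρ) ∨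
    ∃ m' < m, InvAll v (insert (p, ρ) V) (Function.update R ρ d.2.1)
      (Function.update st p d.1) m')

theorem good_same {v : ℤ} {V : Set (Fin n × Fin r)} {R : Fin r → ℕ} {st : Fin n → PS} {m : ℕ}
    {p : Fin n} {ρ : Fin r} {x : PS} {s : ℕ} (h1 : x = st p) (h2 : s = R ρ) :
    Good v V R st m p ρ (x, s, false) :=
  ⟨fun h => by simp at h, fun _ => Or.inl ⟨h1, h2⟩⟩

theorem good_move {v : ℤ} {V : Set (Fin n × Fin r)} {R : Fin r → ℕ} {st : Fin n → PS} {m : ℕ}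
    {p : Fin n} {ρ : Fin r} {x : PS} {s : ℕ}
    (h : ∃ m' < m, InvAll v (insert (p, ρ) V) (Function.update R ρ s)
      (Function.update st p x) m') :
    Good v V R st m p ρ (x, s, false) :=
  ⟨fun h => by simp at h, fun _ => Or.inr h⟩

theorem Inv1_step (v : ℤ) (hv : 1 ≤ v) (V : Set (Fin n × Fin r)) (R : Fin r → ℕ)
    (st : Fin n → PS) (m : ℕ) (h : Inv1 v V R st m) (p : Fin n) (ρ : Fin r) :
    Good v V R st m p ρ (delta n r v (st p) (R ρ)) := by
  obtain ⟨z, h1, h2, h3, h4, h5, h6, h7, h8⟩ := h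
  have hupd := Inv1_update v hv V R st m z h1 h2 h3 h4 h5 h6 h7 h8 p ρ
  have hn : (z p).2 ≤ n := by
    have := Finset.single_le_sum (fun q _ => h2 q) (Finset.mem_univ p)
    have : 0 ≤ ∑ ρ, aR (R ρ) := Finset.sum_nonneg fun q _ => aR_nonneg _
    linarith
  have hp2 := h2 p
  have hp3 := h3 p
  have hs := h4 ρ
  have hz : z p = ((z p).1, (z p).2) := rfl
  have hst := h1 p
  rw [hst]
  rw [hz] at hupd
  have hel := elected v hv R z h2 h3 h4 h6 h7 p
  generalize (z p).1 = c at *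
  generalize (z p).2 = a at *
  clear hz
  unfold delta
  simp only []
  split_ifs with e1 e2 e3 e4 e5 e6 e7 e8 e9
  · apply good_move
    rw [e1] at hupd
    apply hupd _ _ _ hp2 (fun h => hp3 (by omega)) (by omega)
    · simp [wR]; ring
    · simp [aR]
    · simp only [pP, pR]
      split_ifs <;> first | contradiction | omega | nlinarith
  · apply good_move
    rw [e2] at hupd
    apply hupd _ _ _ hp2 (fun h => by omega) (by omega)
    · simp [wR]
    · simp [aR]
    · simp only [pP, pR]
      split_ifs <;> first | contradiction | omega | nlinarith
  · apply good_move
    rw [e2] at hupd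
    apply hupd _ _ _ (by omega) (fun h => by omega) (by omega)
    · simp [wR]
    · simp [aR]
    · simp only [pP, pR]
      split_ifs <;> first | contradiction | omega | nlinarith
  · obtain ⟨k1, k2⟩ := hel e5.1 e5.2
    refine ⟨fun _ x => ?_, fun h => by simp at h⟩
    obtain ⟨p', ρ'⟩ := x
    obtain ⟨p'', hp''⟩ := h5 ρ' (by rw [k2]; omega)
    have : p' = p'' := by apply Fin.ext; omega
    rw [this]
    exact Set.mem_insert_of_mem _ hp''
  · obtain ⟨k1, k2⟩ := hel e5.1 e5.2
    apply good_move
    have hn1 := p.2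
    have hA : 0 ≤ ∑ p, pP n (z p) := Finset.sum_nonneg fun p _ => pP_nonneg _ (h2 p)
    have hB : 0 ≤ ∑ ρ, pR n v (R ρ) := Finset.sum_nonneg fun p _ => pR_nonneg v hv _
    have hm : n * (2 * r + 3) + 1 ≤ m := by
      have : (n * (2 * r + 3) + 1 : ℤ) ≤ m := by linarith
      exact_mod_cast this
    refine ⟨n * (2 * r + 3), by omega, Or.inr (Or.inl ⟨p, Finset.univ.erase p, n - 1, ρ,
      by simp, by simp, by omega, by simp, ?_, ?_, by simp, ?_, ?_⟩)⟩
    · intro q hq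
      have := Finset.ne_of_mem_erase hq
      rw [Function.update_of_ne this, h1, k1 q this]
    · intro q hq hqp
      simp [hqp] at hq
    · intro ρ' hρ'
      rw [Function.update_of_ne hρ', k2]
    · exact Nat.mul_le_mul_right _ (by omega)
  · exact good_same hst.symm rfl
  · apply good_move
    rw [e7.1] at hupd
    apply hupd _ _ _ hp2 (fun h => hp3 (by omega)) (by omega)
    · simp [wR]; ring
    · simp [aR]
    · simp only [pP, pR]
      split_ifs <;> first | contradiction | omega | nlinarith
  · apply good_move
    rw [e8.1] at hupd
    apply hupd _ _ _ (by omega) (fun h => by omega) (by omega)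
    · simp [wR]
    · simp [aR]
    · simp only [pP, pR]
      split_ifs <;> first | contradiction | omega | nlinarith
  · omega
  · exact good_same hst.symm rfl

theorem Inv1_live (v : ℤ) (hv : 1 ≤ v) (hr : 1 ≤ r) (V : Set (Fin n × Fin r)) (R : Fin r → ℕ)
    (st : Fin n → PS) (m : ℕ) (h : Inv1 v V R st m) :
    ∃ p ρ, (delta n r v (st p) (R ρ)).2.2 = true ∨
      ¬ ((delta n r v (st p) (R ρ)).1 = st p ∧ (delta n r v (st p) (R ρ)).2.1 = R ρ) := by
  obtain ⟨z, h1, h2, h3, h4, h5, h6, h7, h8⟩ := h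
  by_contra hcon
  push Not at hcon
  have hstuck : ∀ p ρ, R ρ ≠ 0 ∧ (R ρ = 1 → 0 ≤ (z p).1 ∧ ((z p).1 = 0 → (z p).2 ≤ 0) ∧
      ¬ ((z p).1 = 1 ∧ (z p).2 = n)) ∧ (R ρ = 2 → (z p).1 ≤ 0) ∧ (R ρ = 3 → (z p).1 ≤ 0) := by
    intro p ρ
    obtain ⟨k1, k2, k3⟩ := hcon p ρ
    have hs := h4 ρ
    rw [h1] at k1 k2 k3
    simp only [delta] at k1 k2 k3
    generalize (z p).1 = c at *
    generalize (z p).2 = a at *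
    generalize R ρ = s at *
    split_ifs at k1 k2 k3 <;> simp at k1 k2 k3 <;>
      refine ⟨?_, ?_, ?_, ?_⟩ <;> omega
  have ρ0 : Fin r := ⟨0, hr⟩
  -- some prisoner has positive charge
  have hw : ∑ ρ, wR v (R ρ) ≤ 0 := Finset.sum_nonpos fun q _ => wR_nonpos v hv _
  obtain ⟨p, -, hp⟩ : ∃ p ∈ Finset.univ, 0 < (z p).1 := by
    by_contra hno
    push Not at hno
    have := Finset.sum_nonpos hno
    linarith
  have hR : ∀ ρ, R ρ = 1 := by
    intro ρ
    have := h4 ρ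
    have := hstuck p ρ
    omega
  have hw0 : ∑ ρ, wR v (R ρ) = 0 := Finset.sum_eq_zero fun ρ _ => by rw [hR]; simp [wR]
  have ha0 : ∑ ρ, aR (R ρ) = 0 := Finset.sum_eq_zero fun ρ _ => by rw [hR]; simp [aR]
  have hpos : ∀ q, 0 ≤ (z q).1 := fun q => ((hstuck q ρ0).2.1 (hR ρ0)).1
  rw [hw0, add_zero, ← Finset.add_sum_erase _ _ (Finset.mem_univ p)] at h6
  rw [ha0, add_zero, ← Finset.add_sum_erase _ _ (Finset.mem_univ p)] at h7
  have hnn : 0 ≤ ∑ q ∈ Finset.univ.erase p, (z q).1 := Finset.sum_nonneg fun q _ => hpos q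
  have hz0 : ∑ q ∈ Finset.univ.erase p, (z q).1 = 0 := by omega
  rw [Finset.sum_eq_zero_iff_of_nonneg (fun q _ => hpos q)] at hz0
  have hm0 : ∑ q ∈ Finset.univ.erase p, (z q).2 = 0 := by
    apply Finset.sum_eq_zero
    intro q hq
    have := hz0 q hq
    have := ((hstuck q ρ0).2.1 (hR ρ0)).2.1 this
    have := h2 q
    omega
  exact ((hstuck p ρ0).2.1 (hR ρ0)).2.2 ⟨by omega, by omega⟩

end Protocol

end PrisonersGame
namespace PrisonersGame

section Protocol2

variable {n r : ℕ}

theorem InvG_step (v : ℤ) (V : Set (Fin n × Fin r)) (R : Fin r → ℕ)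
    (st : Fin n → PS) (m : ℕ) (h : InvG V R st m) (p : Fin n) (ρ : Fin r) :
    Good v V R st m p ρ (delta n r v (st p) (R ρ)) := by
  obtain ⟨l, U, j, g, h1, h2, h3, h4, h5, h6, h7, h8, h9⟩ := h
  have hL : 2 * r + 3 ≤ j * (2 * r + 3) := Nat.le_mul_of_pos_left _ h3
  by_cases hpl : p = l
  · subst hpl
    by_cases hρ : ρ = g
    · subst hρ
      have : delta n r v (st p) (R ρ) = (st p, R ρ, false) := by rw [h4, h7]; simp [delta]
      rw [this]; exact good_same rfl rfl
    · have : delta n r v (st p) (R ρ) = (st p, R ρ, false) := by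
        rw [h4, h8 _ hρ]; simp [delta]
      rw [this]; exact good_same rfl rfl
  by_cases hpU : p ∈ U
  · by_cases hρ : ρ = g
    · subst hρ
      have : delta n r v (st p) (R ρ) = (.active 1, 4, false) := by
        rw [h5 p hpU, h7]; simp [delta]
      rw [this]
      apply good_move
      refine ⟨m - 1, by omega, Or.inr (Or.inr (Or.inl ⟨l, p, U.erase p, j, {ρ}, ?_, ?_, hpl, ?_,
        ?_, ?_, ?_, ?_, ?_, ?_, ?_⟩))⟩
      · exact fun hh => h1 (Finset.mem_of_mem_erase hh)
      · simp
      · rw [Finset.card_erase_of_mem hpU]; omega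
      · rw [Function.update_of_ne (Ne.symm hpl), h4]
      · simp
      · intro q hq
        rw [Function.update_of_ne (Finset.ne_of_mem_erase hq), h5 q (Finset.mem_of_mem_erase hq)]
      · intro q a b c
        have hq : q ∉ U := fun hh => a (Finset.mem_erase.2 ⟨c, hh⟩)
        rw [Function.update_of_ne c]
        exact ⟨(h6 q hq b).1, fun ρ' => Set.mem_insert_of_mem _ ((h6 q hq b).2 ρ')⟩
      · intro ρ' hρ'
        rw [Finset.mem_singleton] at hρ'
        subst hρ'
        simp
      · intro ρ' hρ'
        rw [Finset.mem_singleton] at hρ'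
        rw [Function.update_of_ne hρ', h8 _ hρ']
      · simp; omega
    · have : delta n r v (st p) (R ρ) = (st p, R ρ, false) := by
        rw [h5 p hpU, h8 _ hρ]; simp [delta]
      rw [this]; exact good_same rfl rfl
  · have : delta n r v (st p) (R ρ) = (st p, R ρ, false) := by
      rw [(h6 p hpU hpl).1]; simp [delta]
    rw [this]; exact good_same rfl rfl

theorem InvA_step (v : ℤ) (V : Set (Fin n × Fin r)) (R : Fin r → ℕ)
    (st : Fin n → PS) (m : ℕ) (h : InvA V R st m) (p : Fin n) (ρ : Fin r) :
    Good v V R st m p ρ (delta n r v (st p) (R ρ)) := by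
  obtain ⟨l, q, U, j, B, h1, h2, h3, h4, h5, h6, h7, h8, h9, h10, h11⟩ := h
  have hL : 2 * r + 3 ≤ j * (2 * r + 3) := Nat.le_mul_of_pos_left _ (by omega)
  have hBr : B.card ≤ r := by simpa using Finset.card_le_univ B
  have hRv : R ρ = 4 ∨ R ρ = 1 := by
    by_cases hρ : ρ ∈ B
    · exact Or.inl (h9 ρ hρ).1
    · exact Or.inr (h10 ρ hρ)
  by_cases hpl : p = l
  · subst hpl
    have : delta n r v (st p) (R ρ) = (st p, R ρ, false) := by
      rw [h5]; rcases hRv with e | e <;> rw [e] <;> simp [delta]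
    rw [this]; exact good_same rfl rfl
  by_cases hpU : p ∈ U
  · have : delta n r v (st p) (R ρ) = (st p, R ρ, false) := by
      rw [h7 p hpU]; rcases hRv with e | e <;> rw [e] <;> simp [delta]
    rw [this]; exact good_same rfl rfl
  by_cases hpq : p = q
  · subst hpq
    by_cases hρ : ρ ∈ B
    · by_cases hfull : B.card = r
      · have : delta n r v (st p) (R ρ) = (.done, 6, false) := by
          rw [h6, (h9 ρ hρ).1]; simp [delta, hfull]
        rw [this]
        apply good_move
        have hall : ∀ ρ', ρ' ∈ B := by
          have : B = Finset.univ := by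
            rw [← Finset.card_eq_iff_eq_univ]; simpa using hfull
          intro ρ'; rw [this]; exact Finset.mem_univ _
        refine ⟨m - 1, by omega, Or.inr (Or.inr (Or.inr (Or.inl ⟨l, U, j, ρ, h1, h4, ?_,
          ?_, ?_, ?_, ?_, ?_⟩)))⟩
        · rw [Function.update_of_ne (Ne.symm hpl), h5]
        · intro q hq
          have : q ≠ p := fun e => hpU (e ▸ hq)
          rw [Function.update_of_ne this, h7 q hq]
        · intro q a b
          by_cases c : q = p
          · subst c
            exact ⟨by simp, fun ρ' => Set.mem_insert_of_mem _ (h9 ρ' (hall ρ')).2⟩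
          · rw [Function.update_of_ne c]
            exact ⟨(h8 q a b c).1, fun ρ' => Set.mem_insert_of_mem _ ((h8 q a b c).2 ρ')⟩
        · simp
        · intro ρ' hρ'
          rw [Function.update_of_ne hρ', (h9 ρ' (hall ρ')).1]
        · omega
      · have : delta n r v (st p) (R ρ) = (st p, R ρ, false) := by
          rw [h6, (h9 ρ hρ).1]; simp [delta, hfull]
        rw [this]; exact good_same rfl rfl
    · have : delta n r v (st p) (R ρ) = (.active (B.card + 1), 4, false) := by
        rw [h6, h10 ρ hρ]; simp [delta]
      rw [this]
      apply good_move
      refine ⟨m - 1, by omega, Or.inr (Or.inr (Or.inl ⟨l, p, U, j, insert ρ B, h1, h2, hpl, h4,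
        ?_, ?_, ?_, ?_, ?_, ?_, ?_⟩))⟩
      · rw [Function.update_of_ne (Ne.symm hpl), h5]
      · rw [Finset.card_insert_of_notMem hρ]; simp
      · intro q hq
        have : q ≠ p := fun e => hpU (e ▸ hq)
        rw [Function.update_of_ne this, h7 q hq]
      · intro q a b c
        rw [Function.update_of_ne c]
        exact ⟨(h8 q a b c).1, fun ρ' => Set.mem_insert_of_mem _ ((h8 q a b c).2 ρ')⟩
      · intro ρ' hρ'
        by_cases e : ρ' = ρ
        · subst e; simp
        · rw [Function.update_of_ne e]
          have := h9 ρ' (Finset.mem_of_mem_insert_of_ne hρ' e)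
          exact ⟨this.1, Set.mem_insert_of_mem _ this.2⟩
      · intro ρ' hρ'
        rw [Finset.mem_insert, not_or] at hρ'
        rw [Function.update_of_ne hρ'.1, h10 _ hρ'.2]
      · rw [Finset.card_insert_of_notMem hρ]; omega
  · have : delta n r v (st p) (R ρ) = (st p, R ρ, false) := by
      rw [(h8 p hpU hpl hpq).1]; simp [delta]
    rw [this]; exact good_same rfl rfl

theorem InvD_step (v : ℤ) (V : Set (Fin n × Fin r)) (R : Fin r → ℕ)
    (st : Fin n → PS) (m : ℕ) (h : InvD V R st m) (p : Fin n) (ρ : Fin r) :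
    Good v V R st m p ρ (delta n r v (st p) (R ρ)) := by
  obtain ⟨l, U, j, g, h1, h2, h4, h5, h6, h7, h8, h9⟩ := h
  have hL : 2 * r + 3 ≤ j * (2 * r + 3) := Nat.le_mul_of_pos_left _ (by omega)
  have hRv : R ρ = 4 ∨ R ρ = 6 := by
    by_cases hρ : ρ = g
    · subst hρ; exact Or.inr h7
    · exact Or.inl (h8 ρ hρ)
  by_cases hpl : p = l
  · subst hpl
    by_cases hρ : ρ = g
    · subst hρ
      have : delta n r v (st p) (R ρ) = (.clean j 1, 1, false) := by rw [h4, h7]; simp [delta]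
      rw [this]
      apply good_move
      refine ⟨m - 1, by omega, Or.inr (Or.inr (Or.inr (Or.inr ⟨p, U, j, {ρ}, h1, h2, ?_, ?_, ?_,
        ?_, ?_, ?_⟩)))⟩
      · simp
      · intro q hq
        have : q ≠ p := fun e => h1 (e ▸ hq)
        rw [Function.update_of_ne this, h5 q hq]
      · intro q a b
        rw [Function.update_of_ne b]
        exact ⟨(h6 q a b).1, fun ρ' => Set.mem_insert_of_mem _ ((h6 q a b).2 ρ')⟩
      · intro ρ' hρ'
        rw [Finset.mem_singleton] at hρ'
        subst hρ'
        simp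
      · intro ρ' hρ'
        rw [Finset.mem_singleton] at hρ'
        rw [Function.update_of_ne hρ', h8 _ hρ']
      · simp; omega
    · have : delta n r v (st p) (R ρ) = (st p, R ρ, false) := by
        rw [h4, h8 _ hρ]; simp [delta]
      rw [this]; exact good_same rfl rfl
  by_cases hpU : p ∈ U
  · have : delta n r v (st p) (R ρ) = (st p, R ρ, false) := by
      rw [h5 p hpU]; rcases hRv with e | e <;> rw [e] <;> simp [delta]
    rw [this]; exact good_same rfl rfl
  · have : delta n r v (st p) (R ρ) = (st p, R ρ, false) := by
      rw [(h6 p hpU hpl).1]; simp [delta]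
    rw [this]; exact good_same rfl rfl

theorem InvC_step (v : ℤ) (V : Set (Fin n × Fin r)) (R : Fin r → ℕ)
    (st : Fin n → PS) (m : ℕ) (h : InvC V R st m) (p : Fin n) (ρ : Fin r) :
    Good v V R st m p ρ (delta n r v (st p) (R ρ)) := by
  obtain ⟨l, U, j, B, h1, h4, h6, h7, h8, h9, h10, h11⟩ := h
  have hL : 2 * r + 3 ≤ j * (2 * r + 3) := Nat.le_mul_of_pos_left _ (by omega)
  have hBr : B.card ≤ r := by simpa using Finset.card_le_univ B
  have hRv : R ρ = 4 ∨ R ρ = 1 := by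
    by_cases hρ : ρ ∈ B
    · exact Or.inr (h9 ρ hρ).1
    · exact Or.inl (h10 ρ hρ)
  by_cases hpl : p = l
  · subst hpl
    by_cases hρ : ρ ∈ B
    · by_cases hfull : B.card = r
      · have hall : ∀ ρ', ρ' ∈ B := by
          have : B = Finset.univ := by
            rw [← Finset.card_eq_iff_eq_univ]; simpa using hfull
          intro ρ'; rw [this]; exact Finset.mem_univ _
        by_cases hj : j = 1
        · have : delta n r v (st p) (R ρ) = (.clean j B.card, 1, true) := by
            rw [h6, (h9 ρ hρ).1]; simp [delta, hfull, hj]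
          rw [this]
          refine ⟨fun _ x => ?_, fun h => by simp at h⟩
          obtain ⟨q, ρ'⟩ := x
          apply Set.mem_insert_of_mem
          by_cases e : q = p
          · subst e; exact (h9 ρ' (hall ρ')).2
          · have hU : U = ∅ := by rw [← Finset.card_eq_zero]; omega
            exact (h8 q (by simp [hU]) e).2 ρ'
        · have : delta n r v (st p) (R ρ) = (.wait (j - 1), 5, false) := by
            rw [h6, (h9 ρ hρ).1]; simp [delta, hfull, hj]
          rw [this]
          apply good_move
          refine ⟨m - 1, by omega, Or.inr (Or.inl ⟨p, U, j - 1, ρ, h1, by omega, by omega, ?_,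
            ?_, ?_, ?_, ?_, ?_⟩)⟩
          · simp
          · intro q hq
            have : q ≠ p := fun e => h1 (e ▸ hq)
            rw [Function.update_of_ne this, h7 q hq]
          · intro q a b
            rw [Function.update_of_ne b]
            exact ⟨(h8 q a b).1, fun ρ' => Set.mem_insert_of_mem _ ((h8 q a b).2 ρ')⟩
          · simp
          · intro ρ' hρ'
            rw [Function.update_of_ne hρ', (h9 ρ' (hall ρ')).1]
          · rw [Nat.sub_mul]; omega
      · have : delta n r v (st p) (R ρ) = (st p, R ρ, false) := by
          rw [h6, (h9 ρ hρ).1]; simp [delta, hfull]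
        rw [this]; exact good_same rfl rfl
    · have : delta n r v (st p) (R ρ) = (.clean j (B.card + 1), 1, false) := by
        rw [h6, h10 ρ hρ]; simp [delta]
      rw [this]
      apply good_move
      refine ⟨m - 1, by omega, Or.inr (Or.inr (Or.inr (Or.inr ⟨p, U, j, insert ρ B, h1, h4,
        ?_, ?_, ?_, ?_, ?_, ?_⟩)))⟩
      · rw [Finset.card_insert_of_notMem hρ]; simp
      · intro q hq
        have : q ≠ p := fun e => h1 (e ▸ hq)
        rw [Function.update_of_ne this, h7 q hq]
      · intro q a b
        rw [Function.update_of_ne b]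
        exact ⟨(h8 q a b).1, fun ρ' => Set.mem_insert_of_mem _ ((h8 q a b).2 ρ')⟩
      · intro ρ' hρ'
        by_cases e : ρ' = ρ
        · subst e; simp
        · rw [Function.update_of_ne e]
          have := h9 ρ' (Finset.mem_of_mem_insert_of_ne hρ' e)
          exact ⟨this.1, Set.mem_insert_of_mem _ this.2⟩
      · intro ρ' hρ'
        rw [Finset.mem_insert, not_or] at hρ'
        rw [Function.update_of_ne hρ'.1, h10 _ hρ'.2]
      · rw [Finset.card_insert_of_notMem hρ]; omega
  by_cases hpU : p ∈ U
  · have : delta n r v (st p) (R ρ) = (st p, R ρ, false) := by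
      rw [h7 p hpU]; rcases hRv with e | e <;> rw [e] <;> simp [delta]
    rw [this]; exact good_same rfl rfl
  · have : delta n r v (st p) (R ρ) = (st p, R ρ, false) := by
      rw [(h8 p hpU hpl).1]; simp [delta]
    rw [this]; exact good_same rfl rfl

theorem InvAll_live (v : ℤ) (hv : 1 ≤ v) (hr : 1 ≤ r) (V : Set (Fin n × Fin r)) (R : Fin r → ℕ)
    (st : Fin n → PS) (m : ℕ) (h : InvAll v V R st m) :
    ∃ p ρ, (delta n r v (st p) (R ρ)).2.2 = true ∨
      ¬ ((delta n r v (st p) (R ρ)).1 = st p ∧ (delta n r v (st p) (R ρ)).2.1 = R ρ) := by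
  rcases h with h | h | h | h | h
  · exact Inv1_live v hv hr V R st m h
  · obtain ⟨l, U, j, g, h1, h2, h3, h4, h5, h6, h7, h8, h9⟩ := h
    obtain ⟨q, hq⟩ : U.Nonempty := by rw [← Finset.card_pos]; omega
    refine ⟨q, g, Or.inr ?_⟩
    rw [h5 q hq, h7]; simp [delta]
  · obtain ⟨l, q, U, j, B, h1, h2, h3, h4, h5, h6, h7, h8, h9, h10, h11⟩ := h
    by_cases hB : ∃ ρ, ρ ∉ B
    · obtain ⟨ρ, hρ⟩ := hB
      refine ⟨q, ρ, Or.inr ?_⟩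
      rw [h6, h10 ρ hρ]; simp [delta]
    · push Not at hB
      have hc : B.card = r := by
        rw [Finset.eq_univ_iff_forall.2 hB]; simp
      refine ⟨q, ⟨0, hr⟩, Or.inr ?_⟩
      rw [h6, (h9 _ (hB ⟨0, hr⟩)).1]; simp [delta, hc]
  · obtain ⟨l, U, j, g, h1, h2, h4, h5, h6, h7, h8, h9⟩ := h
    refine ⟨l, g, Or.inr ?_⟩
    rw [h4, h7]; simp [delta]
  · obtain ⟨l, U, j, B, h1, h4, h6, h7, h8, h9, h10, h11⟩ := h
    by_cases hB : ∃ ρ, ρ ∉ B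
    · obtain ⟨ρ, hρ⟩ := hB
      refine ⟨l, ρ, Or.inr ?_⟩
      rw [h6, h10 ρ hρ]; simp [delta]
    · push Not at hB
      have hc : B.card = r := by
        rw [Finset.eq_univ_iff_forall.2 hB]; simp
      refine ⟨l, ⟨0, hr⟩, ?_⟩
      rw [h6, (h9 _ (hB ⟨0, hr⟩)).1]
      by_cases hj : j = 1 <;> simp [delta, hc, hj]

theorem protocol_winning (u v : ℤ) (hv : 1 ≤ v) (hu : 0 ≤ u) (hr : 1 ≤ r)
    (huv : u * n = v * r + 1) :
    Winning (n := n) (r := r) (fun _ => autoStrat (delta n r v) (.work u 1)) := by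
  refine auto_winning (delta n r v) (.work u 1) (InvAll v) (InvAll_mono v)
    ((n * (2 * r + 3) + 1 : ℤ) + (∑ _p : Fin n, pP n (u, 1) + ∑ _ρ : Fin r, pR n v 0)).toNat
    ?_ ?_ (InvAll_live v hv hr)
  · left
    refine ⟨fun _ => (u, 1), by simp, by simp, by simp, by simp, by simp, ?_, ?_, ?_⟩
    · simp [wR]; linarith
    · simp [aR]
    · exact Int.self_le_toNat _
  · intro V R st m h p ρ
    rcases h with h | h | h | h | h
    · exact Inv1_step v hv V R st m h p ρ
    · exact InvG_step v V R st m h p ρ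
    · exact InvA_step v V R st m h p ρ
    · exact InvD_step v V R st m h p ρ
    · exact InvC_step v V R st m h p ρ

end Protocol2

theorem exists_bezout {n r : ℕ} (hn : 1 ≤ n) (hr : 1 ≤ r) (h : Nat.gcd n r = 1) :
    ∃ u v : ℤ, 1 ≤ v ∧ 0 ≤ u ∧ u * n = v * r + 1 := by
  have hb := Nat.gcd_eq_gcd_ab n r
  rw [h] at hb
  generalize Nat.gcdA n r = x at hb
  generalize Nat.gcdB n r = y at hb
  have hn' : (1 : ℤ) ≤ n := by exact_mod_cast hn
  have hr' : (1 : ℤ) ≤ r := by exact_mod_cast hr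
  push_cast at hb
  have hv : 1 ≤ -y + n * (|y| + 1) := by
    have := le_abs_self y
    have := abs_nonneg y
    nlinarith
  have e : (x + r * (|y| + 1)) * n = (-y + n * (|y| + 1)) * r + 1 := by linear_combination -hb
  refine ⟨x + r * (|y| + 1), -y + n * (|y| + 1), hv, ?_, e⟩
  by_contra hneg
  push Not at hneg
  nlinarith

theorem winning_of_gcd {n r q : ℕ} (hn : 1 ≤ n) (hr : 1 ≤ r)
    (h : Nat.gcd n r = 1) (hq : 7 ≤ q) : HasSymmetricWinningStrategy n r q := by
  obtain ⟨u, v, hv, hu, huv⟩ := exists_bezout hn hr h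
  exact ⟨autoStrat (delta n r v) (.work u 1),
    fun _ s _ hs => delta_lt n r v _ s q hq hs, protocol_winning u v hv hu hr huv⟩

end PrisonersGame

open PrisonersGame in
/-- For `n ≥ 1` prisoners and `r ≥ 1` rooms, the prisoners have a symmetric
winning strategy for some number of states `q` if and only if `gcd(n, r) = 1`.
Furthermore, there is a function `f` such that whenever `gcd(n, r) = 1`, the
prisoners have a symmetric winning strategy for any `q ≥ f (min n r)`. -/
theorem symmetric_iff_coprime :
    (∀ n r : ℕ, 1 ≤ n → 1 ≤ r →
      ((∃ q, HasSymmetricWinningStrategy n r q) ↔ Nat.gcd n r = 1)) ∧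
    ∃ f : ℕ → ℕ, ∀ n r : ℕ, 1 ≤ n → 1 ≤ r → Nat.gcd n r = 1 →
      ∀ q, f (min n r) ≤ q → HasSymmetricWinningStrategy n r q := by
  refine ⟨fun n r hn hr => ⟨fun ⟨q, h⟩ => gcd_of_winning hn hr h,
    fun h => ⟨7, winning_of_gcd hn hr h le_rfl⟩⟩,
    fun _ => 7, fun n r hn hr h q hq => winning_of_gcd hn hr h hq⟩
end

section
/- If n ≥ 1, r ≥ 1 and gcd(n, r) > 1, then for every number of states q the n prisoners do not have a symmetric winning strategy for r rooms with q states. -/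
namespace PrisonersGame

/-- Blow-up of an abstract schedule on orbits: round `m` lasts `d` steps, and in its `j`-th step
member `j` of the prisoner orbit visits member `j + K m` of the room orbit. -/
def blowUp {n r a b d : ℕ} [NeZero d] (e : Fin n ≃ Fin a × Fin d) (f : Fin r ≃ Fin b × Fin d)
    (S : Schedule a b) (K : ℕ → Fin d) : Schedule n r :=
  fun t => (e.symm ((S (t / d)).1, Fin.ofNat d t), f.symm ((S (t / d)).2, Fin.ofNat d t + K (t / d)))

theorem blowUp_apply {n r a b d : ℕ} [NeZero d] (e : Fin n ≃ Fin a × Fin d)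
    (f : Fin r ≃ Fin b × Fin d) (S : Schedule a b) (K : ℕ → Fin d) (m j : ℕ) (hj : j < d) :
    blowUp e f S K (m * d + j) =
      (e.symm ((S m).1, ⟨j, hj⟩), f.symm ((S m).2, ⟨j, hj⟩ + K m)) := by
  have h0 : 0 < d := by omega
  have h1 : (m * d + j) / d = m := by
    rw [Nat.mul_comm, Nat.mul_add_div h0, Nat.div_eq_of_lt hj, Nat.add_zero]
  have h2 : Fin.ofNat d (m * d + j) = ⟨j, hj⟩ := by
    apply Fin.ext
    simp [Fin.ofNat, Nat.mod_eq_of_lt hj]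
  simp only [blowUp, h1, h2]

/-- The state of the blown-up play in the middle of round `m`. -/
def mid {n r a b d : ℕ} (e : Fin n ≃ Fin a × Fin d) (f : Fin r ≃ Fin b × Fin d)
    (σ : Strategy) (S : Schedule a b) (K : ℕ → Fin d) (m j : ℕ) :
    (Fin r → ℕ) × (Fin n → List ℕ) :=
  (fun x => if ((f x).2 - K m).val < j then (run (fun _ => σ) S (m + 1)).1 (f x).1
      else (run (fun _ => σ) S m).1 (f x).1,
   fun p => if (e p).2.val < j then (run (fun _ => σ) S (m + 1)).2 (e p).1
      else (run (fun _ => σ) S m).2 (e p).1)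

theorem mid_full {n r a b d : ℕ} (e : Fin n ≃ Fin a × Fin d) (f : Fin r ≃ Fin b × Fin d)
    (σ : Strategy) (S : Schedule a b) (K : ℕ → Fin d) (m : ℕ) :
    mid e f σ S K m d = mid e f σ S K (m + 1) 0 := by
  simp [mid]

theorem mid_succ {n r a b d : ℕ} [NeZero d] (e : Fin n ≃ Fin a × Fin d)
    (f : Fin r ≃ Fin b × Fin d)
    (σ : Strategy) (S : Schedule a b) (K : ℕ → Fin d) (m j : ℕ) (hj : j < d)
    (ih : run (fun _ => σ) (blowUp e f S K) (m * d + j) = mid e f σ S K m j) :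
    run (fun _ => σ) (blowUp e f S K) (m * d + j + 1) = mid e f σ S K m (j + 1) := by
  rw [run]
  simp only [ih, blowUp_apply e f S K m j hj]
  refine Prod.ext ?_ ?_
  · funext x
    by_cases hx : x = f.symm ((S m).2, ⟨j, hj⟩ + K m)
    · subst hx
      simp [mid, run]
    · refine (Function.update_of_ne hx _ _).trans ?_
      simp only [mid]
      by_cases h1 : ((f x).2 - K m).val = j
      · have h2 : (f x).2 = ⟨j, hj⟩ + K m := by
          rw [← sub_eq_iff_eq_add]; exact Fin.ext h1
        have h3 : (f x).1 ≠ (S m).2 := by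
          intro h3
          apply hx
          rw [Equiv.eq_symm_apply]
          exact Prod.ext h3 h2
        simp [h1, run, Function.update_of_ne h3]
      · have h4 : ((f x).2 - K m).val < j + 1 ↔ ((f x).2 - K m).val < j := by omega
        simp only [h4]
  · funext x
    by_cases hx : x = e.symm ((S m).1, ⟨j, hj⟩)
    · subst hx
      simp [mid, run]
    · refine (Function.update_of_ne hx _ _).trans ?_
      simp only [mid]
      by_cases h1 : (e x).2.val = j
      · have h3 : (e x).1 ≠ (S m).1 := by
          intro h3
          apply hx
          rw [Equiv.eq_symm_apply]
          exact Prod.ext h3 (Fin.ext h1)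
        simp [h1, run, Function.update_of_ne h3]
      · have h4 : (e x).2.val < j + 1 ↔ (e x).2.val < j := by omega
        simp only [h4]

theorem run_blowUp {n r a b d : ℕ} [NeZero d] (e : Fin n ≃ Fin a × Fin d)
    (f : Fin r ≃ Fin b × Fin d)
    (σ : Strategy) (S : Schedule a b) (K : ℕ → Fin d) (m : ℕ) :
    ∀ j ≤ d, run (fun _ => σ) (blowUp e f S K) (m * d + j) = mid e f σ S K m j := by
  induction m with
  | zero =>
    intro j
    induction j with
    | zero => intro _; simp [run, mid]
    | succ j ih => intro hj; exact mid_succ e f σ S K 0 j hj (ih (by omega))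
  | succ m ihm =>
    intro j
    induction j with
    | zero =>
      intro _
      rw [← mid_full, ← ihm d le_rfl]
      congr 1
      ring
    | succ j ih => intro hj; exact mid_succ e f σ S K (m + 1) j hj (ih (by omega))

theorem declaresAt_blowUp {n r a b d : ℕ} [NeZero d] (e : Fin n ≃ Fin a × Fin d)
    (f : Fin r ≃ Fin b × Fin d)
    (σ : Strategy) (S : Schedule a b) (K : ℕ → Fin d) (m j : ℕ) (hj : j < d) :
    declaresAt (fun _ => σ) (blowUp e f S K) (m * d + j) ↔ declaresAt (fun _ => σ) S m := by
  unfold declaresAt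
  rw [run_blowUp e f σ S K m j hj.le, blowUp_apply e f S K m j hj]
  simp [mid]

theorem blowUp_fair {n r a b d : ℕ} [NeZero d] (e : Fin n ≃ Fin a × Fin d)
    (f : Fin r ≃ Fin b × Fin d) (S : Schedule a b) (K : ℕ → Fin d)
    (hK : ∀ x y k N, ∃ m, N ≤ m ∧ S m = (x, y) ∧ K m = k) : (blowUp e f S K).Fair := by
  intro p x
  apply Set.infinite_of_forall_exists_gt
  intro N
  obtain ⟨m, hm, hS, hk⟩ := hK (e p).1 (f x).1 ((f x).2 - (e p).2) (N + 1)
  refine ⟨m * d + (e p).2.val, ?_, ?_⟩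
  · have h0 : 0 < d := NeZero.pos d
    have := blowUp_apply e f S K m (e p).2.val (e p).2.isLt
    rw [Set.mem_ofPred_eq, this, hS, hk]
    simp
  · have h0 : 0 < d := NeZero.pos d
    nlinarith

theorem exists_enum (a b d : ℕ) [NeZero a] [NeZero b] [NeZero d] :
    ∃ (S : Schedule a b) (K : ℕ → Fin d),
      ∀ x y k N, ∃ m, N ≤ m ∧ S m = (x, y) ∧ K m = k := by
  refine ⟨fun m => (Fin.ofNat a m, Fin.ofNat b (m / a)), fun m => Fin.ofNat d (m / a / b), ?_⟩
  intro x y k N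
  have ha : 0 < a := NeZero.pos a
  have hb : 0 < b := NeZero.pos b
  have hd : 0 < d := NeZero.pos d
  have h1 : (a * (b * (d * N + k) + y) + x) / a = b * (d * N + k) + y := by
    rw [Nat.mul_add_div ha, Nat.div_eq_of_lt x.isLt, Nat.add_zero]
  have h2 : (b * (d * N + k) + y) / b = d * N + k := by
    rw [Nat.mul_add_div hb, Nat.div_eq_of_lt y.isLt, Nat.add_zero]
  refine ⟨a * (b * (d * N + k) + y) + x, ?_, ?_, ?_⟩
  · have e1 : N ≤ d * N := Nat.le_mul_of_pos_left N hd
    have e2 : d * N + k ≤ b * (d * N + k) := Nat.le_mul_of_pos_left _ hb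
    have e3 : b * (d * N + k) + y ≤ a * (b * (d * N + k) + y) := Nat.le_mul_of_pos_left _ ha
    omega
  · refine Prod.ext (Fin.ext ?_) (Fin.ext ?_)
    · simp [Fin.ofNat, Nat.mod_eq_of_lt x.isLt]
    · simp [h1, Fin.ofNat, Nat.mod_eq_of_lt y.isLt]
  · apply Fin.ext
    simp [h1, h2, Fin.ofNat, Nat.mod_eq_of_lt k.isLt]

end PrisonersGame

open PrisonersGame in
/-- If `gcd(n, r) > 1`, then for every number of states `q` the `n` prisoners
do not have a symmetric winning strategy for `r` rooms with `q` states. -/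
theorem no_symmetric_strategy_of_not_coprime (n r : ℕ) (hn : 1 ≤ n)
    (hr : 1 ≤ r) (h : 1 < Nat.gcd n r) :
    ∀ q : ℕ, ¬ HasSymmetricWinningStrategy n r q := by
  rintro q ⟨σ, -, hw⟩
  obtain ⟨a, ha⟩ := Nat.gcd_dvd_left n r
  obtain ⟨b, hb⟩ := Nat.gcd_dvd_right n r
  generalize Nat.gcd n r = d at h ha hb
  rw [Nat.mul_comm] at ha hb
  have hd0 : NeZero d := ⟨by omega⟩
  have ha0 : NeZero a := ⟨by rintro rfl; omega⟩
  have hb0 : NeZero b := ⟨by rintro rfl; omega⟩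
  let e : Fin n ≃ Fin a × Fin d := (finCongr ha).trans finProdFinEquiv.symm
  let f : Fin r ≃ Fin b × Fin d := (finCongr hb).trans finProdFinEquiv.symm
  obtain ⟨S, K, hK⟩ := exists_enum a b d
  obtain ⟨⟨t, ht⟩, -⟩ := hw _ (blowUp_fair e f S K hK)
  have hpos : 0 < d := by omega
  rw [← Nat.div_add_mod' t d, declaresAt_blowUp e f σ S K _ _ (Nat.mod_lt t hpos)] at ht
  generalize t / d = m at ht
  let K' : ℕ → Fin d := fun i => if i ≤ m then 0 else K i
  have hK' : ∀ x y k N, ∃ i, N ≤ i ∧ S i = (x, y) ∧ K' i = k := by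
    intro x y k N
    obtain ⟨i, h1, h2, h3⟩ := hK x y k (N + m + 1)
    exact ⟨i, by omega, h2, by simp only [K']; rw [if_neg (by omega), h3]⟩
  have hdec := (declaresAt_blowUp e f σ S K' m 0 hpos).2 ht
  obtain ⟨s, hs, hs'⟩ := (hw _ (blowUp_fair e f S K' hK')).2 _ hdec
    (e.symm (0, ⟨0, hpos⟩)) (f.symm (0, ⟨1, h⟩))
  have hsm : s / d ≤ m := by
    calc s / d ≤ (m * d + 0) / d := Nat.div_le_div_right hs
      _ = m := by simp [hpos]
  simp only [blowUp, K', if_pos hsm, add_zero, Prod.mk.injEq, EmbeddingLike.apply_eq_iff_eq] at hs'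
  have := hs'.1.2.symm.trans hs'.2.2
  simp at this
end

section
/- For every n ≥ 1 there exists q = q(n) such that for every r > n with gcd(n, r) = 1, the n prisoners have a symmetric winning strategy for r rooms with q states. -/
namespace PrisonersProof

open Finset

/-- Private state of a prisoner. -/
inductive PS where
  | alive (e c : ℕ) : PS
  | dead (c : ℕ) : PS
  | held (j k : ℕ) : PS
  | done (j : ℕ) : PS

/-- State of a room. -/
inductive RS where
  | el (b : Bool) (D m : ℕ) : RS
  | ph (h : ℕ) (k : Bool) : RS

def lev (n r e c : ℕ) : ℕ := 2 * e + if r * e ≤ c * n then 1 else 0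

def ht : RS → ℕ
  | .el _ _ _ => 0
  | .ph h _ => h

def tk : RS → Bool
  | .el _ _ _ => false
  | .ph _ k => k

def step (n r : ℕ) : PS → RS → PS × RS
  | .alive e c, .el b D m =>
      if lev n r e c < m then (.dead c, .el b (D + e) m)
      else if n ≤ e + D then (.held 1 0, .el b 0 0)
      else if b = false ∧ c * n < r * e then
        (.alive (e + D) (c + 1), .el true 0 (lev n r (e + D) (c + 1)))
      else (.alive (e + D) c, .el b 0 (lev n r (e + D) c))
  | .alive e c, .ph h k => (.alive e c, .ph h k)
  | .dead c, .el b D m =>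
      if b = true ∧ 0 < c then (.dead (c - 1), .el false D m) else (.dead c, .el b D m)
  | .dead c, .ph h k =>
      if k = true ∧ h < n then (.held (h + 1) 1, .ph (h + 1) false) else (.dead c, .ph h k)
  | .held j k, S =>
      if ht S + 1 = j then
        if k + 1 < r then (.held j (k + 1), .ph j false) else (.done j, .ph j true)
      else (.held j k, S)
  | .done j, S => (.done j, S)

inductive Tr (n r : ℕ) : PS → RS → PS → RS → Prop where
  | die (e c : ℕ) (b : Bool) (D m : ℕ) : lev n r e c < m →
      Tr n r (.alive e c) (.el b D m) (.dead c) (.el b (D + e) m)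
  | lead (e c : ℕ) (b : Bool) (D m : ℕ) : m ≤ lev n r e c → n ≤ e + D →
      Tr n r (.alive e c) (.el b D m) (.held 1 0) (.el b 0 0)
  | absR (e c : ℕ) (D m : ℕ) : m ≤ lev n r e c → e + D < n → c * n < r * e →
      Tr n r (.alive e c) (.el false D m) (.alive (e + D) (c + 1))
        (.el true 0 (lev n r (e + D) (c + 1)))
  | absD (e c : ℕ) (b : Bool) (D m : ℕ) : m ≤ lev n r e c → e + D < n →
      (b = true ∨ r * e ≤ c * n) →
      Tr n r (.alive e c) (.el b D m) (.alive (e + D) c) (.el b 0 (lev n r (e + D) c))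
  | alivePh (e c h : ℕ) (k : Bool) : Tr n r (.alive e c) (.ph h k) (.alive e c) (.ph h k)
  | rel (c D m : ℕ) : 0 < c →
      Tr n r (.dead c) (.el true D m) (.dead (c - 1)) (.el false D m)
  | deadEl (c : ℕ) (b : Bool) (D m : ℕ) : (b = false ∨ c = 0) →
      Tr n r (.dead c) (.el b D m) (.dead c) (.el b D m)
  | take (c h : ℕ) : h < n →
      Tr n r (.dead c) (.ph h true) (.held (h + 1) 1) (.ph (h + 1) false)
  | deadPh (c h : ℕ) (k : Bool) : (k = false ∨ n ≤ h) →
      Tr n r (.dead c) (.ph h k) (.dead c) (.ph h k)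
  | conv (j k : ℕ) (S : RS) : ht S + 1 = j → k + 1 < r →
      Tr n r (.held j k) S (.held j (k + 1)) (.ph j false)
  | fin (j k : ℕ) (S : RS) : ht S + 1 = j → r ≤ k + 1 →
      Tr n r (.held j k) S (.done j) (.ph j true)
  | heldNo (j k : ℕ) (S : RS) : ht S + 1 ≠ j → Tr n r (.held j k) S (.held j k) S
  | doneNo (j : ℕ) (S : RS) : Tr n r (.done j) S (.done j) S

theorem step_spec (n r : ℕ) (P : PS) (S : RS) :
    Tr n r P S (step n r P S).1 (step n r P S).2 := by
  cases P with
  | alive e c =>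
    cases S with
    | el b D m =>
      simp only [step]
      split_ifs with h1 h2 h3
      · exact .die _ _ _ _ _ h1
      · exact .lead _ _ _ _ _ (by omega) h2
      · obtain ⟨rfl, h3⟩ := h3
        exact .absR _ _ _ _ (by omega) (by omega) h3
      · refine .absD _ _ _ _ _ (by omega) (by omega) ?_
        cases b
        · right; simpa using h3
        · left; rfl
    | ph h k => exact .alivePh _ _ _ _
  | dead c =>
    cases S with
    | el b D m =>
      simp only [step]
      split_ifs with h1
      · obtain ⟨rfl, h1⟩ := h1
        exact .rel _ _ _ h1
      · refine .deadEl _ _ _ _ ?_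
        cases b
        · left; rfl
        · right; simpa using h1
    | ph h k =>
      simp only [step]
      split_ifs with h1
      · obtain ⟨rfl, h1⟩ := h1
        exact .take _ _ h1
      · refine .deadPh _ _ _ ?_
        cases k
        · left; rfl
        · right; simpa using h1
  | held j k =>
    simp only [step]
    split_ifs with h1 h2
    · exact .conv _ _ _ h1 h2
    · exact .fin _ _ _ h1 (by omega)
    · exact .heldNo _ _ _ h1
  | done j => exact .doneNo _ _

def ev : PS → ℕ
  | .alive e _ => e
  | _ => 0

def cv : PS → ℕ
  | .alive _ c => c
  | .dead c => c
  | _ => 0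

def lv (n r : ℕ) : PS → ℕ
  | .alive e c => lev n r e c
  | _ => 0

def dn : PS → ℕ
  | .done _ => 1
  | _ => 0

def rk : PS → ℕ
  | .held j _ => j
  | .done j => j
  | _ => 0

def dv : RS → ℕ
  | .el _ D _ => D
  | _ => 0

def mrk : RS → ℕ
  | .el _ _ m => m
  | _ => 0

def fv : RS → ℕ
  | .el b _ _ => if b = true then 0 else 1
  | _ => 0

/-- Election-phase prisoner. -/
def okE : PS → Prop
  | .alive e _ => 1 ≤ e
  | .dead _ => True
  | _ => False

/-- Bystander in the second phase. -/
def okD (r : ℕ) : PS → Prop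
  | .dead c => c ≤ r
  | .done _ => True
  | _ => False

def goodP (n r : ℕ) : PS → Prop
  | .alive e c => e ≤ n ∧ c ≤ r
  | .dead c => c ≤ r
  | .held _ k => k < r
  | .done _ => True

def goodR (n : ℕ) : RS → Prop
  | .el _ D m => D ≤ n ∧ m ≤ 2 * n + 1
  | .ph h _ => h ≤ n

def isEl : RS → Prop
  | .el _ _ _ => True
  | _ => False

structure Inv1 {n r : ℕ} (P : Fin n → PS) (S : Fin r → RS) : Prop where
  pa : ∀ p, okE (P p)
  sa : ∀ x, isEl (S x)
  E : ∑ p, ev (P p) + ∑ x, dv (S x) = n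
  R : ∑ p, cv (P p) + ∑ x, fv (S x) = r
  M : ∀ x, ∃ p, mrk (S x) ≤ lv n r (P p) ∧ 1 ≤ lv n r (P p)

def Held {n r : ℕ} (P : Fin n → PS) (S : Fin r → RS) : Prop :=
  ∃ p J k, P p = .held J k ∧ k < r ∧ 1 ≤ J ∧ J ≤ n ∧ (∀ x, x ≠ p → okD r (P x)) ∧
    ∑ x, dn (P x) + 1 = J ∧
    (∀ x, ht (S x) ≤ J ∧ J ≤ ht (S x) + 1 ∧ tk (S x) = false ∧ goodR n (S x)) ∧
    ∑ x, ht (S x) + r = J * r + k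

def Drop {n r : ℕ} (P : Fin n → PS) (S : Fin r → RS) : Prop :=
  ∃ J y, 1 ≤ J ∧ J ≤ n ∧ (∀ x, okD r (P x)) ∧ ∑ x, dn (P x) = J ∧
    ∀ x, S x = .ph J (decide (x = y))

def Inv {n r : ℕ} (P : Fin n → PS) (S : Fin r → RS) : Prop :=
  Inv1 P S ∨ Held P S ∨ Drop P S

theorem ev_s : (∀ e c, ev (.alive e c) = e) ∧ (∀ c, ev (.dead c) = 0) ∧
    (∀ j k, ev (.held j k) = 0) ∧ (∀ j, ev (.done j) = 0) := by simp [ev]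

theorem cv_s : (∀ e c, cv (.alive e c) = c) ∧ (∀ c, cv (.dead c) = c) ∧
    (∀ j k, cv (.held j k) = 0) ∧ (∀ j, cv (.done j) = 0) := by simp [cv]

theorem lv_s (n r : ℕ) : (∀ e c, lv n r (.alive e c) = lev n r e c) ∧
    (∀ c, lv n r (.dead c) = 0) ∧
    (∀ j k, lv n r (.held j k) = 0) ∧ (∀ j, lv n r (.done j) = 0) := by simp [lv]

theorem dn_s : (∀ e c, dn (.alive e c) = 0) ∧ (∀ c, dn (.dead c) = 0) ∧
    (∀ j k, dn (.held j k) = 0) ∧ (∀ j, dn (.done j) = 1) := by simp [dn]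

theorem rk_s : (∀ e c, rk (.alive e c) = 0) ∧ (∀ c, rk (.dead c) = 0) ∧
    (∀ j k, rk (.held j k) = j) ∧ (∀ j, rk (.done j) = j) := by simp [rk]

theorem okE_s : (∀ e c, okE (.alive e c) ↔ 1 ≤ e) ∧ (∀ c, okE (.dead c) ↔ True) ∧
    (∀ j k, okE (.held j k) ↔ False) ∧ (∀ j, okE (.done j) ↔ False) := by simp [okE]

theorem okD_s (r : ℕ) : (∀ e c, okD r (.alive e c) ↔ False) ∧ (∀ c, okD r (.dead c) ↔ c ≤ r) ∧
    (∀ j k, okD r (.held j k) ↔ False) ∧ (∀ j, okD r (.done j) ↔ True) := by simp [okD]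

theorem goodP_s (n r : ℕ) : (∀ e c, goodP n r (.alive e c) ↔ e ≤ n ∧ c ≤ r) ∧
    (∀ c, goodP n r (.dead c) ↔ c ≤ r) ∧
    (∀ j k, goodP n r (.held j k) ↔ k < r) ∧ (∀ j, goodP n r (.done j) ↔ True) := by
  simp [goodP]

theorem dv_s : (∀ b D m, dv (.el b D m) = D) ∧ (∀ h k, dv (.ph h k) = 0) := by simp [dv]

theorem mrk_s : (∀ b D m, mrk (.el b D m) = m) ∧ (∀ h k, mrk (.ph h k) = 0) := by simp [mrk]

theorem fv_s : (∀ b D m, fv (.el b D m) = if b = true then 0 else 1) ∧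
    (∀ h k, fv (.ph h k) = 0) := by simp [fv]

theorem ht_s : (∀ b D m, ht (.el b D m) = 0) ∧ (∀ h k, ht (.ph h k) = h) := by simp [ht]

theorem tk_s : (∀ b D m, tk (.el b D m) = false) ∧ (∀ h k, tk (.ph h k) = k) := by simp [tk]

theorem goodR_s (n : ℕ) : (∀ b D m, goodR n (.el b D m) ↔ D ≤ n ∧ m ≤ 2 * n + 1) ∧
    (∀ h k, goodR n (.ph h k) ↔ h ≤ n) := by simp [goodR]

theorem isEl_s : (∀ b D m, isEl (.el b D m) ↔ True) ∧ (∀ h k, isEl (.ph h k) ↔ False) := by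
  simp [isEl]

theorem sum_upd {m : ℕ} {α : Type} (f : α → ℕ) (g : Fin m → α) (p : Fin m) (v : α) :
    ∑ x, f (Function.update g p v x) + f (g p) = ∑ x, f (g x) + f v := by
  rw [← Finset.add_sum_erase univ _ (mem_univ p),
    ← Finset.add_sum_erase univ (fun x => f (g x)) (mem_univ p)]
  have : ∑ x ∈ univ.erase p, f (Function.update g p v x) = ∑ x ∈ univ.erase p, f (g x) := by
    apply Finset.sum_congr rfl
    intro x hx
    rw [Function.update_of_ne (Finset.ne_of_mem_erase hx)]
  rw [this]
  simp
  omega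

theorem le_sum {m : ℕ} (f : Fin m → ℕ) (p : Fin m) : f p ≤ ∑ x, f x :=
  Finset.single_le_sum (f := f) (fun _ _ => Nat.zero_le _) (mem_univ p)

theorem le_sum2 {m : ℕ} (f : Fin m → ℕ) (p x : Fin m) (h : x ≠ p) :
    f x + f p ≤ ∑ y, f y := by
  rw [← Finset.add_sum_erase univ f (mem_univ p)]
  have := Finset.single_le_sum (f := f) (s := univ.erase p) (fun _ _ => Nat.zero_le _)
    (Finset.mem_erase.2 ⟨h, mem_univ x⟩)
  omega

theorem lev_le (n r e c : ℕ) : lev n r e c ≤ 2 * e + 1 := by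
  unfold lev; split_ifs <;> omega

theorem le_lev (n r e c : ℕ) : 2 * e ≤ lev n r e c := by
  unfold lev; split_ifs <;> omega

theorem lev_mono (n r e c e' c' : ℕ) (he : e ≤ e') (hc : c ≤ c') :
    lev n r e c ≤ lev n r e' c' := by
  rcases Nat.eq_or_lt_of_le he with rfl | h
  · unfold lev
    have := Nat.mul_le_mul_right n hc
    split_ifs <;> omega
  · have := lev_le n r e c
    have := le_lev n r e' c'
    omega

theorem Inv1.good {n r : ℕ} {P : Fin n → PS} {S : Fin r → RS} (h : Inv1 P S) :
    (∀ p, goodP n r (P p)) ∧ ∀ x, goodR n (S x) := by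
  have hE := h.E
  have hR := h.R
  have hp : ∀ p, goodP n r (P p) := by
    intro p
    have h1 := le_sum (fun p => ev (P p)) p
    have h2 := le_sum (fun p => cv (P p)) p
    have h3 := h.pa p
    revert h1 h2 h3
    cases P p <;> simp only [ev_s, cv_s, goodP_s, okE_s, false_imp_iff, imp_true_iff] <;> intros
    · constructor <;> omega
    · omega
  refine ⟨hp, fun x => ?_⟩
  have h1 := le_sum (fun x => dv (S x)) x
  obtain ⟨p, h2, -⟩ := h.M x
  have h3 := h.sa x
  have h4 := hp p
  revert h1 h2 h3
  cases S x <;> simp only [dv_s, mrk_s, goodR_s, isEl_s, false_imp_iff, imp_true_iff]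
  intro h1 h2 _
  refine ⟨by omega, ?_⟩
  revert h2 h4
  cases P p <;> simp only [goodP_s, lv_s] <;> intros
  · rename_i e c a b
    have := lev_le n r e c
    omega
  all_goals omega

theorem Inv.good {n r : ℕ} {P : Fin n → PS} {S : Fin r → RS} (h : Inv P S) :
    (∀ p, goodP n r (P p)) ∧ ∀ x, goodR n (S x) := by
  rcases h with h | h | h
  · exact h.good
  · obtain ⟨p, J, k, h1, h2, h3, h4, h5, h6, h7, h8⟩ := h
    refine ⟨fun x => ?_, fun x => (h7 x).2.2.2⟩
    by_cases hx : x = p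
    · subst hx; rw [h1]; exact h2
    · have := h5 x hx
      revert this
      cases P x <;> simp [okD_s, goodP_s]
  · obtain ⟨J, y, h1, h2, h3, h4, h5⟩ := h
    refine ⟨fun x => ?_, fun x => ?_⟩
    · have := h3 x
      revert this
      cases P x <;> simp [okD_s, goodP_s]
    · rw [h5 x]; exact h2

theorem inv_start {n r : ℕ} (hn : 1 ≤ n) :
    Inv (fun _ : Fin n => PS.alive 1 0) (fun _ : Fin r => RS.el false 0 0) := by
  left
  refine ⟨fun _ => le_refl 1, fun _ => trivial, by simp [ev_s, dv_s], by simp [cv_s, fv_s], ?_⟩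
  intro x
  refine ⟨⟨0, hn⟩, Nat.zero_le _, ?_⟩
  have := le_lev n r 1 0
  simp only [lv_s]; omega

theorem upd_same {m : ℕ} {α : Type} {g : Fin m → α} {p : Fin m} {v : α} (h : g p = v) :
    Function.update g p v = g := by
  rw [← h]; exact Function.update_eq_self p g

theorem upd_all {m : ℕ} {α : Type} {Q : α → Prop} {g : Fin m → α} {p : Fin m} {v : α}
    (h : ∀ x, x ≠ p → Q (g x)) (hv : Q v) : ∀ x, Q (Function.update g p v x) := by
  intro x
  by_cases hx : x = p
  · subst hx; simpa using hv
  · simpa [Function.update_of_ne hx] using h x hx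

theorem M_alive {n r : ℕ} {P : Fin n → PS} {S : Fin r → RS} (h : Inv1 P S) (p : Fin n)
    (y : Fin r) {e c e' c' : ℕ} (hP : P p = .alive e c) (he : e ≤ e') (hc : c ≤ c')
    (h1 : 1 ≤ e') (b : Bool) (D : ℕ) :
    ∀ x, ∃ q, mrk (Function.update S y (.el b D (lev n r e' c')) x) ≤
      lv n r (Function.update P p (.alive e' c') q) ∧
      1 ≤ lv n r (Function.update P p (.alive e' c') q) := by
  have h0 := le_lev n r e' c'
  have hm := lev_mono n r e c e' c' he hc
  intro x
  by_cases hx : x = y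
  · subst hx
    refine ⟨p, ?_⟩
    simp only [Function.update_self, mrk_s, lv_s]
    omega
  · rw [Function.update_of_ne hx]
    obtain ⟨q, hq1, hq2⟩ := h.M x
    by_cases hq : q = p
    · subst hq
      refine ⟨q, ?_⟩
      rw [hP] at hq1
      simp only [Function.update_self, lv_s] at *
      omega
    · refine ⟨q, ?_⟩
      rw [Function.update_of_ne hq]
      exact ⟨hq1, hq2⟩

theorem inv1_step {n r : ℕ} (hr : n < r) {P : Fin n → PS} {S : Fin r → RS}
    (h : Inv1 P S) (p : Fin n) (y : Fin r) (P' : PS) (S' : RS)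
    (htr : Tr n r (P p) (S y) P' S') :
    Inv (Function.update P p P') (Function.update S y S') := by
  have hE := h.E
  have hR := h.R
  have hpa := h.pa p
  have hsa := h.sa y
  have e1 := sum_upd ev P p P'
  have e2 := sum_upd cv P p P'
  have e3 := sum_upd dv S y S'
  have e4 := sum_upd fv S y S'
  generalize hP : P p = Pp at *
  generalize hS : S y = Sy at *
  cases htr with
  | die e c b D m hl =>
    left
    simp only [ev_s, cv_s, dv_s, fv_s] at e1 e2 e3 e4
    refine ⟨upd_all (fun x _ => h.pa x) trivial, upd_all (fun x _ => h.sa x) trivial,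
      by omega, by omega, ?_⟩
    obtain ⟨q, hq1, hq2⟩ := h.M y
    have hqp : q ≠ p := by
      rintro rfl
      rw [hS, hP] at hq1
      simp only [mrk_s, lv_s] at hq1
      omega
    rw [hS] at hq1
    simp only [mrk_s] at hq1
    intro x
    by_cases hx : x = y
    · subst hx
      refine ⟨q, ?_⟩
      rw [Function.update_of_ne hqp]
      simp only [Function.update_self, mrk_s]
      exact ⟨hq1, hq2⟩
    · rw [Function.update_of_ne hx]
      obtain ⟨q', h1, h2⟩ := h.M x
      by_cases hq' : q' = p
      · subst hq'
        refine ⟨q, ?_⟩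
        rw [Function.update_of_ne hqp]
        rw [hP] at h1
        simp only [lv_s] at h1
        omega
      · refine ⟨q', ?_⟩
        rw [Function.update_of_ne hq']
        exact ⟨h1, h2⟩
  | lead e c b D m hl hle =>
    right; left
    have hgood := h.good
    refine ⟨p, 1, 0, by simp, by omega, le_refl 1, ?_, ?_, ?_, ?_, ?_⟩
    · have := p.2; omega
    · intro x hx
      rw [Function.update_of_ne hx]
      have g1 := le_sum2 (fun x => ev (P x)) p x hx
      have g2 := le_sum (fun x => dv (S x)) y
      have g3 := h.pa x
      have g4 := hgood.1 x
      simp only [hP, hS, ev_s, dv_s] at g1 g2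
      revert g1 g3 g4
      cases P x <;> simp only [okE_s, goodP_s, okD_s, ev_s, false_imp_iff, imp_true_iff] <;> intros
      · omega
      · assumption
    · have : ∑ x, dn (Function.update P p (PS.held 1 0) x) = 0 := by
        apply Finset.sum_eq_zero
        intro x _
        refine upd_all (Q := fun z => dn z = 0) (fun x _ => ?_) rfl x
        have g3 := h.pa x
        revert g3
        cases P x <;> simp [okE_s, dn_s]
      omega
    · refine upd_all (Q := fun z => ht z ≤ 1 ∧ 1 ≤ ht z + 1 ∧
        tk z = false ∧ goodR n z) (fun x _ => ?_) (by simp [ht_s, tk_s, goodR_s])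
      have g3 := h.sa x
      have g4 := hgood.2 x
      revert g3 g4
      cases S x <;> simp [isEl_s, ht_s, tk_s]
    · have : ∑ x, ht (Function.update S y (RS.el b 0 0) x) = 0 := by
        apply Finset.sum_eq_zero
        intro x _
        refine upd_all (Q := fun z => ht z = 0) (fun x _ => ?_) rfl x
        have g3 := h.sa x
        revert g3
        cases S x <;> simp [isEl_s, ht_s]
      omega
  | absR e c D m hl hlt hc =>
    left
    simp only [okE_s] at hpa
    simp [ev_s, cv_s, dv_s, fv_s] at e1 e2 e3 e4
    exact ⟨upd_all (fun x _ => h.pa x) (by simp only [okE_s]; omega),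
      upd_all (fun x _ => h.sa x) trivial,
      by omega, by omega, M_alive h p y hP (by omega) (by omega) (by omega) _ _⟩
  | absD e c b D m hl hlt hc =>
    left
    simp only [okE_s] at hpa
    simp only [ev_s, cv_s, dv_s, fv_s] at e1 e2 e3 e4
    exact ⟨upd_all (fun x _ => h.pa x) (by simp only [okE_s]; omega),
      upd_all (fun x _ => h.sa x) trivial,
      by omega, by omega, M_alive h p y hP (by omega) (by omega) (by omega) _ _⟩
  | rel c D m hc =>
    left
    simp [ev_s, cv_s, dv_s, fv_s] at e1 e2 e3 e4
    refine ⟨upd_all (fun x _ => h.pa x) trivial,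
      upd_all (fun x _ => h.sa x) trivial, by omega, by omega, ?_⟩
    intro x
    obtain ⟨q, hq1, hq2⟩ := h.M x
    have hqp : q ≠ p := by
      rintro rfl
      rw [hP] at hq2
      simp [lv_s] at hq2
    refine ⟨q, ?_⟩
    rw [Function.update_of_ne hqp]
    refine ⟨?_, hq2⟩
    by_cases hx : x = y
    · subst hx
      rw [hS] at hq1
      simpa [mrk] using hq1
    · rwa [Function.update_of_ne hx]
  | deadEl c b D m hc =>
    left
    rw [upd_same hP, upd_same hS]; exact h
  | alivePh => exact hsa.elim
  | take => exact hsa.elim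
  | deadPh => exact hsa.elim
  | conv => exact hpa.elim
  | fin => exact hpa.elim
  | heldNo => exact hpa.elim
  | doneNo => exact hpa.elim

theorem all_eq_of_sum {m : ℕ} (f : Fin m → ℕ) (J : ℕ) (h : ∀ x, f x ≤ J)
    (hs : ∑ x, f x = J * m) : ∀ x, f x = J := by
  have : ∑ x, f x = ∑ _x : Fin m, J := by simp [hs, Nat.mul_comm]
  intro x
  exact (Finset.sum_eq_sum_iff_of_le (fun i _ => h i)).1 this x (mem_univ x)

theorem held_step {n r : ℕ} {P : Fin n → PS} {S : Fin r → RS}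
    (h : Held P S) (p : Fin n) (y : Fin r) (P' : PS) (S' : RS)
    (htr : Tr n r (P p) (S y) P' S') :
    Inv (Function.update P p P') (Function.update S y S') := by
  right
  obtain ⟨p0, J, k, h1, h2, h3, h4, h5, h6, h7, h8⟩ := h
  have e1 := sum_upd dn P p P'
  have e3 := sum_upd ht S y S'
  have h7y := h7 y
  by_cases hp : p = p0
  · subst hp
    generalize hS : S y = Sy at *
    rw [h1] at htr e1
    cases htr with
    | conv _ _ _ hj hk =>
      left
      simp only [dn_s] at e1
      have e5 : ht (RS.ph J false) = J := rfl
      refine ⟨p, J, k + 1, by simp, hk, h3, h4, ?_, by omega, ?_, by omega⟩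
      · intro x hx
        rw [Function.update_of_ne hx]; exact h5 x hx
      · exact upd_all (Q := fun z => ht z ≤ J ∧ J ≤ ht z + 1 ∧ tk z = false ∧ goodR n z)
          (fun x _ => h7 x) (by simp [ht_s, tk_s, goodR_s, h4])
    | fin _ _ _ hj hk =>
      right
      simp only [dn_s] at e1
      have e5 : ht (RS.ph J true) = J := rfl
      refine ⟨J, y, h3, h4, upd_all h5 trivial, by omega, ?_⟩
      have hle : ∀ x, ht (Function.update S y (RS.ph J true) x) ≤ J :=
        upd_all (Q := fun z => ht z ≤ J) (fun x _ => (h7 x).1) (le_refl J)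
      have hall := all_eq_of_sum _ J hle (by omega)
      intro x
      by_cases hx : x = y
      · subst hx; simp
      · have hx1 := hall x
        have hx2 := (h7 x).2.2.1
        rw [Function.update_of_ne hx] at hx1 ⊢
        revert hx1 hx2
        cases S x <;> simp only [ht_s, tk_s]
        · omega
        · rintro rfl rfl; simp [hx]
    | heldNo _ _ _ hj =>
      left
      rw [upd_same h1, upd_same hS]
      exact ⟨p, J, k, h1, h2, h3, h4, h5, h6, h7, h8⟩
  · have h5p := h5 p hp
    generalize hP : P p = Pp at *
    generalize hS : S y = Sy at *
    have same : Held P S := ⟨p0, J, k, h1, h2, h3, h4, h5, h6, h7, h8⟩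
    cases htr with
    | rel c D m hc =>
      left
      simp only [dn_s, ht_s] at e1 e3
      refine ⟨p0, J, k, ?_, h2, h3, h4, ?_, by omega, ?_, by omega⟩
      · rw [Function.update_of_ne (Ne.symm hp)]; exact h1
      · intro x hx
        by_cases hxp : x = p
        · subst hxp
          simp only [Function.update_self, okD_s] at h5p ⊢
          omega
        · rw [Function.update_of_ne hxp]; exact h5 x hx
      · exact upd_all (Q := fun z => ht z ≤ J ∧ J ≤ ht z + 1 ∧ tk z = false ∧ goodR n z)
          (fun x _ => h7 x) h7y
    | deadEl => left; rw [upd_same hP, upd_same hS]; exact same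
    | deadPh => left; rw [upd_same hP, upd_same hS]; exact same
    | doneNo => left; rw [upd_same hP, upd_same hS]; exact same
    | take => simp [tk_s] at h7y
    | die => exact h5p.elim
    | lead => exact h5p.elim
    | absR => exact h5p.elim
    | absD => exact h5p.elim
    | alivePh => exact h5p.elim
    | conv => exact h5p.elim
    | fin => exact h5p.elim
    | heldNo => exact h5p.elim

theorem drop_step {n r : ℕ} (hr : 2 ≤ r) {P : Fin n → PS} {S : Fin r → RS}
    (h : Drop P S) (p : Fin n) (y : Fin r) (P' : PS) (S' : RS)
    (htr : Tr n r (P p) (S y) P' S') :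
    Inv (Function.update P p P') (Function.update S y S') := by
  right
  have same := h
  obtain ⟨J, z, h1, h2, h3, h4, h5⟩ := h
  have e1 := sum_upd dn P p P'
  have e3 := sum_upd ht S y S'
  have hsum : ∑ x, ht (S x) = r * J := by simp [h5, ht_s]
  have h3p := h3 p
  have h5y := h5 y
  generalize hP : P p = Pp at *
  generalize hS : S y = Sy at *
  cases htr with
  | take c h hlt =>
    left
    simp only [RS.ph.injEq] at h5y
    obtain ⟨rfl, hz⟩ := h5y
    have hz : y = z := by simpa using hz.symm
    subst hz
    simp only [dn_s, ht_s] at e1 e3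
    refine ⟨p, h + 1, 1, by simp, by omega, by omega, by omega, ?_, by omega, ?_, ?_⟩
    · intro x hx
      rw [Function.update_of_ne hx]; exact h3 x
    · refine upd_all (Q := fun z => ht z ≤ h + 1 ∧ h + 1 ≤ ht z + 1 ∧ tk z = false ∧ goodR n z)
          (fun x hx => ?_) (by
            simp only [ht_s, tk_s, goodR_s]
            refine ⟨?_, ?_, trivial, ?_⟩ <;> omega)
      rw [h5 x]
      simp only [ht_s, tk_s, goodR_s, hx, decide_false]
      refine ⟨?_, ?_, trivial, ?_⟩ <;> omega
    · rw [hsum] at e3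
      rw [Nat.add_mul, Nat.mul_comm h r]
      omega
  | deadPh => right; rw [upd_same hP, upd_same hS]; exact same
  | doneNo => right; rw [upd_same hP, upd_same hS]; exact same
  | rel => simp at h5y
  | deadEl => simp at h5y
  | die => exact h3p.elim
  | lead => exact h3p.elim
  | absR => exact h3p.elim
  | absD => exact h3p.elim
  | alivePh => exact h3p.elim
  | conv => exact h3p.elim
  | fin => exact h3p.elim
  | heldNo => exact h3p.elim

theorem inv_step {n r : ℕ} (hn : 1 ≤ n) (hr : n < r) {P : Fin n → PS} {S : Fin r → RS}
    (h : Inv P S) (p : Fin n) (y : Fin r) (P' : PS) (S' : RS)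
    (htr : Tr n r (P p) (S y) P' S') :
    Inv (Function.update P p P') (Function.update S y S') := by
  rcases h with h | h | h
  · exact inv1_step hr h p y P' S' htr
  · exact held_step h p y P' S' htr
  · exact drop_step (by omega) h p y P' S' htr

/-- Potential of a prisoner. -/
def phi (n r : ℕ) : PS → ℕ
  | .alive e c => e + c
  | .dead c => n + r + 1 + (r - c)
  | .held _ k => n + 2 * r + 2 + k
  | .done _ => n + 3 * r + 3

theorem phi_le {n r : ℕ} {P : PS} (h : goodP n r P) : phi n r P ≤ n + 3 * r + 3 := by
  cases P <;> simp only [goodP_s, phi] at * <;> omega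

theorem phi_step {n r : ℕ} {P P' : PS} {S S' : RS} (h : goodP n r P)
    (ht : Tr n r P S P' S') : P' = P ∨ phi n r P < phi n r P' := by
  cases ht with
  | absD e c b D m =>
    rcases Nat.eq_zero_or_pos D with rfl | hD
    · left; rfl
    · right; simp only [phi]; omega
  | alivePh => left; rfl
  | deadEl => left; rfl
  | deadPh => left; rfl
  | heldNo => left; rfl
  | doneNo => left; rfl
  | _ => right; simp only [goodP_s, phi] at *; omega

theorem stab_alive {n r e c D m : ℕ} {b : Bool} {P' : PS} {S' : RS}
    (ht : Tr n r (.alive e c) (.el b D m) P' S') (h : P' = .alive e c) :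
    D = 0 ∧ m ≤ lev n r e c ∧ e < n ∧ (b = true ∨ r * e ≤ c * n) ∧
      S' = .el b 0 (lev n r e c) := by
  cases ht with
  | die => simp at h
  | lead => simp at h
  | absR => simp at h
  | absD _ _ _ _ _ h1 h2 h3 =>
    simp at h
    subst h
    exact ⟨rfl, h1, h2, h3, rfl⟩

theorem stab_dead_el {n r c D m : ℕ} {b : Bool} {P' : PS} {S' : RS}
    (ht : Tr n r (.dead c) (.el b D m) P' S') (h : P' = .dead c) :
    (b = false ∨ c = 0) ∧ S' = .el b D m := by
  cases ht with
  | rel _ _ _ hc =>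
    simp at h
    omega
  | deadEl _ _ _ _ h1 => exact ⟨h1, rfl⟩

theorem stab_dead_ph {n r c h : ℕ} {k : Bool} {P' : PS} {S' : RS}
    (ht : Tr n r (.dead c) (.ph h k) P' S') (hP : P' = .dead c) :
    (k = false ∨ n ≤ h) ∧ S' = .ph h k := by
  cases ht with
  | take => simp at hP
  | deadPh _ _ _ h1 => exact ⟨h1, rfl⟩

theorem stab_held {n r j k : ℕ} {S : RS} {P' : PS} {S' : RS}
    (htr : Tr n r (.held j k) S P' S') (hP : P' = .held j k) :
    ht S + 1 ≠ j ∧ S' = S := by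
  cases htr with
  | conv => simp at hP
  | fin => simp at hP
  | heldNo _ _ _ h1 => exact ⟨h1, rfl⟩

theorem stab_noalive {n r : ℕ} {P : PS} {S : RS} {P' : PS} {S' : RS}
    (htr : Tr n r P S P' S') (hP : P' = P) (h : ∀ e c, P ≠ .alive e c) : S' = S := by
  cases P with
  | alive e c => exact absurd rfl (h e c)
  | dead c =>
    cases S with
    | el b D m => exact (stab_dead_el htr hP).2
    | ph h k => exact (stab_dead_ph htr hP).2
  | held j k => exact (stab_held htr hP).2
  | done j => cases htr; rfl

section Stable

variable {n r : ℕ} {P : Fin n → PS} {S : ℕ → Fin r → RS} {sched : ℕ → Fin n × Fin r}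

theorem const_of_noalive
    (hst : ∀ t, ∃ P' S', Tr n r (P (sched t).1) (S t (sched t).2) P' S' ∧
      P' = P (sched t).1 ∧ S (t + 1) = Function.update (S t) (sched t).2 S')
    (hna : ∀ p e c, P p ≠ .alive e c) : ∀ t, S t = S 0 := by
  intro t
  induction t with
  | zero => rfl
  | succ t ih =>
    obtain ⟨P', S', h1, h2, h3⟩ := hst t
    have := stab_noalive h1 h2 (hna _)
    rw [h3, upd_same this.symm, ih]

theorem visit
    (hst : ∀ t, ∃ P' S', Tr n r (P (sched t).1) (S t (sched t).2) P' S' ∧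
      P' = P (sched t).1 ∧ S (t + 1) = Function.update (S t) (sched t).2 S')
    (hfair : ∀ p y T, ∃ t, T ≤ t ∧ sched t = (p, y)) (p : Fin n) (y : Fin r) (T : ℕ) :
    ∃ t, T ≤ t ∧ ∃ P' S', Tr n r (P p) (S t y) P' S' ∧ P' = P p ∧ S (t + 1) y = S' := by
  obtain ⟨t, ht, h⟩ := hfair p y T
  obtain ⟨P', S', h1, h2, h3⟩ := hst t
  rw [h] at h1 h2 h3
  exact ⟨t, ht, P', S', h1, h2, by rw [h3]; simp⟩

theorem stable_held (hn : 1 ≤ n)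
    (hst : ∀ t, ∃ P' S', Tr n r (P (sched t).1) (S t (sched t).2) P' S' ∧
      P' = P (sched t).1 ∧ S (t + 1) = Function.update (S t) (sched t).2 S')
    (hfair : ∀ p y T, ∃ t, T ≤ t ∧ sched t = (p, y)) (h : Held P (S 0)) : False := by
  obtain ⟨p, J, k, h1, h2, h3, h4, h5, h6, h7, h8⟩ := h
  have hc := const_of_noalive hst (by
    intro q e c hq
    by_cases hqp : q = p
    · subst hqp; rw [h1] at hq; simp at hq
    · have := h5 q hqp
      rw [hq] at this
      exact this)
  have : ∃ y, ht (S 0 y) + 1 = J := by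
    by_contra hcon
    push Not at hcon
    have : ∀ y, ht (S 0 y) = J := by
      intro y
      have := hcon y
      have := h7 y
      omega
    simp only [this, sum_const, card_univ, Fintype.card_fin, smul_eq_mul] at h8
    rw [Nat.mul_comm] at h8
    omega
  obtain ⟨y, hy⟩ := this
  obtain ⟨t, -, P', S', g1, g2, -⟩ := visit hst hfair p y 0
  rw [hc t] at g1
  rw [h1] at g1 g2
  exact (stab_held g1 g2).1 hy

theorem stable_drop (hn : 1 ≤ n)
    (hst : ∀ t, ∃ P' S', Tr n r (P (sched t).1) (S t (sched t).2) P' S' ∧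
      P' = P (sched t).1 ∧ S (t + 1) = Function.update (S t) (sched t).2 S')
    (hfair : ∀ p y T, ∃ t, T ≤ t ∧ sched t = (p, y)) (h : Drop P (S 0)) :
    ∃ t, S t (sched t).2 = .ph n true := by
  obtain ⟨J, y, h1, h2, h3, h4, h5⟩ := h
  have hc := const_of_noalive hst (by
    intro q e c hq
    have := h3 q
    rw [hq] at this
    exact this)
  have hy : S 0 y = .ph J true := by simp [h5]
  rcases Nat.eq_or_lt_of_le h2 with rfl | hlt
  · obtain ⟨t, -, ht⟩ := hfair ⟨0, hn⟩ y 0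
    exact ⟨t, by rw [ht, hc t]; exact hy⟩
  · exfalso
    have : ∃ p, dn (P p) = 0 := by
      by_contra hcon
      push Not at hcon
      have : ∑ x : Fin n, 1 ≤ ∑ x, dn (P x) :=
        Finset.sum_le_sum (fun x _ => Nat.one_le_iff_ne_zero.2 (hcon x))
      simp at this
      omega
    obtain ⟨p, hp⟩ := this
    obtain ⟨t, -, P', S', g1, g2, -⟩ := visit hst hfair p y 0
    rw [hc t, hy] at g1
    have h3p := h3 p
    generalize P p = Q at *
    cases Q with
    | alive => exact h3p
    | held => exact h3p
    | done => simp [dn_s] at hp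
    | dead c =>
      have := (stab_dead_ph g1 g2).1
      simp at this
      omega

theorem stable_inv1 (hn : 1 ≤ n) (hr : n < r) (hg : Nat.gcd n r = 1)
    (hst : ∀ t, ∃ P' S', Tr n r (P (sched t).1) (S t (sched t).2) P' S' ∧
      P' = P (sched t).1 ∧ S (t + 1) = Function.update (S t) (sched t).2 S')
    (hfair : ∀ p y T, ∃ t, T ≤ t ∧ sched t = (p, y)) (hI : ∀ t, Inv1 P (S t)) : False := by
  -- rooms barely change
  have hK : ∀ t y, fv (S (t + 1) y) = fv (S t y) ∧ dv (S (t + 1) y) = dv (S t y) ∧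
      mrk (S t y) ≤ mrk (S (t + 1) y) := by
    intro t y
    obtain ⟨P', S', h1, h2, h3⟩ := hst t
    by_cases hy : y = (sched t).2
    · rw [h3, hy, Function.update_self]
      have hsa := (hI t).sa (sched t).2
      have hpa := (hI t).pa (sched t).1
      generalize P (sched t).1 = Q at *
      generalize S t (sched t).2 = R at *
      cases R with
      | ph => exact hsa.elim
      | el b D m =>
        cases Q with
        | alive e c =>
          obtain ⟨rfl, g1, g2, g3, rfl⟩ := stab_alive h1 h2
          simp only [fv_s, dv_s, mrk_s]
          exact ⟨trivial, trivial, g1⟩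
        | dead c =>
          rw [(stab_dead_el h1 h2).2]
          exact ⟨rfl, rfl, le_refl _⟩
        | held => exact hpa.elim
        | done => exact hpa.elim
    · rw [h3, Function.update_of_ne hy]
      exact ⟨rfl, rfl, le_refl _⟩
  have hfv : ∀ t y, fv (S t y) = fv (S 0 y) := by
    intro t y
    induction t with
    | zero => rfl
    | succ t ih => rw [(hK t y).1, ih]
  have hdv : ∀ t y, dv (S t y) = dv (S 0 y) := by
    intro t y
    induction t with
    | zero => rfl
    | succ t ih => rw [(hK t y).2.1, ih]
  have hmk : ∀ y, Monotone (fun t => mrk (S t y)) := fun y =>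
    monotone_nat_of_le_succ (fun t => (hK t y).2.2)
  have h0 := hI 0
  have hE := h0.E
  have hR := h0.R
  -- visits of alive prisoners
  have halive : ∀ p e c, P p = .alive e c → ∀ y T, ∃ t, T ≤ t ∧
      dv (S 0 y) = 0 ∧ mrk (S t y) ≤ lev n r e c ∧ e < n ∧
      (fv (S 0 y) = 0 ∨ r * e ≤ c * n) ∧ mrk (S (t + 1) y) = lev n r e c := by
    intro p e c hp y T
    obtain ⟨t, hT, P', S', g1, g2, g3⟩ := visit hst hfair p y T
    refine ⟨t, hT, ?_⟩
    rw [g3, ← hdv t y, ← hfv t y]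
    have hsa := (hI t).sa y
    rw [hp] at g1 g2
    generalize S t y = R at *
    cases R with
    | ph => exact hsa.elim
    | el b D m =>
      obtain ⟨rfl, k1, k2, k3, rfl⟩ := stab_alive g1 g2
      simp only [dv_s, mrk_s, fv_s]
      refine ⟨trivial, k1, k2, ?_, trivial⟩
      rcases k3 with rfl | k3
      · left; rfl
      · right; exact k3
  have y0 : Fin r := ⟨0, by omega⟩
  obtain ⟨p0, -, hp0⟩ := h0.M y0
  have : ∃ e c, P p0 = .alive e c := by
    revert hp0
    cases P p0 <;> simp [lv_s]
  obtain ⟨e0, c0, hP0⟩ := this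
  have he0 : 1 ≤ e0 := by
    have := h0.pa p0
    rw [hP0] at this
    exact this
  have hD0 : ∀ y, dv (S 0 y) = 0 := by
    intro y
    obtain ⟨t, -, h, -⟩ := halive p0 e0 c0 hP0 y 0
    exact h
  have hEn : ∑ p, ev (P p) = n := by
    simpa [hD0] using hE
  have hdead : ∀ p c, P p = .dead c → c = 0 := by
    intro p c hp
    by_contra hc
    have h1 := le_sum (fun x => cv (P x)) p
    simp only [hp, cv_s] at h1
    have : ∃ y, fv (S 0 y) = 0 := by
      by_contra hcon
      push Not at hcon
      have : ∑ x : Fin r, 1 ≤ ∑ x, fv (S 0 x) :=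
        Finset.sum_le_sum (fun x _ => Nat.one_le_iff_ne_zero.2 (hcon x))
      simp at this
      omega
    obtain ⟨y, hy⟩ := this
    obtain ⟨t, -, P', S', g1, g2, -⟩ := visit hst hfair p y 0
    rw [← hfv t y] at hy
    have hsa := (hI t).sa y
    rw [hp] at g1 g2
    generalize S t y = R at *
    cases R with
    | ph => exact hsa.elim
    | el b D m =>
      have := (stab_dead_el g1 g2).1
      cases b
      · simp [fv_s] at hy
      · simp at this; omega
  have hlev : ∀ p e c q e' c', P p = .alive e c → P q = .alive e' c' →
      lev n r e c ≤ lev n r e' c' := by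
    intro p e c q e' c' hp hq
    obtain ⟨t, -, -, -, -, -, h1⟩ := halive p e c hp y0 0
    obtain ⟨t', ht', -, h2, -⟩ := halive q e' c' hq y0 (t + 1)
    have := hmk y0 ht'
    simp only at this
    omega
  have hrich : ∀ p e c, P p = .alive e c → (r * e ≤ c * n ↔ r * e0 ≤ c0 * n) := by
    intro p e c hp
    have h1 := hlev p e c p0 e0 c0 hp hP0
    have h2 := hlev p0 e0 c0 p e c hP0 hp
    unfold lev at h1 h2
    split_ifs at h1 h2 <;> omega
  have hn0 : e0 < n := by
    obtain ⟨t, -, -, -, h, -⟩ := halive p0 e0 c0 hP0 y0 0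
    exact h
  by_cases hr0 : r * e0 ≤ c0 * n
  · have hle : ∀ p ∈ univ, r * ev (P p) ≤ cv (P p) * n := by
      intro p _
      have h1 := h0.pa p
      have h2 := hrich p
      generalize P p = Q at *
      cases Q with
      | alive e c => exact (h2 e c rfl).2 hr0
      | dead c => simp [ev_s]
      | held => exact h1.elim
      | done => exact h1.elim
    have hs1 : ∑ p, r * ev (P p) = r * n := by rw [← Finset.mul_sum, hEn]
    have hs2 : ∑ p, cv (P p) * n ≤ r * n := by
      rw [← Finset.sum_mul]
      exact Nat.mul_le_mul_right n (by omega)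
    have hs3 := Finset.sum_le_sum hle
    have heq := (Finset.sum_eq_sum_iff_of_le hle).1 (by omega) p0 (mem_univ p0)
    rw [hP0] at heq
    simp only [ev_s, cv_s] at heq
    have hdvd : n ∣ r * e0 := ⟨c0, by rw [heq, Nat.mul_comm]⟩
    have hco : Nat.Coprime n r := hg
    have := Nat.le_of_dvd he0 (hco.dvd_of_dvd_mul_left hdvd)
    omega
  · have hle : ∀ p ∈ univ, cv (P p) * n ≤ r * ev (P p) := by
      intro p _
      have h1 := h0.pa p
      have h2 := hrich p
      have h3 := hdead p
      generalize P p = Q at *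
      cases Q with
      | alive e c =>
        have := h2 e c rfl
        simp only [cv_s, ev_s]
        by_contra hcon
        exact hr0 (this.1 (by omega))
      | dead c => simp [cv_s, h3 c rfl]
      | held => exact h1.elim
      | done => exact h1.elim
    have hs1 : ∑ p, r * ev (P p) = r * n := by rw [← Finset.mul_sum, hEn]
    have hs3 := Finset.sum_lt_sum hle ⟨p0, mem_univ p0, by
      rw [hP0]; simp only [cv_s, ev_s]; omega⟩
    rw [hs1, ← Finset.sum_mul] at hs3
    have hlt : ∑ p, cv (P p) < r := lt_of_mul_lt_mul_right hs3 (Nat.zero_le n)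
    have : ∃ y, fv (S 0 y) ≠ 0 := by
      by_contra hcon
      push Not at hcon
      simp only [hcon, sum_const_zero] at hR
      omega
    obtain ⟨y, hy⟩ := this
    obtain ⟨t, -, -, -, -, h, -⟩ := halive p0 e0 c0 hP0 y 0
    rcases h with h | h
    · exact hy h
    · exact hr0 h

theorem stable_live (hn : 1 ≤ n) (hr : n < r) (hg : Nat.gcd n r = 1)
    (hst : ∀ t, ∃ P' S', Tr n r (P (sched t).1) (S t (sched t).2) P' S' ∧
      P' = P (sched t).1 ∧ S (t + 1) = Function.update (S t) (sched t).2 S')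
    (hfair : ∀ p y T, ∃ t, T ≤ t ∧ sched t = (p, y)) (hI : ∀ t, Inv P (S t)) :
    ∃ t, S t (sched t).2 = .ph n true := by
  rcases hI 0 with h | h | h
  · exfalso
    refine stable_inv1 hn hr hg hst hfair (fun t => ?_)
    rcases hI t with g | g | g
    · exact g
    · obtain ⟨p, J, k, h1, -⟩ := g
      have := h.pa p
      rw [h1] at this
      exact this.elim
    · obtain ⟨J, y, h1, -, -, h2, -⟩ := g
      have : ∑ x, dn (P x) = 0 := by
        apply Finset.sum_eq_zero
        intro x _
        have := h.pa x
        revert this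
        cases P x <;> simp [okE_s, dn_s]
      omega
  · exact (stable_held hn hst hfair h).elim
  · exact stable_drop hn hst hfair h

end Stable

def cfg (n r : ℕ) (sched : ℕ → Fin n × Fin r) : ℕ → (Fin r → RS) × (Fin n → PS)
  | 0 => (fun _ => .el false 0 0, fun _ => .alive 1 0)
  | t + 1 =>
      let c := cfg n r sched t
      let o := step n r (c.2 (sched t).1) (c.1 (sched t).2)
      (Function.update c.1 (sched t).2 o.2, Function.update c.2 (sched t).1 o.1)

theorem cfg_inv {n r : ℕ} (hn : 1 ≤ n) (hr : n < r) (sched : ℕ → Fin n × Fin r) (t : ℕ) :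
    Inv (cfg n r sched t).2 (cfg n r sched t).1 := by
  induction t with
  | zero => exact inv_start hn
  | succ t ih => exact inv_step hn hr ih _ _ _ _ (step_spec n r _ _)

theorem bdd_stab (f : ℕ → ℕ) (hf : Monotone f) (B : ℕ) (hB : ∀ t, f t ≤ B) :
    ∃ T, ∀ t, T ≤ t → f t = f T := by
  have hb : BddAbove (Set.range f) := ⟨B, by rintro _ ⟨t, rfl⟩; exact hB t⟩
  obtain ⟨T, hT⟩ := Nat.sSup_mem (Set.range_nonempty f) hb
  refine ⟨T, fun t ht => le_antisymm ?_ (hf ht)⟩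
  rw [hT]
  exact le_csSup hb ⟨t, rfl⟩

theorem phi_cfg {n r : ℕ} (hn : 1 ≤ n) (hr : n < r) (sched : ℕ → Fin n × Fin r) (t : ℕ) :
    (cfg n r sched (t + 1)).2 = (cfg n r sched t).2 ∨
    ∑ p, phi n r ((cfg n r sched t).2 p) < ∑ p, phi n r ((cfg n r sched (t + 1)).2 p) := by
  have hg := (cfg_inv hn hr sched t).good.1 (sched t).1
  have h := phi_step hg (step_spec n r ((cfg n r sched t).2 (sched t).1)
    ((cfg n r sched t).1 (sched t).2))
  rcases h with h | h
  · left
    exact upd_same h.symm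
  · right
    have := sum_upd (phi n r) (cfg n r sched t).2 (sched t).1
      (step n r ((cfg n r sched t).2 (sched t).1) ((cfg n r sched t).1 (sched t).2)).1
    simp only [cfg]
    omega

theorem live {n r : ℕ} (hn : 1 ≤ n) (hr : n < r) (hg : Nat.gcd n r = 1)
    (sched : ℕ → Fin n × Fin r) (hfair : ∀ p y T, ∃ t, T ≤ t ∧ sched t = (p, y)) :
    ∃ t, (cfg n r sched t).1 (sched t).2 = .ph n true := by
  have hmono : Monotone (fun t => ∑ p, phi n r ((cfg n r sched t).2 p)) := by
    apply monotone_nat_of_le_succ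
    intro t
    rcases phi_cfg hn hr sched t with h | h
    · simp only [h]; exact le_refl _
    · exact h.le
  obtain ⟨T, hT⟩ := bdd_stab _ hmono (n * (n + 3 * r + 3)) (by
    intro t
    have : ∑ p, phi n r ((cfg n r sched t).2 p) ≤ ∑ _p : Fin n, (n + 3 * r + 3) :=
      Finset.sum_le_sum (fun p _ => phi_le ((cfg_inv hn hr sched t).good.1 p))
    simpa using this)
  have hstep : ∀ t, T ≤ t → (cfg n r sched (t + 1)).2 = (cfg n r sched t).2 := by
    intro t ht
    rcases phi_cfg hn hr sched t with h | h
    · exact h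
    · have h1 := hT t ht
      have h2 := hT (t + 1) (by omega)
      omega
  have hconst : ∀ t, (cfg n r sched (T + t)).2 = (cfg n r sched T).2 := by
    intro t
    induction t with
    | zero => rfl
    | succ t ih => rw [← ih]; exact hstep (T + t) (by omega)
  obtain ⟨t, ht⟩ := stable_live (P := (cfg n r sched T).2)
    (S := fun t => (cfg n r sched (T + t)).1) (sched := fun t => sched (T + t)) hn hr hg
    (by
      intro t
      refine ⟨_, _, step_spec n r _ _, ?_, ?_⟩
      · have h1 := hstep (T + t) (by omega)
        have h2 := congrFun h1 (sched (T + t)).1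
        rw [cfg] at h2
        simp only [Function.update_self] at h2
        rw [hconst t] at h2
        exact h2
      · have : T + (t + 1) = T + t + 1 := rfl
        simp only [this]
        rw [cfg]
        simp only
        rw [hconst t])
    (by
      intro p y T'
      obtain ⟨t, h1, h2⟩ := hfair p y (T + T')
      refine ⟨t - T, by omega, ?_⟩
      have : T + (t - T) = t := by omega
      rw [this]; exact h2)
    (by
      intro t
      have := cfg_inv hn hr sched (T + t)
      rwa [hconst t] at this)
  exact ⟨T + t, ht⟩

theorem rank_step {n r : ℕ} {P P' : PS} {S S' : RS} (htr : Tr n r P S P' S') :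
    (rk P = 0 ∨ rk P' = rk P) ∧
    (ht S' = ht S ∨ (ht S' = ht S + 1 ∧ rk P' = ht S')) := by
  cases htr <;> simp [rk_s, ht_s]
  · omega
  · omega

theorem visited {n r : ℕ} (sched : ℕ → Fin n × Fin r) (t : ℕ) :
    ∀ y i, 1 ≤ i → i ≤ ht ((cfg n r sched t).1 y) →
      ∃ p, rk ((cfg n r sched t).2 p) = i ∧ ∃ s, s < t ∧ sched s = (p, y) := by
  induction t with
  | zero =>
    intro y i h1 h2
    simp only [cfg, ht_s] at h2
    omega
  | succ t ih =>
    intro y i h1 h2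
    have hr := rank_step (step_spec n r ((cfg n r sched t).2 (sched t).1)
      ((cfg n r sched t).1 (sched t).2))
    have key : i ≤ ht ((cfg n r sched t).1 y) →
        ∃ p, rk ((cfg n r sched (t + 1)).2 p) = i ∧ ∃ s, s < t + 1 ∧ sched s = (p, y) := by
      intro h
      obtain ⟨p, hp, s, hs, hs'⟩ := ih y i h1 h
      refine ⟨p, ?_, s, by omega, hs'⟩
      simp only [cfg]
      by_cases hpt : p = (sched t).1
      · subst hpt
        rw [Function.update_self]
        omega
      · rw [Function.update_of_ne hpt]; exact hp
    simp only [cfg] at h2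
    by_cases hy : y = (sched t).2
    · subst hy
      rw [Function.update_self] at h2
      by_cases hi : i ≤ ht ((cfg n r sched t).1 (sched t).2)
      · exact key hi
      · refine ⟨(sched t).1, ?_, t, by omega, rfl⟩
        clear key
        simp only [cfg]
        rw [Function.update_self]
        omega
    · rw [Function.update_of_ne hy] at h2
      exact key h2

theorem visited_of_declared {n r : ℕ} (hn : 1 ≤ n) (hr : n < r) (sched : ℕ → Fin n × Fin r) (t : ℕ)
    (z : Fin r) (h : (cfg n r sched t).1 z = .ph n true) :
    ∀ p y, ∃ s, s ≤ t ∧ sched s = (p, y) := by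
  have hall : ∀ y, ht ((cfg n r sched t).1 y) = n := by
    rcases cfg_inv hn hr sched t with g | g | g
    · have := g.sa z
      rw [h] at this
      exact this.elim
    · obtain ⟨p, J, k, h1, h2, h3, h4, h5, h6, h7, h8⟩ := g
      have := (h7 z).2.2.1
      rw [h] at this
      simp [tk_s] at this
    · obtain ⟨J, y, h1, h2, h3, h4, h5⟩ := g
      have := h5 z
      rw [h] at this
      simp only [RS.ph.injEq] at this
      intro x
      rw [h5 x, ← this.1, ht_s.2]
  intro p y
  have hv : ∀ i : Fin n, ∃ p, rk ((cfg n r sched t).2 p) = i.1 + 1 ∧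
      ∃ s, s < t ∧ sched s = (p, y) := fun i =>
    visited sched t y (i.1 + 1) (by omega) (by rw [hall y]; omega)
  choose f hf1 hf2 using hv
  have hinj : Function.Injective f := by
    intro a b hab
    have h1 := hf1 a
    have h2 := hf1 b
    rw [hab] at h1
    ext
    omega
  obtain ⟨i, rfl⟩ := Finite.injective_iff_surjective.1 hinj p
  obtain ⟨s, hs, hs'⟩ := hf2 i
  exact ⟨s, hs.le, hs'⟩

def enc : RS → ℕ
  | .el b D m => 2 * Nat.pair b.toNat (Nat.pair D m)
  | .ph h k => 2 * Nat.pair h k.toNat + 1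

def dec (x : ℕ) : RS :=
  if x % 2 = 0 then
    .el (decide ((Nat.unpair (x / 2)).1 = 1)) (Nat.unpair (Nat.unpair (x / 2)).2).1
      (Nat.unpair (Nat.unpair (x / 2)).2).2
  else .ph (Nat.unpair (x / 2)).1 (decide ((Nat.unpair (x / 2)).2 = 1))

theorem dec_enc (S : RS) : dec (enc S) = S := by
  cases S with
  | el b D m => cases b <;> simp [enc, dec]
  | ph h k =>
    have h1 : ∀ a, (2 * a + 1) % 2 = 1 := by omega
    have h2 : ∀ a, (2 * a + 1) / 2 = a := by omega
    cases k <;> simp [enc, dec, h1, h2]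

theorem enc_bound (n : ℕ) : ∃ q, 0 < q ∧ ∀ S, goodR n S → enc S < q := by
  have hfin : Set.Finite {S | goodR n S} := by
    have h1 : {S | goodR n S} ⊆
        (fun x : Bool × ℕ × ℕ => RS.el x.1 x.2.1 x.2.2) ''
          (Set.univ ×ˢ (Set.Iic n ×ˢ Set.Iic (2 * n + 1))) ∪
        (fun x : ℕ × Bool => RS.ph x.1 x.2) '' (Set.Iic n ×ˢ Set.univ) := by
      rintro (⟨b, D, m⟩ | ⟨h, k⟩) hS
      · left
        exact ⟨(b, D, m), ⟨trivial, hS.1, hS.2⟩, rfl⟩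
      · right
        exact ⟨(h, k), ⟨hS, trivial⟩, rfl⟩
    refine Set.Finite.subset ?_ h1
    exact ((Set.finite_univ.prod ((Set.finite_Iic n).prod (Set.finite_Iic _))).image _).union
      (((Set.finite_Iic n).prod Set.finite_univ).image _)
  obtain ⟨B, hB⟩ := (hfin.image enc).bddAbove
  refine ⟨B + 1, by omega, fun S hS => ?_⟩
  have := hB ⟨S, hS, rfl⟩
  omega

def isT (n : ℕ) : RS → Bool
  | .el _ _ _ => false
  | .ph h k => decide (h = n) && k

theorem isT_iff (n : ℕ) (S : RS) : isT n S = true ↔ S = .ph n true := by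
  cases S <;> simp [isT]

def fold (n r : ℕ) (h : List ℕ) : PS :=
  h.foldl (fun P x => (step n r P (dec x)).1) (.alive 1 0)

def strat (n r q : ℕ) : PrisonersGame.Strategy := fun h s =>
  (if enc (step n r (fold n r h) (dec s)).2 < q then enc (step n r (fold n r h) (dec s)).2 else 0,
    isT n (dec s))

theorem run_cfg {n r q : ℕ} (hn : 1 ≤ n) (hr : n < r) (hq : ∀ S, goodR n S → enc S < q)
    (sched : PrisonersGame.Schedule n r) (t : ℕ) :
    (∀ y, (PrisonersGame.run (fun _ => strat n r q) sched t).1 y = enc ((cfg n r sched t).1 y)) ∧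
    ∀ p, fold n r ((PrisonersGame.run (fun _ => strat n r q) sched t).2 p) =
      (cfg n r sched t).2 p := by
  induction t with
  | zero =>
    refine ⟨fun y => ?_, fun p => rfl⟩
    simp [PrisonersGame.run, cfg, enc, Nat.pair]
  | succ t ih =>
    obtain ⟨ih1, ih2⟩ := ih
    have hgood := (cfg_inv hn hr sched (t + 1)).good.2 (sched t).2
    simp only [cfg, Function.update_self] at hgood
    constructor
    · intro y
      simp only [PrisonersGame.run, cfg]
      by_cases hy : y = (sched t).2
      · subst hy
        rw [Function.update_self, Function.update_self]
        simp only [strat, ih1, ih2, dec_enc]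
        rw [if_pos (hq _ hgood)]
      · rw [Function.update_of_ne hy, Function.update_of_ne hy]
        exact ih1 y
    · intro p
      simp only [PrisonersGame.run, cfg]
      by_cases hp : p = (sched t).1
      · subst hp
        rw [Function.update_self, Function.update_self, ← ih2, fold, List.foldl_append]
        simp only [List.foldl_cons, List.foldl_nil, ih1, dec_enc]
        rfl
      · rw [Function.update_of_ne hp, Function.update_of_ne hp]
        exact ih2 p

theorem main (n : ℕ) (hn : 1 ≤ n) :
    ∃ q : ℕ, ∀ r : ℕ, n < r → Nat.gcd n r = 1 →
      PrisonersGame.HasSymmetricWinningStrategy n r q := by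
  obtain ⟨q, hq0, hq⟩ := enc_bound n
  refine ⟨q, fun r hr hg => ⟨strat n r q, ?_, ?_⟩⟩
  · intro h s _ _
    simp only [strat]
    split_ifs with hlt
    · exact hlt
    · exact hq0
  · intro sched hfair
    have hdecl : ∀ t, PrisonersGame.declaresAt (fun _ => strat n r q) sched t ↔
        (cfg n r sched t).1 (sched t).2 = .ph n true := by
      intro t
      unfold PrisonersGame.declaresAt
      simp only [strat]
      rw [(run_cfg hn hr hq sched t).1, dec_enc, isT_iff]
    constructor
    · obtain ⟨t, ht⟩ := live hn hr hg sched (fun p y T => by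
        obtain ⟨t, h1, h2⟩ := (hfair p y).exists_gt T
        exact ⟨t, h2.le, h1⟩)
      exact ⟨t, (hdecl t).2 ht⟩
    · intro t ht p y
      obtain ⟨s, h1, h2⟩ := visited_of_declared hn hr sched t _ ((hdecl t).1 ht) p y
      exact ⟨s, h1, h2⟩

end PrisonersProof

open PrisonersGame in
/-- For every `n ≥ 1` there exists `q = q(n)` such that for every `r > n` with
`gcd(n, r) = 1`, the `n` prisoners have a symmetric winning strategy for `r`
rooms with `q` states. -/
theorem symmetric_strategy_few_prisoners (n : ℕ) (hn : 1 ≤ n) :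
    ∃ q : ℕ, ∀ r : ℕ, n < r → Nat.gcd n r = 1 →
      HasSymmetricWinningStrategy n r q := by
  exact PrisonersProof.main n hn
end

section
/- For every r ≥ 1 there exists q = q(r) such that for every n > r with gcd(n, r) = 1, the n prisoners have a symmetric winning strategy for r rooms with q states. -/
namespace PG

abbrev G (r : ℕ) := ℕ × ZMod r

inductive PS (r : ℕ) : Type
  | fresh | idle
  | hold (z : G r)
  | clean (z : G r)
  | tour (j : ℕ)
  | wait (c : ℕ)
  | active (b : Bool) (j : ℕ)
  | done

inductive RS (r : ℕ) : Type
  | old (c : G r) (nt : Option (G r))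
  | plain (b : Bool)
  | invite (b : Bool)
  | fin (b : Bool)

def rk {r : ℕ} (z : G r) : ℕ := z.1 * r + z.2.val

def hi {r : ℕ} (z : G r) : Option (G r) → Prop
  | none => False
  | some N => rk z < rk N

def conv (r j : ℕ) : PS r × RS r × Bool :=
  if j + 1 = r then (.wait 0, .invite false, false) else (.tour (j + 1), .plain false, false)

def flip (r : ℕ) (b : Bool) (j : ℕ) : PS r × RS r × Bool :=
  if j + 1 = r then (.done, .fin (!b), false) else (.active b (j + 1), .plain (!b), false)

open Classical in
noncomputable def dl (n r : ℕ) : PS r → RS r → PS r × RS r × Bool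
  | .fresh, .old c nt => (.idle, .old (c + (0, 1)) nt, false)
  | .idle, .old c none =>
      if c.1 = r then conv r 0 else
        if c = 0 then (.idle, .old c none, false) else (.hold c, .old 0 (some c), false)
  | .hold z, .old c nt =>
      if c ≠ 0 ∨ hi z nt then (.clean z, .old (c + z) nt, false) else (.hold z, .old c nt, false)
  | .clean z, .old c nt =>
      if nt = some z then (.idle, .old c none, false) else (.clean z, .old c nt, false)
  | .tour j, .old _ _ => conv r j
  | .wait c, .fin b =>
      if c + 2 < n then (.wait (c + 1), .invite b, false) else (.wait c, .fin b, true)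
  | .active b j, .plain b' =>
      if b = b' ∧ j < r then flip r b j else (.active b j, .plain b', false)
  | .fresh, .invite b => flip r b 0
  | .idle, .invite b => flip r b 0
  | .hold _, .invite b => flip r b 0
  | .clean _, .invite b => flip r b 0
  | q, s => (q, s, false)

/-- Measures. -/
def m1p (n : ℕ) {r : ℕ} : PS r → ℕ
  | .wait c => n - c
  | .active _ j => r - j
  | .done => 0
  | _ => n

def m1r {r : ℕ} : RS r → ℕ
  | .old _ _ => 1
  | _ => 0

def m2p {r : ℕ} : PS r → ℕ
  | .fresh => 2
  | .hold _ => 1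
  | _ => 0

open Classical in
noncomputable def m2r {r : ℕ} : RS r → ℕ
  | .old c _ => if c = 0 then 0 else 1
  | _ => 0

def m3p {r : ℕ} : PS r → ℕ
  | .hold z => 3 * rk z + 2
  | .clean z => 3 * rk z + 1
  | _ => 0

open Classical in
noncomputable def m3r {r : ℕ} : RS r → ℕ
  | .old c nt => if c = 0 ∨ hi c nt then 0 else 3 * rk c + 3
  | _ => 0

theorem local_dec (n r : ℕ) (hn : r < n) (q : PS r) (s : RS r) :
    ((dl n r q s).1 = q ∧ (dl n r q s).2.1 = s) ∨
    m1p n (dl n r q s).1 + m1r (dl n r q s).2.1 < m1p n q + m1r s ∨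
    (m1p n (dl n r q s).1 + m1r (dl n r q s).2.1 = m1p n q + m1r s ∧
     m2p (dl n r q s).1 + m2r (dl n r q s).2.1 < m2p q + m2r s) ∨
    (m1p n (dl n r q s).1 + m1r (dl n r q s).2.1 = m1p n q + m1r s ∧
     m2p (dl n r q s).1 + m2r (dl n r q s).2.1 = m2p q + m2r s ∧
     m3p (dl n r q s).1 + m3r (dl n r q s).2.1 < m3p q + m3r s) := by
  rcases q with _ | _ | z | z | j | c' | ⟨b', j⟩ | _ <;> rcases s with ⟨c, nt⟩ | b | b | b
  case clean.old =>
    by_cases h : nt = some z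
    · subst h
      right; right; right
      by_cases h0 : c = 0
      · simp [dl, m1p, m1r, m2p, m2r, m3p, m3r, h0]
      · have e : dl n r (.clean z) (.old c (some z)) = (.idle, .old c none, false) := by simp [dl]
        rw [e]
        simp only [m1p, m1r, m2p, m2r, m3p, m3r, hi, h0, false_or, if_false]
        refine ⟨trivial, trivial, ?_⟩
        split_ifs <;> omega
    · left; simp [dl, h]
  case hold.old =>
    by_cases h0 : c = 0
    · subst h0
      by_cases h : hi z nt
      · right; right
        by_cases hz : z = 0
        · simp [dl, m1p, m1r, m2p, m2r, hz]
          subst hz; simp [h]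
        · right
          simp [dl, m1p, m1r, m2p, m2r, m3p, m3r, h, hz]
      · left; simp [dl, h]
    · right; right; left
      have e : dl n r (.hold z) (.old c nt) = (.clean z, .old (c + z) nt, false) := by
        simp [dl, h0]
      rw [e]
      simp only [m1p, m1r, m2p, m2r, if_neg h0]
      refine ⟨trivial, ?_⟩
      split_ifs <;> omega
  case idle.old =>
    rcases nt with _ | nt
    · simp only [dl, conv]
      split_ifs with h1 h2 h3
      · simp [m1p, m1r]
      · simp [m1p, m1r]
      · simp
      · simp [m1p, m1r, m2p, m2r, m3p, m3r, h3, hi]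
    · left; simp [dl]
  all_goals
    simp only [dl, conv, flip]
    try split_ifs
  all_goals
    simp [m1p, m1r, m2p, m2r]
    try (split_ifs <;> omega)
    try omega
  

/-- Configurations -/
structure Cfg (n r : ℕ) where
  R : Fin r → RS r
  P : Fin n → PS r

noncomputable def step {n r : ℕ} (C : Cfg n r) (a : Fin n × Fin r) : Cfg n r :=
  ⟨Function.update C.R a.2 (dl n r (C.P a.1) (C.R a.2)).2.1,
   Function.update C.P a.1 (dl n r (C.P a.1) (C.R a.2)).1⟩

def startCfg (n r : ℕ) : Cfg n r := ⟨fun _ => .old (1, 0) none, fun _ => .fresh⟩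

noncomputable def arun {n r : ℕ} (sched : ℕ → Fin n × Fin r) : ℕ → Cfg n r
  | 0 => startCfg n r
  | t + 1 => step (arun sched t) (sched t)

theorem sum_upd {ι α M : Type*} [Fintype ι] [DecidableEq ι] [AddCommMonoid M]
    (f : α → M) (x : ι → α) (i : ι) (a : α) :
    ∑ k, f (Function.update x i a k) + f (x i) = ∑ k, f (x k) + f a := by
  rw [← Finset.add_sum_erase _ _ (Finset.mem_univ i),
    ← Finset.add_sum_erase (a := i) _ (fun k => f (x k)) (Finset.mem_univ i)]
  have : ∑ k ∈ Finset.univ.erase i, f (Function.update x i a k)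
      = ∑ k ∈ Finset.univ.erase i, f (x k) := by
    apply Finset.sum_congr rfl
    intro k hk
    rw [Function.update_of_ne (Finset.ne_of_mem_erase hk)]
  rw [this, Function.update_self]
  abel

def tot {n r : ℕ} {M : Type*} [AddCommMonoid M] (f : PS r → M) (g : RS r → M) (C : Cfg n r) : M :=
  ∑ p, f (C.P p) + ∑ i, g (C.R i)

theorem tot_step {n r : ℕ} {M : Type*} [AddCommMonoid M] (f : PS r → M) (g : RS r → M)
    (C : Cfg n r) (a : Fin n × Fin r) :
    tot f g (step C a) + (f (C.P a.1) + g (C.R a.2)) =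
      tot f g C + (f (dl n r (C.P a.1) (C.R a.2)).1 + g (dl n r (C.P a.1) (C.R a.2)).2.1) := by
  have h1 := sum_upd f C.P a.1 (dl n r (C.P a.1) (C.R a.2)).1
  have h2 := sum_upd g C.R a.2 (dl n r (C.P a.1) (C.R a.2)).2.1
  unfold tot step
  simp only
  calc _ = (∑ k, f (Function.update C.P a.1 (dl n r (C.P a.1) (C.R a.2)).1 k) + f (C.P a.1)) +
        (∑ k, g (Function.update C.R a.2 (dl n r (C.P a.1) (C.R a.2)).2.1 k) + g (C.R a.2)) := by abel
    _ = _ := by rw [h1, h2]; abel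

noncomputable def mu {n r : ℕ} (C : Cfg n r) : ℕ ×ₗ (ℕ ×ₗ ℕ) :=
  toLex (tot (m1p n) m1r C, toLex (tot m2p m2r C, tot m3p m3r C))

theorem mu_dec {n r : ℕ} (hn : r < n) (C : Cfg n r) (a : Fin n × Fin r) :
    step C a = C ∨ mu (step C a) < mu C := by
  have h1 := tot_step (m1p n) m1r C a
  have h2 := tot_step m2p m2r C a
  have h3 := tot_step m3p m3r C a
  rcases local_dec n r hn (C.P a.1) (C.R a.2) with h | h | h | h
  · left
    rcases C with ⟨R, P⟩
    simp only [step] at *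
    rw [h.1, h.2, Function.update_eq_self, Function.update_eq_self]
  all_goals
    right
    unfold mu
    rw [Prod.Lex.toLex_lt_toLex, Prod.Lex.toLex_lt_toLex]
    simp only
    omega

/-- eventually the configuration is a fixed point -/
theorem eventually_fixed {n r : ℕ} (hn : r < n) (sched : ℕ → Fin n × Fin r)
    (hf : ∀ p i, {t : ℕ | sched t = (p, i)}.Infinite) :
    ∃ T, (∀ t, T ≤ t → arun sched t = arun sched T) ∧ ∀ a, step (arun sched T) a = arun sched T := by
  obtain ⟨m, ⟨T, rfl⟩, hT⟩ := WellFounded.has_min (wellFounded_lt (α := ℕ ×ₗ (ℕ ×ₗ ℕ)))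
    (Set.range fun t => mu (arun sched t)) ⟨_, 0, rfl⟩
  have key : ∀ t, T ≤ t → arun sched t = arun sched T := by
    intro t ht
    induction t, ht using Nat.le_induction with
    | base => rfl
    | succ t ht ih =>
      rcases mu_dec hn (arun sched t) (sched t) with h | h
      · rw [← ih]; exact h
      · exfalso
        apply hT _ ⟨t + 1, rfl⟩
        rw [ih] at h
        simpa [arun, ih] using h
  refine ⟨T, key, ?_⟩
  rintro ⟨p, i⟩
  obtain ⟨t, ht, hTt⟩ := (hf p i).exists_gt T
  have h1 := key t hTt.le
  have h2 := key (t + 1) (by omega)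
  simp only [arun] at h2
  rw [ht, h1] at h2
  exact h2

end PG

namespace PG

def O {r : ℕ} : PS r → Prop
  | .fresh => True
  | .idle => True
  | .hold _ => True
  | .clean _ => True
  | _ => False

def vp {r : ℕ} : PS r → G r
  | .fresh => (0, 1)
  | .hold z => z
  | _ => 0

def vr {r : ℕ} : RS r → G r
  | .old c _ => c
  | _ => 0

def np {r : ℕ} (l : G r) : PS r → ℕ
  | .hold z => if z = l then 1 else 0
  | .clean z => if z = l then 1 else 0
  | _ => 0

def nr {r : ℕ} (l : G r) : RS r → ℕ
  | .old _ (some N) => if N = l then 1 else 0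
  | _ => 0

def cp {r : ℕ} (b : Bool) : RS r → ℕ
  | .plain b' => if b' = b then 1 else 0
  | _ => 0

def dp {r : ℕ} : PS r → ℕ
  | .done => 1
  | _ => 0

def nok {r : ℕ} : Option (G r) → Prop
  | none => True
  | some N => N.1 ≤ r

theorem step_of {n r : ℕ} {C : Cfg n r} {p : Fin n} {i : Fin r} {q' s' d}
    (h : dl n r (C.P p) (C.R i) = (q', s', d)) :
    step C (p, i) = ⟨Function.update C.R i s', Function.update C.P p q'⟩ := by
  simp [step, h]

theorem step_stay {n r : ℕ} {C : Cfg n r} {p : Fin n} {i : Fin r} {d}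
    (h : dl n r (C.P p) (C.R i) = (C.P p, C.R i, d)) :
    step C (p, i) = C := by
  simp [step, h]

structure I1 {n r : ℕ} (C : Cfg n r) : Prop where
  old : ∀ p, O (C.P p)
  hold : ∀ p z, C.P p = .hold z → z.1 ≠ r
  rooms : ∀ i, ∃ c nt, C.R i = .old c nt ∧ nok nt
  sum : tot vp vr C = ((r, n) : G r)
  notes : ∀ l, ∑ p, np l (C.P p) = ∑ i, nr l (C.R i)

structure I2 {n r : ℕ} (C : Cfg n r) (V : Fin n → Fin r → Prop) (p0 : Fin n) (j : ℕ) : Prop where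
  lead : C.P p0 = .tour j
  jr : j < r
  old : ∀ p, p ≠ p0 → O (C.P p)
  hold : ∀ p z, C.P p = .hold z → z.1 = 0
  rooms : ∀ i, (∃ c nt, C.R i = .old c nt ∧ c.1 = 0 ∧ nok nt) ∨ (C.R i = .plain false ∧ V p0 i)
  cnt : ∑ i, cp false (C.R i) = j

structure I3 {n r : ℕ} (C : Cfg n r) (V : Fin n → Fin r → Prop) (p0 : Fin n) (c : ℕ) : Prop where
  lead : C.P p0 = .wait c
  vis : ∀ i, V p0 i
  cn : c + 1 < n

structure I3a {n r : ℕ} (C : Cfg n r) (V : Fin n → Fin r → Prop) (p0 : Fin n) (c : ℕ) (b : Bool)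
    (i0 : Fin r) : Prop extends I3 C V p0 c where
  old : ∀ p, p ≠ p0 → O (C.P p) ∨ (C.P p = .done ∧ ∀ i, V p i)
  cnt : ∑ p, dp (C.P p) = c
  inv : C.R i0 = .invite b
  rooms : ∀ i, i ≠ i0 → C.R i = .plain b

structure I3b {n r : ℕ} (C : Cfg n r) (V : Fin n → Fin r → Prop) (p0 : Fin n) (c : ℕ) (b : Bool)
    (p1 : Fin n) (j : ℕ) : Prop extends I3 C V p0 c where
  ne : p1 ≠ p0
  act : C.P p1 = .active b j
  jr : j < r
  old : ∀ p, p ≠ p0 → p ≠ p1 → O (C.P p) ∨ (C.P p = .done ∧ ∀ i, V p i)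
  cnt : ∑ p, dp (C.P p) = c
  rooms : ∀ i, C.R i = .plain b ∨ (C.R i = .plain (!b) ∧ V p1 i)
  rcnt : ∑ i, cp (!b) (C.R i) = j

structure I3c {n r : ℕ} (C : Cfg n r) (V : Fin n → Fin r → Prop) (p0 : Fin n) (c : ℕ) (b : Bool)
    (i0 : Fin r) : Prop extends I3 C V p0 c where
  old : ∀ p, p ≠ p0 → O (C.P p) ∨ (C.P p = .done ∧ ∀ i, V p i)
  cnt : ∑ p, dp (C.P p) = c + 1
  inv : C.R i0 = .fin b
  rooms : ∀ i, i ≠ i0 → C.R i = .plain b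

def Inv {n r : ℕ} (C : Cfg n r) (V : Fin n → Fin r → Prop) : Prop :=
  I1 C ∨ (∃ p0 j, I2 C V p0 j) ∨ (∃ p0 c b i0, I3a C V p0 c b i0) ∨
  (∃ p0 c b p1 j, I3b C V p0 c b p1 j) ∨ (∃ p0 c b i0, I3c C V p0 c b i0)

theorem Inv.mono {n r : ℕ} {C : Cfg n r} {V V' : Fin n → Fin r → Prop} (h : Inv C V)
    (hV : ∀ p i, V p i → V' p i) : Inv C V' := by
  rcases h with h | ⟨p0, j, h⟩ | ⟨p0, c, b, i0, h⟩ | ⟨p0, c, b, p1, j, h⟩ | ⟨p0, c, b, i0, h⟩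
  · exact .inl h
  · refine .inr (.inl ⟨p0, j, { h with rooms := ?_ }⟩)
    intro i
    exact (h.rooms i).imp id fun ⟨a, b⟩ => ⟨a, hV _ _ b⟩
  · refine .inr (.inr (.inl ⟨p0, c, b, i0, { h with old := ?_, vis := ?_ }⟩))
    · exact fun i => hV _ _ (h.vis i)
    · exact fun p hp => (h.old p hp).imp id fun ⟨a, b⟩ => ⟨a, fun i => hV _ _ (b i)⟩
  · refine .inr (.inr (.inr (.inl ⟨p0, c, b, p1, j, { h with old := ?_, vis := ?_, rooms := ?_ }⟩)))
    · exact fun i => hV _ _ (h.vis i)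
    · exact fun p hp hp' => (h.old p hp hp').imp id fun ⟨a, b⟩ => ⟨a, fun i => hV _ _ (b i)⟩
    · exact fun i => (h.rooms i).imp id fun ⟨a, b⟩ => ⟨a, hV _ _ b⟩
  · refine .inr (.inr (.inr (.inr ⟨p0, c, b, i0, { h with old := ?_, vis := ?_ }⟩)))
    · exact fun i => hV _ _ (h.vis i)
    · exact fun p hp => (h.old p hp).imp id fun ⟨a, b⟩ => ⟨a, fun i => hV _ _ (b i)⟩

theorem inv_startCfg {n r : ℕ} (V) : Inv (startCfg n r) V := by
  left
  refine ⟨fun p => trivial, ?_, ?_, ?_, ?_⟩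
  · intro p z h; simp [startCfg] at h
  · intro i; exact ⟨_, _, rfl, trivial⟩
  · simp [tot, startCfg, vp, vr]
  · intro l; simp [startCfg, np, nr]

/-- local step in phase one -/
theorem local1 {n r : ℕ} (q : PS r) (c : G r) (nt : Option (G r)) (hq : O q)
    (hh : ∀ z, q = .hold z → z.1 ≠ r) (hnt : nok nt) (hc : c.1 ≤ r) :
    (q = .idle ∧ nt = none ∧ c.1 = r ∧ dl n r q (.old c nt) = conv r 0) ∨
    ∃ q' c' nt', dl n r q (.old c nt) = (q', .old c' nt', false) ∧ O q' ∧
      (∀ z, q' = .hold z → z.1 ≠ r) ∧ nok nt' ∧ vp q' + c' = vp q + c ∧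
      ∀ l, np l q' + nr l (.old c nt) = np l q + nr l (.old c' nt') := by
  rcases q with _ | _ | z | z | j | c' | ⟨b', j⟩ | _ <;> try exact hq.elim
  · right
    refine ⟨_, _, _, rfl, trivial, by simp, hnt, ?_, ?_⟩
    · simp [vp, add_comm]
    · intro l; rcases nt with _ | nt <;> simp [np, nr]
  · rcases nt with _ | nt
    · by_cases h : c.1 = r
      · left; simp [dl, h]
      · right
        by_cases h0 : c = 0
        · refine ⟨.idle, c, none, by simp only [dl, if_neg h, if_pos h0], trivial, by simp, hnt, by simp, ?_⟩
          intro l; simp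
        · refine ⟨.hold c, 0, some c, by simp [dl, h, h0], trivial, ?_, hc, by simp [vp], ?_⟩
          · rintro z ⟨⟩; exact h
          · intro l; simp [np, nr]
    · right
      exact ⟨.idle, c, some nt, by simp [dl], trivial, by simp, hnt, by simp, by simp⟩
  · right
    by_cases h : c ≠ 0 ∨ hi z nt
    · refine ⟨.clean z, c + z, nt, by simp only [dl, if_pos h], trivial, by simp, hnt, ?_, ?_⟩
      · simp [vp, add_comm]
      · intro l; rcases nt with _ | nt <;> simp [np, nr]
    · exact ⟨.hold z, c, nt, by simp only [dl, if_neg h], trivial, hh, hnt, by simp, by simp⟩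
  · right
    by_cases h : nt = some z
    · refine ⟨.idle, c, none, by simp [dl, h], trivial, by simp, trivial, by simp [vp], ?_⟩
      intro l; subst h; simp [np, nr]
    · exact ⟨.clean z, c, nt, by simp [dl, h], trivial, by simp, hnt, by simp, by simp⟩

/-- local step in phase two -/
theorem local2 {n r : ℕ} (hr : 1 ≤ r) (q : PS r) (c : G r) (nt : Option (G r)) (hq : O q)
    (hh : ∀ z, q = .hold z → z.1 = 0) (hnt : nok nt) (hc : c.1 = 0) :
    ∃ q' c' nt', dl n r q (.old c nt) = (q', .old c' nt', false) ∧ O q' ∧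
      (∀ z, q' = .hold z → z.1 = 0) ∧ nok nt' ∧ c'.1 = 0 := by
  have hv : (vp q).1 = 0 := by
    rcases q with _ | _ | z | z | j | c' | ⟨b', j⟩ | _ <;> simp [vp]
    exact hh _ rfl
  rcases local1 (n := n) q c nt hq (fun z hz => by rw [hh z hz]; omega) hnt (by omega) with
    h | ⟨q', c', nt', h1, h2, h3, h4, h5, h6⟩
  · omega
  · have h5' := congrArg Prod.fst h5
    simp only [Prod.fst_add] at h5'
    refine ⟨q', c', nt', h1, h2, ?_, h4, by omega⟩
    rintro z rfl
    have e : vp (.hold z) = z := rfl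
    rw [e] at h5'
    omega

theorem dl_plain {n r : ℕ} (q : PS r) (b : Bool) (h : O q ∨ q = .done ∨ (∃ c, q = .wait c) ∨ ∃ j, q = .tour j) :
    dl n r q (.plain b) = (q, .plain b, false) := by
  rcases q with _ | _ | z | z | j | c' | ⟨b', j⟩ | _ <;> simp [dl, O] at *

theorem dl_inv {n r : ℕ} (q : PS r) (b : Bool) (h : O q) :
    dl n r q (.invite b) = flip r b 0 := by
  rcases q with _ | _ | z | z | j | c' | ⟨b', j⟩ | _ <;> simp [dl, O] at *

theorem dl_fin {n r : ℕ} (q : PS r) (b : Bool) (h : O q) :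
    dl n r q (.fin b) = (q, .fin b, false) := by
  rcases q with _ | _ | z | z | j | c' | ⟨b', j⟩ | _ <;> simp [dl, O] at *

theorem dl_done {n r : ℕ} (s : RS r) :
    dl n r .done s = (.done, s, false) := by
  rcases s with ⟨c, nt⟩ | b | b | b <;> rfl

theorem fst_le_tot {n r : ℕ} {C : Cfg n r} (i : Fin r) : (vr (C.R i)).1 ≤ (tot vp vr C).1 := by
  unfold tot
  rw [Prod.fst_add, Prod.fst_sum, Prod.fst_sum]
  have := Finset.single_le_sum (f := fun i => (vr (C.R i)).1) (fun _ _ => Nat.zero_le _) (Finset.mem_univ i)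
  omega

end PG

namespace PG

theorem pres1 {n r : ℕ} (hr : 1 ≤ r) (hn : r < n) {C : Cfg n r} {V' : Fin n → Fin r → Prop}
    (p : Fin n) (i : Fin r) (ha : V' p i) (h : I1 C) :
    Inv (step C (p, i)) V' ∧ (dl n r (C.P p) (C.R i)).2.2 = false := by
  obtain ⟨c, nt, hs, hnt⟩ := h.rooms i
  have hc : c.1 ≤ r := by
    have := fst_le_tot (C := C) i
    rw [h.sum, hs] at this
    exact this
  rcases local1 (n := n) (C.P p) c nt (h.old p) (h.hold p) hnt hc with
    ⟨h1, h2, h3, h4⟩ | ⟨q', c', nt', h1, h2, h3, h4, h5, h6⟩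
  · -- leader emerges
    rw [← hs] at h4
    have hsum := h.sum
    have hsum1 := congrArg Prod.fst hsum
    unfold tot at hsum1
    rw [Prod.fst_add, Prod.fst_sum, Prod.fst_sum] at hsum1
    rw [← Finset.add_sum_erase _ (fun k => (vr (C.R k)).1) (Finset.mem_univ i)] at hsum1
    have e1 : (vr (C.R i)).1 = r := by rw [hs]; exact h3
    simp only [e1] at hsum1
    have z1 : ∀ p, (vp (C.P p)).1 = 0 := by
      have : ∑ p, (vp (C.P p)).1 = 0 := by omega
      intro p
      exact (Finset.sum_eq_zero_iff.1 this) p (Finset.mem_univ p)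
    have z2 : ∀ k, k ≠ i → (vr (C.R k)).1 = 0 := by
      have : ∑ k ∈ Finset.univ.erase i, (vr (C.R k)).1 = 0 := by omega
      intro k hk
      exact (Finset.sum_eq_zero_iff.1 this) k (by simp [hk])
    by_cases hr1 : 0 + 1 = r
    · have e : conv r 0 = (.wait 0, .invite false, false) := by simp only [conv, if_pos hr1]
      rw [e] at h4
      refine ⟨?_, by rw [h4]⟩
      rw [step_of h4]
      have hi : ∀ k : Fin r, k = i := by intro k; apply Fin.ext; omega
      refine .inr (.inr (.inl ⟨p, 0, false, i, ⟨⟨?_, ?_, by omega⟩, ?_, ?_, ?_, ?_⟩⟩))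
      · simp
      · intro k; rw [hi k]; exact ha
      · intro p' hp'; left; simp only [Function.update_of_ne hp']; exact h.old p'
      · apply Finset.sum_eq_zero
        intro p' _
        by_cases hp : p' = p
        · subst hp; simp [dp]
        · simp only [Function.update_of_ne hp]
          have := h.old p'
          revert this
          cases C.P p' <;> simp [O, dp]
      · simp
      · intro k hk; exact absurd (hi k) hk
    · have e : conv r 0 = (.tour 1, .plain false, false) := by simp only [conv, if_neg hr1]
      rw [e] at h4
      refine ⟨?_, by rw [h4]⟩
      rw [step_of h4]
      refine .inr (.inl ⟨p, 1, ⟨by simp, by omega, ?_, ?_, ?_, ?_⟩⟩)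
      · intro p' hp'; simp only [Function.update_of_ne hp']; exact h.old p'
      · intro p' z hz
        by_cases hp : p' = p
        · subst hp; simp at hz
        · simp only [Function.update_of_ne hp] at hz
          have := z1 p'
          rw [hz] at this
          exact this
      · intro k
        by_cases hk : k = i
        · subst hk; right; simp [ha]
        · left
          simp only [Function.update_of_ne hk]
          obtain ⟨c', nt', h', hn'⟩ := h.rooms k
          have := z2 k hk
          rw [h'] at this
          exact ⟨c', nt', h', this, hn'⟩
      · have := sum_upd (cp false) C.R i (.plain false)
        have z : ∑ k, cp false (C.R k) = 0 := by
          apply Finset.sum_eq_zero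
          intro k _
          obtain ⟨c', nt', h', hn'⟩ := h.rooms k
          rw [h']; rfl
        rw [z, hs] at this
        simpa [cp] using this
  · rw [← hs] at h1
    refine ⟨?_, by rw [h1]⟩
    left
    have ht := tot_step vp vr C (p, i)
    rw [step_of h1] at ht ⊢
    simp only [h1] at ht
    refine ⟨?_, ?_, ?_, ?_, ?_⟩
    · intro p'
      by_cases hp : p' = p
      · subst hp; simpa using h2
      · simp only [Function.update_of_ne hp]; exact h.old p'
    · intro p' z
      by_cases hp : p' = p
      · subst hp; simpa using h3 z
      · simp only [Function.update_of_ne hp]; exact h.hold p' z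
    · intro k
      by_cases hk : k = i
      · subst hk; exact ⟨c', nt', by simp, h4⟩
      · simp only [Function.update_of_ne hk]; exact h.rooms k
    · have e : vp q' + vr (.old c' nt') = vp (C.P p) + vr (C.R i) := by rw [hs]; exact h5
      rw [e] at ht
      rw [← h.sum]
      exact add_right_cancel ht
    · intro l
      have e1 := sum_upd (np l) C.P p q'
      have e2 := sum_upd (nr l) C.R i (.old c' nt')
      have e3 := h6 l
      have e4 := h.notes l
      rw [← hs] at e3
      simp only
      omega

theorem lt_exists {r : ℕ} (f : Fin r → ℕ) (hf : ∀ i, f i ≤ 1) (h : ∑ i, f i < r) : ∃ i, f i = 0 := by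
  by_contra hc
  push Not at hc
  have : ∑ i, f i = ∑ i : Fin r, 1 := Finset.sum_congr rfl fun i _ => by
    have := hf i; have := hc i; omega
  simp at this
  omega

/-- if all but one of `r` indicator values sum to `r`, all are one -/
theorem all_one {r : ℕ} (f : Fin r → ℕ) (hf : ∀ i, f i ≤ 1) (h : ∑ i, f i + 1 = r) (i : Fin r)
    (hi : f i = 0) (k : Fin r) (hk : k ≠ i) : f k = 1 := by
  by_contra hc
  have h1 : f k = 0 := by have := hf k; omega
  rw [← Finset.add_sum_erase _ _ (Finset.mem_univ i),
    ← Finset.add_sum_erase (Finset.univ.erase i) _ (a := k) (by simp [hk])] at h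
  have : ∑ x ∈ (Finset.univ.erase i).erase k, f x ≤ ((Finset.univ.erase i).erase k).card * 1 :=
    Finset.sum_le_card_nsmul _ _ 1 fun x _ => hf x
  rw [Finset.card_erase_of_mem (by simp [hk]), Finset.card_erase_of_mem (by simp)] at this
  simp at this
  have := i.2
  have := k.2
  have : (k : ℕ) ≠ i := fun h => hk (Fin.ext h)
  omega

theorem cp_le {r : ℕ} (b : Bool) (s : RS r) : cp b s ≤ 1 := by
  rcases s with ⟨c, nt⟩ | b | b | b <;> simp [cp]
  split_ifs <;> omega

theorem dp_le {r : ℕ} (s : PS r) : dp s ≤ 1 := by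
  rcases s with _ | _ | z | z | j | c' | ⟨b', j⟩ | _ <;> simp [dp]

theorem dp_O {r : ℕ} {s : PS r} (h : O s) : dp s = 0 := by
  rcases s with _ | _ | z | z | j | c' | ⟨b', j⟩ | _ <;> simp [dp, O] at *

theorem pres2 {n r : ℕ} (hr : 1 ≤ r) (hn : r < n) {C : Cfg n r} {V V' : Fin n → Fin r → Prop}
    (p : Fin n) (i : Fin r) (hV : ∀ p i, V p i → V' p i) (ha : V' p i) {p0 j} (h : I2 C V p0 j) :
    Inv (step C (p, i)) V' ∧ (dl n r (C.P p) (C.R i)).2.2 = false := by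
  have hInv : Inv C V' := (show Inv C V from .inr (.inl ⟨p0, j, h⟩)).mono hV
  rcases h.rooms i with ⟨c, nt, hs, hc, hnt⟩ | ⟨hs, -⟩
  · by_cases hp : p = p0
    · subst hp
      have h4 : dl n r (C.P p) (C.R i) = conv r j := by rw [h.lead, hs]; rfl
      have hci : cp false (C.R i) = 0 := by rw [hs]; rfl
      by_cases hr1 : j + 1 = r
      · have e : conv r j = (.wait 0, .invite false, false) := by simp only [conv, if_pos hr1]
        rw [e] at h4
        refine ⟨?_, by rw [h4]⟩
        rw [step_of h4]
        have hall : ∀ k, k ≠ i → C.R k = .plain false ∧ V p k := by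
          intro k hk
          have := all_one (fun k => cp false (C.R k)) (fun _ => cp_le _ _)
            (by have := h.cnt; omega) i hci k hk
          rcases h.rooms k with ⟨c', nt', hs', -⟩ | h'
          · rw [hs'] at this; simp [cp] at this
          · exact h'
        refine .inr (.inr (.inl ⟨p, 0, false, i, ⟨⟨?_, ?_, by omega⟩, ?_, ?_, ?_, ?_⟩⟩))
        · simp
        · intro k
          by_cases hk : k = i
          · rw [hk]; exact ha
          · exact hV _ _ (hall k hk).2
        · intro p' hp'; left; simp only [Function.update_of_ne hp']; exact h.old p' hp'
        · apply Finset.sum_eq_zero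
          intro p' _
          by_cases hp : p' = p
          · subst hp; simp [dp]
          · simp only [Function.update_of_ne hp]
            exact dp_O (h.old p' hp)
        · simp
        · intro k hk; simp only [Function.update_of_ne hk]; exact (hall k hk).1
      · have e : conv r j = (.tour (j + 1), .plain false, false) := by simp only [conv, if_neg hr1]
        rw [e] at h4
        refine ⟨?_, by rw [h4]⟩
        rw [step_of h4]
        have hjr := h.jr
        refine .inr (.inl ⟨p, j + 1, ⟨by simp, by omega, ?_, ?_, ?_, ?_⟩⟩)
        · intro p' hp'; simp only [Function.update_of_ne hp']; exact h.old p' hp'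
        · intro p' z hz
          by_cases hp : p' = p
          · subst hp; simp at hz
          · simp only [Function.update_of_ne hp] at hz
            exact h.hold _ _ hz
        · intro k
          by_cases hk : k = i
          · subst hk; right; simp [ha]
          · simp only [Function.update_of_ne hk]
            exact (h.rooms k).imp id fun ⟨a, b⟩ => ⟨a, hV _ _ b⟩
        · have := sum_upd (cp false) C.R i (.plain false)
          rw [h.cnt, hci] at this
          simpa [cp] using this
    · obtain ⟨q', c', nt', h1, h2, h3, h4, h5⟩ :=
        local2 (n := n) hr (C.P p) c nt (h.old p hp) (h.hold p) hnt hc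
      rw [← hs] at h1
      refine ⟨?_, by rw [h1]⟩
      rw [step_of h1]
      refine .inr (.inl ⟨p0, j, ⟨?_, h.jr, ?_, ?_, ?_, ?_⟩⟩)
      · simp only [Function.update_of_ne (Ne.symm hp)]; exact h.lead
      · intro p' hp'
        by_cases hpp : p' = p
        · subst hpp; simpa using h2
        · simp only [Function.update_of_ne hpp]; exact h.old p' hp'
      · intro p' z
        by_cases hpp : p' = p
        · subst hpp; simpa using h3 z
        · simp only [Function.update_of_ne hpp]; exact h.hold p' z
      · intro k
        by_cases hk : k = i
        · subst hk; left; exact ⟨c', nt', by simp, h5, h4⟩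
        · simp only [Function.update_of_ne hk]
          exact (h.rooms k).imp id fun ⟨a, b⟩ => ⟨a, hV _ _ b⟩
      · have := sum_upd (cp false) C.R i (.old c' nt')
        rw [h.cnt, hs] at this
        simpa [cp] using this
  · have e : dl n r (C.P p) (C.R i) = (C.P p, C.R i, false) := by
      rw [hs]
      apply dl_plain
      by_cases hp : p = p0
      · subst hp; exact .inr (.inr (.inr ⟨_, h.lead⟩))
      · exact .inl (h.old p hp)
    rw [step_stay e, e]
    exact ⟨hInv, rfl⟩

theorem pres3a {n r : ℕ} {C : Cfg n r} {V V' : Fin n → Fin r → Prop}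
    (p : Fin n) (i : Fin r) (hV : ∀ p i, V p i → V' p i) (ha : V' p i) {p0 c b i0}
    (h : I3a C V p0 c b i0) :
    Inv (step C (p, i)) V' ∧ (dl n r (C.P p) (C.R i)).2.2 = false := by
  have hInv : Inv C V' := (show Inv C V from .inr (.inr (.inl ⟨p0, c, b, i0, h⟩))).mono hV
  have stay : dl n r (C.P p) (C.R i) = (C.P p, C.R i, false) →
      Inv (step C (p, i)) V' ∧ (dl n r (C.P p) (C.R i)).2.2 = false := by
    intro e
    rw [step_stay e, e]
    exact ⟨hInv, rfl⟩
  by_cases hi : i = i0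
  swap
  · apply stay
    rw [h.rooms i hi]
    apply dl_plain
    by_cases hp : p = p0
    · subst hp; exact .inr (.inr (.inl ⟨_, h.lead⟩))
    · exact (h.old p hp).imp id fun h => .inl h.1
  subst hi
  by_cases hp : p = p0
  · apply stay
    rw [hp, h.lead, h.inv]; rfl
  rcases h.old p hp with hO | hd
  swap
  · apply stay; rw [hd.1, dl_done]
  have hdp := dp_O hO
  have h4 := dl_inv (n := n) (C.P p) b hO
  rw [← h.inv] at h4
  have hold : ∀ p', p' ≠ p0 → p' ≠ p → O (C.P p') ∨ (C.P p' = .done ∧ ∀ i, V' p' i) :=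
    fun p' h1 _ => (h.old p' h1).imp id fun ⟨a, b⟩ => ⟨a, fun i => hV _ _ (b i)⟩
  by_cases hr1 : 0 + 1 = r
  · simp only [flip, if_pos hr1] at h4
    refine ⟨?_, by rw [h4]⟩
    rw [step_of h4]
    have hi : ∀ k : Fin r, k = i := by intro k; apply Fin.ext; omega
    refine .inr (.inr (.inr (.inr ⟨p0, c, !b, i, ⟨⟨?_, ?_, h.cn⟩, ?_, ?_, ?_, ?_⟩⟩)))
    · simp only [Function.update_of_ne (Ne.symm hp)]; exact h.lead
    · exact fun i => hV _ _ (h.vis i)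
    · intro p' hp'
      by_cases hpp : p' = p
      · subst hpp; right; refine ⟨by simp, ?_⟩; intro k; rw [hi k]; exact ha
      · simp only [Function.update_of_ne hpp]; exact hold p' hp' hpp
    · have := sum_upd dp C.P p .done
      rw [h.cnt, hdp] at this
      simpa [dp] using this
    · simp
    · intro k hk; exact absurd (hi k) hk
  · simp only [flip, if_neg hr1] at h4
    refine ⟨?_, by rw [h4]⟩
    rw [step_of h4]
    refine .inr (.inr (.inr (.inl ⟨p0, c, b, p, 0 + 1, ⟨⟨?_, ?_, h.cn⟩, hp, ?_, ?_, ?_, ?_, ?_, ?_⟩⟩)))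
    · simp only [Function.update_of_ne (Ne.symm hp)]; exact h.lead
    · exact fun i => hV _ _ (h.vis i)
    · simp
    · have := i.2; omega
    · intro p' hp' hpp
      simp only [Function.update_of_ne hpp]; exact hold p' hp' hpp
    · have := sum_upd dp C.P p (.active b (0 + 1))
      rw [h.cnt, hdp] at this
      simpa [dp] using this
    · intro k
      by_cases hk : k = i
      · subst hk; right; simp [ha]
      · left; simp only [Function.update_of_ne hk]; exact h.rooms k hk
    · have := sum_upd (cp (!b)) C.R i (.plain (!b))
      have z : ∑ k, cp (!b) (C.R k) = 0 := by
        apply Finset.sum_eq_zero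
        intro k _
        by_cases hk : k = i
        · rw [hk, h.inv]; rfl
        · rw [h.rooms k hk]; simp [cp]
      rw [z, h.inv] at this
      simpa [cp] using this

theorem pres3b {n r : ℕ} {C : Cfg n r} {V V' : Fin n → Fin r → Prop}
    (p : Fin n) (i : Fin r) (hV : ∀ p i, V p i → V' p i) (ha : V' p i) {p0 c b p1 j}
    (h : I3b C V p0 c b p1 j) :
    Inv (step C (p, i)) V' ∧ (dl n r (C.P p) (C.R i)).2.2 = false := by
  have hInv : Inv C V' := (show Inv C V from .inr (.inr (.inr (.inl ⟨p0, c, b, p1, j, h⟩)))).mono hV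
  have stay : dl n r (C.P p) (C.R i) = (C.P p, C.R i, false) →
      Inv (step C (p, i)) V' ∧ (dl n r (C.P p) (C.R i)).2.2 = false := by
    intro e
    rw [step_stay e, e]
    exact ⟨hInv, rfl⟩
  have hjr := h.jr
  by_cases hp : p = p1
  swap
  · apply stay
    have : ∃ b', C.R i = .plain b' := by
      rcases h.rooms i with h | h
      · exact ⟨_, h⟩
      · exact ⟨_, h.1⟩
    obtain ⟨b', hb'⟩ := this
    rw [hb']
    apply dl_plain
    by_cases hp' : p = p0
    · subst hp'; exact .inr (.inr (.inl ⟨_, h.lead⟩))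
    · exact (h.old p hp' hp).imp id fun h => .inl h.1
  subst hp
  have hp := h.ne
  rcases h.rooms i with hs | ⟨hs, -⟩
  swap
  · apply stay
    rw [h.act, hs]
    simp [dl]
  have h4 : dl n r (C.P p) (C.R i) = flip r b j := by
    rw [h.act, hs]; simp [dl, hjr]
  have hdp : dp (C.P p) = 0 := by rw [h.act]; rfl
  have hci : cp (!b) (C.R i) = 0 := by rw [hs]; simp [cp]
  have hold : ∀ p', p' ≠ p0 → p' ≠ p → O (C.P p') ∨ (C.P p' = .done ∧ ∀ i, V' p' i) :=
    fun p' h1 h2 => (h.old p' h1 h2).imp id fun ⟨a, b⟩ => ⟨a, fun i => hV _ _ (b i)⟩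
  by_cases hr1 : j + 1 = r
  · simp only [flip, if_pos hr1] at h4
    refine ⟨?_, by rw [h4]⟩
    rw [step_of h4]
    have hall : ∀ k, k ≠ i → C.R k = .plain (!b) ∧ V p k := by
      intro k hk
      have := all_one (fun k => cp (!b) (C.R k)) (fun _ => cp_le _ _)
        (by have := h.rcnt; omega) i hci k hk
      rcases h.rooms k with hs' | h'
      · rw [hs'] at this; simp [cp] at this
      · exact h'
    refine .inr (.inr (.inr (.inr ⟨p0, c, !b, i, ⟨⟨?_, ?_, h.cn⟩, ?_, ?_, ?_, ?_⟩⟩)))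
    · simp only [Function.update_of_ne (Ne.symm hp)]; exact h.lead
    · exact fun i => hV _ _ (h.vis i)
    · intro p' hp'
      by_cases hpp : p' = p
      · subst hpp; right; refine ⟨by simp, ?_⟩; intro k
        by_cases hk : k = i
        · rw [hk]; exact ha
        · exact hV _ _ (hall k hk).2
      · simp only [Function.update_of_ne hpp]; exact hold p' hp' hpp
    · have := sum_upd dp C.P p .done
      rw [h.cnt, hdp] at this
      simpa [dp] using this
    · simp
    · intro k hk; simp only [Function.update_of_ne hk]; exact (hall k hk).1
  · simp only [flip, if_neg hr1] at h4
    refine ⟨?_, by rw [h4]⟩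
    rw [step_of h4]
    refine .inr (.inr (.inr (.inl ⟨p0, c, b, p, j + 1, ⟨⟨?_, ?_, h.cn⟩, hp, ?_, ?_, ?_, ?_, ?_, ?_⟩⟩)))
    · simp only [Function.update_of_ne (Ne.symm hp)]; exact h.lead
    · exact fun i => hV _ _ (h.vis i)
    · simp
    · omega
    · intro p' hp' hpp
      simp only [Function.update_of_ne hpp]; exact hold p' hp' hpp
    · have := sum_upd dp C.P p (.active b (j + 1))
      rw [h.cnt, hdp] at this
      simpa [dp] using this
    · intro k
      by_cases hk : k = i
      · subst hk; right; simp [ha]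
      · simp only [Function.update_of_ne hk]
        exact (h.rooms k).imp id fun ⟨a, b⟩ => ⟨a, hV _ _ b⟩
    · have := sum_upd (cp (!b)) C.R i (.plain (!b))
      rw [h.rcnt, hci] at this
      simpa [cp] using this

theorem pres3c {n r : ℕ} {C : Cfg n r} {V V' : Fin n → Fin r → Prop}
    (p : Fin n) (i : Fin r) (hV : ∀ p i, V p i → V' p i) {p0 c b i0}
    (h : I3c C V p0 c b i0) :
    Inv (step C (p, i)) V' ∧ ((dl n r (C.P p) (C.R i)).2.2 = true → ∀ p i, V p i) := by
  have hInv : Inv C V' := (show Inv C V from .inr (.inr (.inr (.inr ⟨p0, c, b, i0, h⟩)))).mono hV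
  have stay : dl n r (C.P p) (C.R i) = (C.P p, C.R i, false) →
      Inv (step C (p, i)) V' ∧ ((dl n r (C.P p) (C.R i)).2.2 = true → ∀ p i, V p i) := by
    intro e
    rw [step_stay e, e]
    exact ⟨hInv, by simp⟩
  by_cases hi : i = i0
  swap
  · apply stay
    rw [h.rooms i hi]
    apply dl_plain
    by_cases hp : p = p0
    · subst hp; exact .inr (.inr (.inl ⟨_, h.lead⟩))
    · exact (h.old p hp).imp id fun h => .inl h.1
  subst hi
  by_cases hp : p = p0
  swap
  · apply stay
    rcases h.old p hp with hO | hd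
    · rw [h.inv, dl_fin _ _ hO]
    · rw [hd.1, dl_done]
  subst hp
  have hdp0 : dp (C.P p) = 0 := by rw [h.lead]; rfl
  by_cases hc : c + 2 < n
  · have h4 : dl n r (C.P p) (C.R i) = (.wait (c + 1), .invite b, false) := by
      rw [h.lead, h.inv]; simp only [dl, if_pos hc]
    refine ⟨?_, by rw [h4]; simp⟩
    rw [step_of h4]
    refine .inr (.inr (.inl ⟨p, c + 1, b, i, ⟨⟨?_, ?_, hc⟩, ?_, ?_, ?_, ?_⟩⟩))
    · simp
    · exact fun i => hV _ _ (h.vis i)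
    · intro p' hp'
      simp only [Function.update_of_ne hp']
      exact (h.old p' hp').imp id fun ⟨a, b⟩ => ⟨a, fun i => hV _ _ (b i)⟩
    · have := sum_upd dp C.P p (.wait (c + 1))
      rw [h.cnt, hdp0] at this
      simpa [dp] using this
    · simp
    · intro k hk; simp only [Function.update_of_ne hk]; exact h.rooms k hk
  · have h4 : dl n r (C.P p) (C.R i) = (C.P p, C.R i, true) := by
      rw [h.lead, h.inv]; simp only [dl, if_neg hc]
    rw [step_stay h4]
    refine ⟨hInv, fun _ => ?_⟩
    intro p' k
    by_cases hp' : p' = p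
    · rw [hp']; exact h.vis k
    · have hcn := h.cn
      have hcnt := h.cnt
      have := all_one (fun p => dp (C.P p)) (fun _ => dp_le _) (by omega) p hdp0 p' hp'
      rcases h.old p' hp' with hO | hd
      · have := dp_O hO; omega
      · exact hd.2 k

theorem pres {n r : ℕ} (hr : 1 ≤ r) (hn : r < n) {C : Cfg n r} {V V' : Fin n → Fin r → Prop}
    (p : Fin n) (i : Fin r) (hV : ∀ p i, V p i → V' p i) (ha : V' p i) (h : Inv C V) :
    Inv (step C (p, i)) V' ∧ ((dl n r (C.P p) (C.R i)).2.2 = true → ∀ p i, V p i) := by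
  have aux : (Inv (step C (p, i)) V' ∧ (dl n r (C.P p) (C.R i)).2.2 = false) →
    Inv (step C (p, i)) V' ∧ ((dl n r (C.P p) (C.R i)).2.2 = true → ∀ p i, V p i) := by
    rintro ⟨h1, h2⟩
    exact ⟨h1, by rw [h2]; simp⟩
  rcases h with h | ⟨p0, j, h⟩ | ⟨p0, c, b, i0, h⟩ | ⟨p0, c, b, p1, j, h⟩ | ⟨p0, c, b, i0, h⟩
  · exact aux (pres1 hr hn p i ha h)
  · exact aux (pres2 hr hn p i hV ha h)
  · exact aux (pres3a p i hV ha h)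
  · exact aux (pres3b p i hV ha h)
  · exact pres3c p i hV h

end PG

namespace PG

theorem step_fix {n r : ℕ} {C : Cfg n r} (p : Fin n) (i : Fin r) (h : step C (p, i) = C) :
    (dl n r (C.P p) (C.R i)).1 = C.P p ∧ (dl n r (C.P p) (C.R i)).2.1 = C.R i := by
  have h1 := congrFun (congrArg Cfg.P h) p
  have h2 := congrFun (congrArg Cfg.R h) i
  simp only [step, Function.update_self] at h1 h2
  exact ⟨h1, h2⟩

theorem rk_inj {r : ℕ} (hr : 1 ≤ r) {z w : G r} (h : rk z = rk w) : z = w := by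
  haveI : NeZero r := ⟨by omega⟩
  unfold rk at h
  have h1 := ZMod.val_lt z.2
  have h2 := ZMod.val_lt w.2
  have e1 : (z.1 * r + z.2.val) / r = z.1 := by
    rw [Nat.add_comm, Nat.add_mul_div_right _ _ (by omega), Nat.div_eq_of_lt h1]; omega
  have e2 : (w.1 * r + w.2.val) / r = w.1 := by
    rw [Nat.add_comm, Nat.add_mul_div_right _ _ (by omega), Nat.div_eq_of_lt h2]; omega
  have e3 : z.1 = w.1 := by rw [← e1, ← e2, h]
  rw [e3] at h
  exact Prod.ext e3 (ZMod.val_injective r (by omega))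

theorem fix1 {n r : ℕ} (hr : 1 ≤ r) (hn : r < n) (hg : Nat.gcd n r = 1) {C : Cfg n r}
    (hfix : ∀ a, step C a = C) (h : I1 C) : False := by
  haveI : NeZero r := ⟨by omega⟩
  have hf := fun p i => step_fix p i (hfix (p, i))
  let i0 : Fin r := ⟨0, by omega⟩
  let p0 : Fin n := ⟨0, by omega⟩
  -- no fresh
  have nofresh : ∀ p, C.P p ≠ .fresh := by
    intro p hp
    obtain ⟨c, nt, hs, -⟩ := h.rooms i0
    have := (hf p i0).1
    rw [hp, hs] at this
    simp [dl] at this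
  have note_ex : ∀ p l, np l (C.P p) = 1 → ∃ i c, C.R i = .old c (some l) := by
    intro p l hp
    have h1 := h.notes l
    have h2 := Finset.single_le_sum (f := fun p => np l (C.P p)) (fun _ _ => Nat.zero_le _)
      (Finset.mem_univ p)
    have h3 : ∑ i, nr l (C.R i) ≠ 0 := by
      rw [← h1]; simp only [hp] at h2; omega
    obtain ⟨i, -, hi⟩ := Finset.exists_ne_zero_of_sum_ne_zero h3
    obtain ⟨c, nt, hs, -⟩ := h.rooms i
    refine ⟨i, c, ?_⟩
    rw [hs] at hi
    rcases nt with _ | N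
    · simp [nr] at hi
    · simp [nr] at hi
      rw [hs, hi]
  have noclean : ∀ p z, C.P p ≠ .clean z := by
    intro p z hp
    obtain ⟨i, c, hs⟩ := note_ex p z (by rw [hp]; simp [np])
    have := (hf p i).1
    rw [hp, hs] at this
    simp [dl] at this
  have hcases : ∀ p, C.P p = .idle ∨ ∃ z, C.P p = .hold z := by
    intro p
    have h1 := h.old p
    have h2 := nofresh p
    have h3 := noclean p
    generalize C.P p = q at *
    rcases q with _ | _ | z | z | j | c' | ⟨b', j⟩ | _ <;> simp [O] at *
  by_cases hex : ∃ p z, C.P p = .hold z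
  · obtain ⟨p, z, hp⟩ := hex
    have empty : ∀ i, ∃ nt, C.R i = .old 0 nt := by
      intro i
      obtain ⟨c, nt, hs, -⟩ := h.rooms i
      refine ⟨nt, ?_⟩
      by_cases hc : c = 0
      · rw [hs, hc]
      · have := (hf p i).1
        rw [hp, hs] at this
        simp [dl, hc] at this
    have nolt : ∀ p z p' z', C.P p = .hold z → C.P p' = .hold z' → ¬ rk z < rk z' := by
      intro p z p' z' h1 h2 hlt
      obtain ⟨i, c, hs⟩ := note_ex p' z' (by rw [h2]; simp [np])
      have := (hf p i).1
      rw [h1, hs] at this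
      simp [dl, hi, hlt] at this
    have allz : ∀ p' z', C.P p' = .hold z' → z' = z := by
      intro p' z' h'
      have a1 := nolt _ _ _ _ hp h'
      have a2 := nolt _ _ _ _ h' hp
      exact rk_inj hr (by omega)
    have hsum := h.sum
    unfold tot at hsum
    have hz0 : ∑ i, vr (C.R i) = 0 := by
      apply Finset.sum_eq_zero
      intro i _
      obtain ⟨nt, hs⟩ := empty i
      rw [hs]; rfl
    rw [hz0, add_zero] at hsum
    have hvp : ∀ p', vp (C.P p') = np z (C.P p') • z := by
      intro p'
      rcases hcases p' with h' | ⟨z', h'⟩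
      · rw [h']; simp [vp, np]
      · rw [h', allz p' z' h']; simp [vp, np]
    rw [Finset.sum_congr rfl (fun p' _ => hvp p'), ← Finset.sum_smul] at hsum
    generalize ∑ p', np z (C.P p') = k at hsum
    have s1 := congrArg Prod.fst hsum
    have s2 := congrArg Prod.snd hsum
    simp only [Prod.smul_fst, Prod.smul_snd, smul_eq_mul] at s1 s2
    have hkr : k ∣ r := ⟨_, s1.symm⟩
    have hkn : k ∣ n := by
      have : ((k * z.2.val : ℕ) : ZMod r) = (n : ZMod r) := by
        rw [← s2]; push_cast; rw [ZMod.natCast_zmod_val]; simp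
      rw [ZMod.natCast_eq_natCast_iff] at this
      exact (Nat.ModEq.dvd_iff this hkr).1 ⟨_, rfl⟩
    have hk1 : k = 1 := by
      have := Nat.dvd_gcd hkn hkr
      rw [hg] at this
      exact Nat.dvd_one.1 this
    subst hk1
    exact h.hold p z hp (by omega)
  · have idle : ∀ p, C.P p = .idle := by
      intro p
      exact (hcases p).resolve_right fun ⟨z, hz⟩ => hex ⟨p, z, hz⟩
    have hnone : ∀ i, ∃ c, C.R i = .old c none := by
      intro i
      obtain ⟨c, nt, hs, -⟩ := h.rooms i
      rcases nt with _ | N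
      · exact ⟨c, hs⟩
      · exfalso
        have h1 := h.notes N
        have h2 := Finset.single_le_sum (f := fun i => nr N (C.R i)) (fun _ _ => Nat.zero_le _)
          (Finset.mem_univ i)
        have h3 : ∑ p, np N (C.P p) = 0 := by
          apply Finset.sum_eq_zero
          intro p _
          rw [idle p]; rfl
        rw [← h1, h3] at h2
        simp [hs, nr] at h2
    have hzero : ∀ i, vr (C.R i) = 0 := by
      intro i
      obtain ⟨c, hs⟩ := hnone i
      have := (hf p0 i).1
      rw [idle, hs] at this
      simp only [dl, conv] at this
      rw [hs]
      split_ifs at this with h1 h2 h3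
      exact h3
    have hsum := h.sum
    unfold tot at hsum
    have e1 : ∑ p, vp (C.P p) = 0 := by
      apply Finset.sum_eq_zero
      intro p _
      rw [idle p]; rfl
    rw [e1, Finset.sum_eq_zero (fun i _ => hzero i)] at hsum
    have := congrArg Prod.fst hsum
    simp at this
    omega

theorem fix {n r : ℕ} (hr : 1 ≤ r) (hn : r < n) (hg : Nat.gcd n r = 1) {C : Cfg n r} {V}
    (hfix : ∀ a, step C a = C) (h : Inv C V) : ∃ p i, (dl n r (C.P p) (C.R i)).2.2 = true := by
  have hf := fun p i => step_fix p i (hfix (p, i))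
  rcases h with h | ⟨p0, j, h⟩ | ⟨p0, c, b, i0, h⟩ | ⟨p0, c, b, p1, j, h⟩ | ⟨p0, c, b, i0, h⟩
  · exact (fix1 hr hn hg hfix h).elim
  · exfalso
    obtain ⟨i, hi⟩ := lt_exists (fun i => cp false (C.R i)) (fun _ => cp_le _ _)
      (by have := h.cnt; have := h.jr; omega)
    rcases h.rooms i with ⟨c, nt, hs, -⟩ | ⟨hs, -⟩
    · have := (hf p0 i).1
      rw [h.lead, hs] at this
      simp only [dl, conv] at this
      split_ifs at this
      simp at this
    · simp [hs, cp] at hi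
  · exfalso
    have hdp0 : dp (C.P p0) = 0 := by rw [h.lead]; rfl
    have : ∃ p, p ≠ p0 ∧ dp (C.P p) = 0 := by
      by_contra hc
      push Not at hc
      have e : ∑ p, dp (C.P p) = ∑ p ∈ Finset.univ.erase p0, 1 := by
        rw [← Finset.add_sum_erase _ _ (Finset.mem_univ p0), hdp0, zero_add]
        apply Finset.sum_congr rfl
        intro p hp
        have := hc p (Finset.ne_of_mem_erase hp)
        have := dp_le (C.P p)
        omega
      rw [h.cnt] at e
      simp at e
      have := h.cn
      omega
    obtain ⟨p, hp, hd⟩ := this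
    rcases h.old p hp with hO | hd'
    · have := (hf p i0).2
      rw [h.inv, dl_inv _ _ hO] at this
      simp only [flip] at this
      split_ifs at this
    · rw [hd'.1] at hd; simp [dp] at hd
  · exfalso
    obtain ⟨i, hi⟩ := lt_exists (fun i => cp (!b) (C.R i)) (fun _ => cp_le _ _)
      (by have := h.rcnt; have := h.jr; omega)
    rcases h.rooms i with hs | ⟨hs, -⟩
    · have := (hf p1 i).1
      rw [h.act, hs] at this
      simp only [dl, flip, h.jr] at this
      split_ifs at this <;> simp at *
    · simp [hs, cp] at hi
  · refine ⟨p0, i0, ?_⟩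
    have := (hf p0 i0).1
    rw [h.lead, h.inv] at this ⊢
    simp only [dl] at this ⊢
    split_ifs at this ⊢ with hc
    · simp at this
    · rfl

/-- The finite set of room states used. -/
def FS (r : ℕ) : Set (RS r) := {s | match s with
  | .old c nt => c.1 ≤ r ∧ nok nt
  | _ => True}

theorem FS_finite (r : ℕ) (hr : 1 ≤ r) : (FS r).Finite := by
  haveI : NeZero r := ⟨by omega⟩
  have hG : {c : G r | c.1 ≤ r}.Finite := by
    apply ((Set.finite_Iic r).prod (Set.finite_univ (α := ZMod r))).subset
    intro c hc
    exact ⟨hc, trivial⟩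
  have hO : {nt : Option (G r) | nok nt}.Finite := by
    apply ((hG.image some).union (Set.finite_singleton none)).subset
    rintro (_ | N) h
    · right; rfl
    · left; exact ⟨N, h, rfl⟩
  have hb : ∀ f : Bool → RS r, (Set.range f).Finite := fun f => Set.finite_range f
  apply ((((hG.prod hO).image (fun x => RS.old x.1 x.2)).union (hb .plain)).union
    ((hb .invite).union (hb .fin))).subset
  rintro (⟨c, nt⟩ | b | b | b) h
  · exact .inl (.inl ⟨(c, nt), ⟨h.1, h.2⟩, rfl⟩)
  · exact .inl (.inr ⟨b, rfl⟩)
  · exact .inr (.inl ⟨b, rfl⟩)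
  · exact .inr (.inr ⟨b, rfl⟩)

theorem inv_FS {n r : ℕ} {C : Cfg n r} {V} (h : Inv C V) (i : Fin r) : C.R i ∈ FS r := by
  rcases h with h | ⟨p0, j, h⟩ | ⟨p0, c, b, i0, h⟩ | ⟨p0, c, b, p1, j, h⟩ | ⟨p0, c, b, i0, h⟩
  · obtain ⟨c, nt, hs, hnt⟩ := h.rooms i
    have := fst_le_tot (C := C) i
    rw [h.sum, hs] at this
    rw [hs]
    exact ⟨this, hnt⟩
  · rcases h.rooms i with ⟨c, nt, hs, hc, hnt⟩ | ⟨hs, -⟩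
    · rw [hs]; exact ⟨by omega, hnt⟩
    · rw [hs]; trivial
  · by_cases hi : i = i0
    · rw [hi, h.inv]; trivial
    · rw [h.rooms i hi]; trivial
  · rcases h.rooms i with hs | ⟨hs, -⟩ <;> rw [hs] <;> trivial
  · by_cases hi : i = i0
    · rw [hi, h.inv]; trivial
    · rw [h.rooms i hi]; trivial

theorem enc_exists {S : Type*} (F : Set S) (hF : F.Finite) (s0 : S) :
    ∃ (q : ℕ) (e : S → ℕ) (d : ℕ → S), 0 < q ∧ e s0 = 0 ∧ ∀ s ∈ F, e s < q ∧ d (e s) = s := by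
  classical
  let l : List S := s0 :: hF.toFinset.toList
  refine ⟨l.length, fun s => l.idxOf s, fun x => l.getD x s0, by simp [l], by simp [l], ?_⟩
  intro s hs
  have hm : s ∈ l := by simp [l, hs]
  have hlt := List.idxOf_lt_length_of_mem hm
  refine ⟨hlt, ?_⟩
  simp only
  rw [List.getD_eq_getElem _ _ hlt, List.getElem_idxOf]

theorem arun_inv {n r : ℕ} (hr : 1 ≤ r) (hn : r < n) (sched : ℕ → Fin n × Fin r) (t : ℕ) :
    Inv (arun sched t) (fun p i => ∃ s < t, sched s = (p, i)) := by
  induction t with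
  | zero => exact inv_startCfg _
  | succ t ih =>
    refine (pres hr hn (sched t).1 (sched t).2 ?_ ?_ ih).1
    · rintro p i ⟨s, hs, h⟩; exact ⟨s, by omega, h⟩
    · exact ⟨t, by omega, rfl⟩

open PrisonersGame in
noncomputable def strat (n r q : ℕ) (e : RS r → ℕ) (d : ℕ → RS r) : Strategy := fun h x =>
  let st := h.foldl (fun s y => (dl n r s (d y)).1) PS.fresh
  (if e (dl n r st (d x)).2.1 < q then e (dl n r st (d x)).2.1 else 0, (dl n r st (d x)).2.2)

open PrisonersGame in
theorem sim {n r q : ℕ} (hr : 1 ≤ r) (hn : r < n) (e : RS r → ℕ) (d : ℕ → RS r)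
    (he0 : e (.old (1, 0) none) = 0) (he : ∀ s ∈ FS r, e s < q ∧ d (e s) = s)
    (sched : Schedule n r) (t : ℕ) :
    (∀ i, (run (fun _ => strat n r q e d) sched t).1 i = e ((arun sched t).R i)) ∧
    (∀ p, ((run (fun _ => strat n r q e d) sched t).2 p).foldl
      (fun s y => (dl n r s (d y)).1) PS.fresh = (arun sched t).P p) := by
  induction t with
  | zero => exact ⟨fun i => he0.symm, fun p => rfl⟩
  | succ t ih =>
    obtain ⟨ih1, ih2⟩ := ih
    have hin : ∀ i, (arun sched t).R i ∈ FS r := fun i => inv_FS (arun_inv hr hn sched t) i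
    have hin' : ∀ i, (arun sched (t + 1)).R i ∈ FS r := fun i => inv_FS (arun_inv hr hn sched (t + 1)) i
    constructor
    · intro i
      by_cases hi : i = (sched t).2
      · subst hi
        have h1 := hin' (sched t).2
        simp only [arun, step, Function.update_self] at h1
        simp only [run, arun, step, Function.update_self, strat, ih1, ih2, (he _ (hin _)).2]
        rw [if_pos (he _ h1).1]
      · simp only [run, arun, step, Function.update_of_ne hi]
        exact ih1 i
    · intro p
      by_cases hp : p = (sched t).1
      · subst hp
        simp only [run, arun, step, Function.update_self, List.foldl_append, List.foldl_cons,
          List.foldl_nil, ih1, ih2, (he _ (hin _)).2]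
      · simp only [run, arun, step, Function.update_of_ne hp]
        exact ih2 p

end PG

open PrisonersGame in
/-- For every `r ≥ 1` there exists `q = q(r)` such that for every `n > r` with
`gcd(n, r) = 1`, the `n` prisoners have a symmetric winning strategy for `r`
rooms with `q` states. -/
theorem symmetric_strategy_few_rooms (r : ℕ) (hr : 1 ≤ r) :
    ∃ q : ℕ, ∀ n : ℕ, r < n → Nat.gcd n r = 1 →
      HasSymmetricWinningStrategy n r q := by
  obtain ⟨q, e, d, hq, he0, he⟩ := PG.enc_exists (PG.FS r) (PG.FS_finite r hr) (.old (1, 0) none)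
  refine ⟨q, fun n hn hg => ⟨PG.strat n r q e d, ?_, ?_⟩⟩
  · intro h s _ _
    simp only [PG.strat]
    split_ifs with hc
    · exact hc
    · exact hq
  · intro sched hfair
    have hdecl : ∀ t, declaresAt (fun _ => PG.strat n r q e d) sched t ↔
        (PG.dl n r ((PG.arun sched t).P (sched t).1) ((PG.arun sched t).R (sched t).2)).2.2 = true := by
      intro t
      obtain ⟨h1, h2⟩ := PG.sim hr hn e d he0 he sched t
      have hin := PG.inv_FS (PG.arun_inv hr hn sched t) (sched t).2
      simp only [declaresAt, PG.strat, h1, h2, (he _ hin).2]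
    constructor
    · obtain ⟨T, hT, hfix⟩ := PG.eventually_fixed hn sched hfair
      obtain ⟨p, i, hpi⟩ := PG.fix hr hn hg hfix (PG.arun_inv hr hn sched T)
      obtain ⟨t, ht, hTt⟩ := (hfair p i).exists_gt T
      refine ⟨t, (hdecl t).2 ?_⟩
      have ht' : sched t = (p, i) := ht
      rw [hT t hTt.le, ht']
      exact hpi
    · intro t ht p i
      rw [hdecl] at ht
      obtain ⟨s, hs, h⟩ := (PG.pres hr hn (V' := fun _ _ => True) (sched t).1 (sched t).2
        (fun _ _ _ => trivial) trivial (PG.arun_inv hr hn sched t)).2 ht p i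
      exact ⟨s, hs.le, h⟩
end
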